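/- (Statistical error of the Euler–Maruyama integrator, strong order p = 1, q = 1.) Assume A1, A2 and A3. Consider the Euler–Maruyama chain (X_n,V_n) with time step h and damping rate γ, started from initial data with E(|X₀|+|V₀|+1)² < ∞. There exists γ₀ > 0 such that whenever γ ≥ γ₀, there exist constants C, h₀ > 0 depending on γ such that for every 0 < h ≤ h₀ and every integer N ≥ 1: E[((1/N)·Σ_{n=0}^{N−1} f(X_n,V_n) − π(f))²] ≤ C·(h + 1/(Nh))·E(|X₀|+|V₀|+1)². -/

import Mathlib

open MeasureTheory ProbabilityTheory
open scoped ENNReal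

/-!
Write `P` for the transition operator of the chain with time step `h`, and look at `P ^ n` with
`n * h ∈ [1, 2]`, that is, over one unit of physical time. Shifting the noise along a discrete
bridge joins two initial states within `n` steps at a cost bounded uniformly in `h`, so that the
Cameron–Martin formula gives a Harnack inequality for `P ^ n`. It provides both minorization and
smoothing, and together with a quadratic Lyapunov function, which exists for large damping, Harris'
argument makes `P ^ n` a contraction uniformly in `h`. Summing iterates solves the Poisson equation
`ψ - P ψ = h (f - π f)` up to a small error, with local Lipschitz bounds on `ψ` independent of `h`.

The sum of `h (f (Z n) - π f)` is then a telescoping term plus a martingale whose increments have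
variance of order `h`, and after division by `N * h` the mean square is `O(1 / (N * h))`. The bias
is `O(√h)`: up to an error of order `h ^ (3 / 2)`, an Euler–Maruyama step is a refreshment of the
velocity, which preserves the Boltzmann measure exactly, followed by a symplectic Euler step, which
preserves volume and nearly preserves the energy.
-/

namespace Langevin

/-! ### Tilted measures and Gaussian shifts -/

section Tilted

variable {α β : Type*} [MeasurableSpace α] [MeasurableSpace β]

lemma sq_integral_mul_le {μ : Measure α} {f g : α → ℝ}
    (hf : Integrable (fun x ↦ f x ^ 2) μ) (hg : Integrable (fun x ↦ g x ^ 2) μ)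
    (hfg : Integrable (fun x ↦ f x * g x) μ) :
    (∫ x, f x * g x ∂μ) ^ 2 ≤ (∫ x, f x ^ 2 ∂μ) * ∫ x, g x ^ 2 ∂μ := by
  have quadratic_nonneg (t : ℝ) : 0 ≤ (∫ x, g x ^ 2 ∂μ) * (t * t)
      + (-2 * ∫ x, f x * g x ∂μ) * t + ∫ x, f x ^ 2 ∂μ := by
    calc 0 ≤ ∫ x, (f x - t * g x) ^ 2 ∂μ := integral_nonneg fun x ↦ sq_nonneg _
      _ = ∫ x, (t * t * g x ^ 2 + -2 * t * (f x * g x) + f x ^ 2) ∂μ := by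
          congr with x
          ring
      _ = _ := by
          have hg' := hg.const_mul (t * t)
          have hfg' := hfg.const_mul (-2 * t)
          have := hg'.add hfg'
          rw [integral_add (by exact this) hf, integral_add hg' hfg', integral_const_mul,
            integral_const_mul]
          ring
  have := discrim_le_zero quadratic_nonneg
  rw [discrim] at this
  linarith

lemma map_tilted_comp {μ : Measure α} {ν : Measure β} {φ : α → β} (hφ : MeasurePreserving φ μ ν)
    {f : β → ℝ} (hf : Measurable f) : (μ.tilted fun x ↦ f (φ x)).map φ = ν.tilted f := by
  ext s hs
  rw [Measure.map_apply hφ.measurable hs, tilted_apply' _ _ (hφ.measurable hs),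
    tilted_apply' _ _ hs, ← hφ.setLIntegral_comp_preimage hs (by fun_prop), ← hφ.map_eq,
    integral_map hφ.measurable.aemeasurable hf.exp.aestronglyMeasurable]

lemma tilted_prod_tilted {μ : Measure α} {ν : Measure β} [SFinite μ] [SFinite ν] {f : α → ℝ}
    {g : β → ℝ} (hf : Measurable f) (hg : Measurable g) :
    (μ.tilted f).prod (ν.tilted g) = (μ.prod ν).tilted fun z ↦ f z.1 + g z.2 := by
  rw [Measure.tilted, Measure.tilted, prod_withDensity (by fun_prop) (by fun_prop),
    Measure.tilted]
  congr with z
  simp_rw [Real.exp_add]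
  rw [integral_prod_mul (fun x ↦ Real.exp (f x)) fun y ↦ Real.exp (g y),
    ← ENNReal.ofReal_mul (by positivity), div_mul_div_comm]

end Tilted

section Gaussian

variable {E : Type*} [NormedAddCommGroup E] [InnerProductSpace ℝ E] [FiniteDimensional ℝ E]
  [MeasurableSpace E] [BorelSpace E]

variable (E) in
lemma integrable_exp_neg_mul_norm_sq {b : ℝ} (hb : 0 < b) :
    Integrable fun x : E ↦ Real.exp (-(b * ‖x‖ ^ 2)) := by
  have := GaussianFourier.integrable_cexp_neg_mul_sq_norm_add (V := E) (b := (b : ℂ))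
    (by simpa using hb) 0 0
  refine this.norm.congr (.of_forall fun x ↦ ?_)
  simp only [Complex.norm_exp, inner_zero_left, Complex.ofReal_zero, mul_zero, add_zero,
    Complex.neg_re, neg_mul]
  norm_cast

variable (E) in
lemma integrable_exp_neg_norm_sq_div_two :
    Integrable fun x : E ↦ Real.exp (-(‖x‖ ^ 2 / 2)) := by
  simpa only [one_div_mul_eq_div] using integrable_exp_neg_mul_norm_sq E one_half_pos

lemma stdGaussian_eq_tilted :
    stdGaussian E = (volume : Measure E).tilted fun x ↦ -(‖x‖ ^ 2 / 2) := by
  have : IsProbabilityMeasure ((volume : Measure E).tilted fun x ↦ -(‖x‖ ^ 2 / 2)) :=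
    isProbabilityMeasure_tilted (integrable_exp_neg_norm_sq_div_two E)
  have mass : ((∫ x : E, Real.exp (-(‖x‖ ^ 2 / 2)) : ℝ) : ℂ)
      = (Real.pi / (1 / 2 : ℂ)) ^ (Module.finrank ℝ E / 2 : ℂ) := by
    rw [← GaussianFourier.integral_cexp_neg_mul_sq_norm (V := E) (b := 1 / 2) (by norm_num),
      ← integral_complex_ofReal]
    congr with x
    push_cast
    ring_nf
  have mass_ne : (∫ x : E, Real.exp (-(‖x‖ ^ 2 / 2))) ≠ 0 :=
    (integral_exp_pos (integrable_exp_neg_norm_sq_div_two E)).ne'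
  refine Measure.ext_of_charFun (funext fun t ↦ ?_)
  have fourier := GaussianFourier.integral_cexp_neg_mul_sq_norm_add (V := E) (b := (1 / 2 : ℂ))
    (by norm_num) Complex.I t
  rw [charFun_stdGaussian, charFun_apply, integral_tilted]
  simp_rw [div_eq_inv_mul (Real.exp _), mul_smul, integral_smul, Complex.real_smul]
  rw [show (fun x : E ↦ (Real.exp (-(‖x‖ ^ 2 / 2)) : ℂ) * Complex.exp (inner ℝ x t * Complex.I))
    = fun x ↦ Complex.exp (-(1 / 2) * ‖x‖ ^ 2 + Complex.I * inner ℝ t x) from ?_, fourier, ← mass]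
  · push_cast
    rw [inv_mul_cancel_left₀ (by exact_mod_cast mass_ne), Complex.I_sq]
    congr 1
    ring
  · ext x
    rw [real_inner_comm x t, Complex.exp_add]
    push_cast
    ring_nf

lemma integrable_norm_pow_stdGaussian (k : ℕ) :
    Integrable (fun x : E ↦ ‖x‖ ^ k) (stdGaussian E) :=
  (IsGaussian.memLp_id (stdGaussian E) k (by simp)).integrable_norm_pow'

lemma map_inner_stdGaussian (u : E) :
    (stdGaussian E).map (fun x ↦ inner ℝ u x) = gaussianReal 0 (‖u‖ ^ 2).toNNReal := by
  have := IsGaussian.map_eq_gaussianReal (μ := stdGaussian E) (innerSL ℝ u)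
  rwa [integral_strongDual_stdGaussian, variance_dual_stdGaussian, innerSL_apply_norm] at this

lemma integral_exp_inner_stdGaussian (u : E) :
    ∫ x, Real.exp (inner ℝ u x) ∂stdGaussian E = Real.exp (‖u‖ ^ 2 / 2) := by
  have := mgf_gaussianReal (map_inner_stdGaussian u) 1
  simpa [mgf] using this

lemma integrable_exp_inner_stdGaussian (u : E) :
    Integrable (fun x ↦ Real.exp (inner ℝ u x)) (stdGaussian E) := by
  refine .of_integral_ne_zero ?_
  rw [integral_exp_inner_stdGaussian]
  positivity

lemma integral_inner_stdGaussian (u : E) : ∫ x, inner ℝ u x ∂stdGaussian E = 0 := by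
  simpa using integral_strongDual_stdGaussian (innerSL ℝ u)

lemma integrable_inner_stdGaussian (u : E) :
    Integrable (fun x ↦ inner ℝ u x) (stdGaussian E) :=
  IsGaussian.integrable_id.const_inner u

lemma map_add_right_stdGaussian (u : E) :
    (stdGaussian E).map (· + u) = (stdGaussian E).tilted fun x ↦ inner ℝ u x := by
  have shift := map_tilted_comp (measurePreserving_add_right (volume : Measure E) u)
    (f := fun x ↦ -(‖x - u‖ ^ 2 / 2)) (by fun_prop)
  simp only [add_sub_cancel_right] at shift
  rw [stdGaussian_eq_tilted, shift, tilted_tilted (integrable_exp_neg_norm_sq_div_two E)]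
  have expand : (fun x ↦ -(‖x - u‖ ^ 2 / 2))
      = (fun x ↦ -(‖x‖ ^ 2 / 2)) + (fun x ↦ inner ℝ u x) + fun _ ↦ -(‖u‖ ^ 2 / 2) := by
    ext x
    simp only [Pi.add_apply, norm_sub_sq_real, real_inner_comm]
    ring
  rw [expand]
  simp only [Measure.tilted, Pi.add_apply, Real.exp_add (_ + _), integral_mul_const]
  simp_rw [mul_div_mul_right _ _ (Real.exp_ne_zero (-(‖u‖ ^ 2 / 2)))]

/- Cameron–Martin turns the shift into the density `exp (⟪u, x⟫ - ‖u‖² / 2)`, whose second moment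
is `exp ‖u‖²`. -/
lemma sq_integral_comp_add_right_le {k : E → ℝ} (hk : Measurable k)
    (hk2 : Integrable (fun x ↦ k x ^ 2) (stdGaussian E)) (u : E) :
    Integrable (fun x ↦ k (x + u)) (stdGaussian E) ∧
    (∫ x, k (x + u) ∂stdGaussian E) ^ 2 ≤ Real.exp (‖u‖ ^ 2) * ∫ x, k x ^ 2 ∂stdGaussian E := by
  set ρ : E → ℝ := fun x ↦ Real.exp (inner ℝ u x) with hρ
  have ρ_sq (x : E) : ρ x ^ 2 = Real.exp (inner ℝ ((2 : ℝ) • u) x) := by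
    rw [hρ, ← Real.exp_nat_mul, real_inner_smul_left]
    norm_num
  have integrable_ρ_sq : Integrable (fun x ↦ ρ x ^ 2) (stdGaussian E) := by
    simpa only [ρ_sq] using integrable_exp_inner_stdGaussian ((2 : ℝ) • u)
  have integral_ρ_sq : ∫ x, ρ x ^ 2 ∂stdGaussian E = Real.exp (‖u‖ ^ 2 / 2) ^ 2 * Real.exp (‖u‖ ^ 2)
      := by
    simp_rw [ρ_sq]
    rw [integral_exp_inner_stdGaussian, norm_smul, ← Real.exp_nat_mul, ← Real.exp_add]
    norm_num
    ring
  have integrable_mul : Integrable (fun x ↦ k x * ρ x) (stdGaussian E) :=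
    ((memLp_two_iff_integrable_sq hk.aestronglyMeasurable).2 hk2).integrable_mul
      ((memLp_two_iff_integrable_sq (by fun_prop)).2 integrable_ρ_sq)
  have shift (x : E) : Real.exp (inner ℝ u x) / ∫ y, Real.exp (inner ℝ u y) ∂stdGaussian E
      = Real.exp (-(‖u‖ ^ 2 / 2)) * ρ x := by
    rw [integral_exp_inner_stdGaussian, Real.exp_neg]
    ring
  constructor
  · rw [show (fun x ↦ k (x + u)) = k ∘ (· + u) from rfl,
      ← integrable_map_measure hk.aestronglyMeasurable (by fun_prop), map_add_right_stdGaussian,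
      integrable_tilted_iff (integrable_exp_inner_stdGaussian u)]
    simpa only [smul_eq_mul, mul_comm] using integrable_mul
  · rw [← integral_map (by fun_prop : AEMeasurable (· + u) (stdGaussian E))
      hk.aestronglyMeasurable, map_add_right_stdGaussian, integral_tilted]
    simp_rw [shift, smul_eq_mul, mul_assoc, mul_comm (ρ _)]
    rw [integral_const_mul, mul_pow]
    calc _ ≤ Real.exp (-(‖u‖ ^ 2 / 2)) ^ 2 * ((∫ x, k x ^ 2 ∂stdGaussian E)
          * ∫ x, ρ x ^ 2 ∂stdGaussian E) := by
          gcongr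
          exact sq_integral_mul_le hk2 integrable_ρ_sq integrable_mul
      _ = (Real.exp (-(‖u‖ ^ 2 / 2)) * Real.exp (‖u‖ ^ 2 / 2)) ^ 2
          * (Real.exp (‖u‖ ^ 2) * ∫ x, k x ^ 2 ∂stdGaussian E) := by
          rw [integral_ρ_sq]
          ring
      _ = _ := by
          rw [← Real.exp_add, neg_add_cancel, Real.exp_zero, one_pow, one_mul]

lemma map_smul_add_smul_stdGaussian {c s : ℝ} (hcs : c ^ 2 + s ^ 2 = 1) :
    ((stdGaussian E).prod (stdGaussian E)).map (fun p : E × E ↦ c • p.1 + s • p.2)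
      = stdGaussian E := by
  have (a : ℝ) : IsProbabilityMeasure ((stdGaussian E).map (a • ·)) :=
    Measure.isProbabilityMeasure_map (by fun_prop)
  have conv_eq : ((stdGaussian E).map (c • ·)).conv ((stdGaussian E).map (s • ·))
      = stdGaussian E := by
    refine Measure.ext_of_charFun (funext fun t ↦ ?_)
    have hcs' : (c : ℂ) ^ 2 + (s : ℂ) ^ 2 = 1 := mod_cast hcs
    have norm_smul_sq (a : ℝ) : ((‖a • t‖ : ℝ) : ℂ) ^ 2 = a ^ 2 * ‖t‖ ^ 2 := by
      rw [norm_smul, Real.norm_eq_abs]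
      norm_cast
      rw [mul_pow, sq_abs]
    rw [charFun_conv, charFun_map_smul, charFun_map_smul, charFun_stdGaussian,
      charFun_stdGaussian, charFun_stdGaussian, ← Complex.exp_add, norm_smul_sq, norm_smul_sq]
    congr 1
    linear_combination (-(‖t‖ : ℂ) ^ 2 / 2) * hcs'
  rwa [Measure.conv, Measure.map_prod_map _ _ (by fun_prop) (by fun_prop),
    Measure.map_map (by fun_prop) (by fun_prop)] at conv_eq

end Gaussian

/-! ### Markov operators and Harris' theorem -/

section Harris

variable {S ι : Type*} [Norm S] [MeasurableSpace S]

/-- Measurable functions of at most quadratic growth: the class of observables on which the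
transition operators act. -/
def QuadGrowth (g : S → ℝ) : Prop := Measurable g ∧ ∃ A : ℝ, ∀ z, |g z| ≤ A * (1 + ‖z‖ ^ 2)

/-- Positive unital linear operators on the observables of quadratic growth. The operator is a
function on all of `S → ℝ`, about which nothing is required outside `QuadGrowth`. -/
structure IsMarkovOperator (P : (S → ℝ) → S → ℝ) : Prop where
  quadGrowth : ∀ {g}, QuadGrowth g → QuadGrowth (P g)
  linear : ∀ {f g}, QuadGrowth f → QuadGrowth g → ∀ a b : ℝ, ∀ z,
    P (fun y ↦ a * f y + b * g y) z = a * P f z + b * P g z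
  mono : ∀ {f g}, QuadGrowth f → QuadGrowth g → (∀ z, f z ≤ g z) → ∀ z, P f z ≤ P g z
  const : ∀ (c : ℝ) (z : S), P (fun _ ↦ c) z = c

namespace QuadGrowth

variable {f g : S → ℝ}

lemma const (c : ℝ) : QuadGrowth fun _ : S ↦ c :=
  ⟨measurable_const, |c|, fun z ↦ by nlinarith [abs_nonneg c, sq_nonneg ‖z‖]⟩

lemma linear (hf : QuadGrowth f) (hg : QuadGrowth g) (a b : ℝ) :
    QuadGrowth fun y ↦ a * f y + b * g y := by
  obtain ⟨measurable_f, A, hA⟩ := hf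
  obtain ⟨measurable_g, B, hB⟩ := hg
  refine ⟨by fun_prop, |a| * A + |b| * B, fun z ↦ ?_⟩
  calc |a * f z + b * g z| ≤ |a * f z| + |b * g z| := abs_add_le _ _
    _ = |a| * |f z| + |b| * |g z| := by rw [abs_mul, abs_mul]
    _ ≤ |a| * (A * (1 + ‖z‖ ^ 2)) + |b| * (B * (1 + ‖z‖ ^ 2)) := by
        gcongr
        exacts [hA z, hB z]
    _ = _ := by ring

lemma add (hf : QuadGrowth f) (hg : QuadGrowth g) : QuadGrowth fun y ↦ f y + g y := by
  simpa only [one_mul] using hf.linear hg 1 1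

lemma sub (hf : QuadGrowth f) (hg : QuadGrowth g) : QuadGrowth fun y ↦ f y - g y := by
  simpa only [one_mul, neg_mul, ← sub_eq_add_neg] using hf.linear hg 1 (-1)

lemma const_mul (hf : QuadGrowth f) (a : ℝ) : QuadGrowth fun y ↦ a * f y := by
  simpa only [zero_mul, add_zero] using hf.linear hf a 0

lemma of_abs_le (hf : Measurable f) (hg : QuadGrowth g) (h : ∀ z, |f z| ≤ g z) :
    QuadGrowth f :=
  ⟨hf, hg.2.imp fun _ hB z ↦ (h z).trans ((le_abs_self _).trans (hB z))⟩

lemma of_sq (hf : Measurable f) (h : QuadGrowth fun z ↦ f z ^ 2) : QuadGrowth f := by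
  refine of_abs_le hf ((const 1).add h) fun z ↦ abs_le.2 ⟨?_, ?_⟩ <;>
    nlinarith [sq_nonneg (f z - 1), sq_nonneg (f z + 1)]

lemma exists_nonneg_bound (hg : QuadGrowth g) : ∃ A, 0 ≤ A ∧ ∀ z, |g z| ≤ A * (1 + ‖z‖ ^ 2) := by
  obtain ⟨-, A, hA⟩ := hg
  exact ⟨|A|, abs_nonneg A, fun z ↦ (hA z).trans (by gcongr; exact le_abs_self A)⟩

lemma sum (s : Finset ι) {f : ι → S → ℝ} (hf : ∀ i ∈ s, QuadGrowth (f i)) :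
    QuadGrowth fun y ↦ ∑ i ∈ s, f i y := by
  classical
  induction s using Finset.induction_on with
  | empty => simpa using const (S := S) 0
  | insert a s ha ih =>
    simp only [Finset.sum_insert ha]
    exact (hf a (by simp)).add (ih fun i hi ↦ hf i (by simp [hi]))

end QuadGrowth

namespace IsMarkovOperator

variable {P : (S → ℝ) → S → ℝ} {f g : S → ℝ}

lemma add (hP : IsMarkovOperator P) (hf : QuadGrowth f) (hg : QuadGrowth g) (z : S) :
    P (fun y ↦ f y + g y) z = P f z + P g z := by
  simpa only [one_mul] using hP.linear hf hg 1 1 z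

lemma sub (hP : IsMarkovOperator P) (hf : QuadGrowth f) (hg : QuadGrowth g) (z : S) :
    P (fun y ↦ f y - g y) z = P f z - P g z := by
  simpa only [one_mul, neg_mul, ← sub_eq_add_neg] using hP.linear hf hg 1 (-1) z

lemma const_mul (hP : IsMarkovOperator P) (hf : QuadGrowth f) (a : ℝ) (z : S) :
    P (fun y ↦ a * f y) z = a * P f z := by
  simpa only [zero_mul, add_zero] using hP.linear hf hf a 0 z

lemma affine (hP : IsMarkovOperator P) (hf : QuadGrowth f) (a b : ℝ) (z : S) :
    P (fun y ↦ a * f y + b) z = a * P f z + b := by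
  rw [hP.add (hf.const_mul a) (.const b), hP.const_mul hf, hP.const]

lemma apply_nonneg (hP : IsMarkovOperator P) (hg : QuadGrowth g) (h : ∀ z, 0 ≤ g z) (z : S) :
    0 ≤ P g z :=
  (hP.const 0 z).ge.trans (hP.mono (.const 0) hg h z)

lemma sum (hP : IsMarkovOperator P) (s : Finset ι) {f : ι → S → ℝ}
    (hf : ∀ i ∈ s, QuadGrowth (f i)) (z : S) :
    P (fun y ↦ ∑ i ∈ s, f i y) z = ∑ i ∈ s, P (f i) z := by
  classical
  induction s using Finset.induction_on with
  | empty => simpa using hP.const 0 z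
  | insert a s ha ih =>
    simp only [Finset.sum_insert ha]
    rw [hP.add (hf a (by simp)) (.sum s fun i hi ↦ hf i (by simp [hi])),
      ih fun i hi ↦ hf i (by simp [hi])]

lemma sq_apply_le (hP : IsMarkovOperator P) (hg : Measurable g)
    (hg2 : QuadGrowth fun z ↦ g z ^ 2) (z : S) : P g z ^ 2 ≤ P (fun y ↦ g y ^ 2) z := by
  have hg1 := QuadGrowth.of_sq hg hg2
  set c := P g z
  have variance_nonneg : 0 ≤ P (fun y ↦ 1 * g y ^ 2 + -2 * c * g y + c ^ 2) z := by
    rw [← hP.const 0 z]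
    refine hP.mono (.const 0) ((hg2.linear hg1 _ _).add (.const _)) (fun y ↦ ?_) z
    linarith [sq_nonneg (g y - c)]
  rw [hP.add (hg2.linear hg1 _ _) (.const _), hP.linear hg2 hg1, hP.const] at variance_nonneg
  linarith

lemma abs_apply_le (hP : IsMarkovOperator P) (hf : QuadGrowth f) (hg : QuadGrowth g)
    (h : ∀ z, |f z| ≤ g z) (z : S) : |P f z| ≤ P g z := by
  refine abs_le.2 ⟨?_, hP.mono hf hg (fun y ↦ (abs_le.1 (h y)).2) z⟩
  rw [← neg_one_mul, ← hP.const_mul hg]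
  exact hP.mono (hg.const_mul _) hf (fun y ↦ by linarith [(abs_le.1 (h y)).1]) z

lemma iterate (hP : IsMarkovOperator P) (n : ℕ) : IsMarkovOperator P^[n] := by
  induction n with
  | zero => exact ⟨id, fun _ _ _ _ _ ↦ rfl, fun _ _ h ↦ h, fun _ _ ↦ rfl⟩
  | succ n ih =>
    simp only [Function.iterate_succ']
    refine ⟨fun hg ↦ hP.quadGrowth (ih.quadGrowth hg), fun hf hg a b z ↦ ?_,
      fun hf hg h z ↦ hP.mono (ih.quadGrowth hf) (ih.quadGrowth hg) (ih.mono hf hg h) z,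
      fun c z ↦ ?_⟩
    · simp only [Function.comp_apply, funext (ih.linear hf hg a b),
        hP.linear (ih.quadGrowth hf) (ih.quadGrowth hg)]
    · simp only [Function.comp_apply, funext (ih.const c), hP.const]

lemma iterate_apply_le_of_drift (hP : IsMarkovOperator P) (hg : QuadGrowth g) {r K : ℝ}
    (hr : 0 ≤ r) (hK : 0 ≤ K) (drift : ∀ z, P g z ≤ r * g z + (1 - r) * K) (n : ℕ) (z : S) :
    P^[n] g z ≤ r ^ n * g z + K := by
  induction n generalizing z with
  | zero => simpa using hK
  | succ n ih =>
    calc P^[n + 1] g z ≤ P^[n] (fun y ↦ r * g y + (1 - r) * K) z :=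
          (hP.iterate n).mono (hP.quadGrowth hg) ((hg.const_mul r).add (.const _)) drift z
      _ = r * P^[n] g z + (1 - r) * K := (hP.iterate n).affine hg _ _ z
      _ ≤ r * (r ^ n * g z + K) + (1 - r) * K := by
          gcongr
          exact ih z
      _ = _ := by ring

end IsMarkovOperator

/-- The hypotheses of Harris' theorem for a Markov operator `Q`: the Lyapunov function `w` drifts
towards a sublevel set, and on that set `Q` is minorized with overlap `ε`. The minorization is
phrased as an oscillation bound, which is equivalent to a bound on the total variation distance
of the transition probabilities. -/
structure HarrisCondition (Q : (S → ℝ) → S → ℝ) (w : S → ℝ) (θ κ ε : ℝ) : Prop where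
  isMarkovOperator : IsMarkovOperator Q
  quadGrowth : QuadGrowth w
  nonneg : ∀ z, 0 ≤ w z
  theta_nonneg : 0 ≤ θ
  theta_lt_one : θ < 1
  kappa_pos : 0 < κ
  eps_pos : 0 < ε
  drift : ∀ z, Q w z ≤ θ * w z + κ
  minorization : ∀ z z', w z + w z' ≤ 4 * κ / (1 - θ) → ∀ g, QuadGrowth g → (∀ y, 0 ≤ g y) →
    (∀ y, g y ≤ 1) → Q g z - Q g z' ≤ 1 - ε

/-- The weight `β` of the Lyapunov function in the seminorm
`sup (g z - g z') / (2 + β (w z + w z'))` which the operator contracts. -/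
noncomputable def harrisWeight (κ ε : ℝ) : ℝ := ε / (2 * κ)

/-- The contraction rate in Harris' theorem. The first two terms come from pairs of points in the
small set, the last one from the pairs outside of it. -/
noncomputable def harrisRate (θ κ ε : ℝ) : ℝ :=
  max (max (1 - ε / 2) θ)
    ((2 + harrisWeight κ ε * ((1 + θ) / 2) * (4 * κ / (1 - θ))) /
      (2 + harrisWeight κ ε * (4 * κ / (1 - θ))))

lemma harrisWeight_pos {κ ε : ℝ} (hκ : 0 < κ) (hε : 0 < ε) : 0 < harrisWeight κ ε := by
  unfold harrisWeight
  positivity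

lemma harrisRate_lt_one {θ κ ε : ℝ} (hθ : θ < 1) (hκ : 0 < κ) (hε : 0 < ε) :
    harrisRate θ κ ε < 1 := by
  have hβ := harrisWeight_pos hκ hε
  have : 0 < 1 - θ := by linarith
  refine max_lt (max_lt (by linarith) hθ) ?_
  rw [div_lt_one (by positivity)]
  gcongr
  nlinarith

lemma harrisRate_pos {θ κ ε : ℝ} (hθ₀ : 0 ≤ θ) (hθ : θ < 1) (hκ : 0 < κ) (hε : 0 < ε) :
    0 < harrisRate θ κ ε := by
  have hβ := harrisWeight_pos hκ hε
  have : 0 < 1 - θ := by linarith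
  exact lt_max_of_lt_right (by positivity)

lemma exists_abs_sub_le_of_sub_le_add {α : Type*} {g W : α → ℝ}
    (h : ∀ z z', g z - g z' ≤ W z + W z') : ∃ c, ∀ z, |g z - c| ≤ W z := by
  rcases isEmpty_or_nonempty α with hα | ⟨⟨z₀⟩⟩
  · exact ⟨0, fun z ↦ hα.elim z⟩
  have bddAbove : BddAbove (Set.range fun z ↦ g z - W z) :=
    ⟨g z₀ + W z₀, by rintro _ ⟨z, rfl⟩; linarith [h z z₀]⟩
  refine ⟨⨆ z, (g z - W z), fun z ↦ abs_le.2 ⟨?_, by linarith [le_ciSup bddAbove z]⟩⟩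
  have : Nonempty α := ⟨z₀⟩
  linarith [ciSup_le fun z' ↦ show g z' - W z' ≤ g z + W z by linarith [h z' z]]

lemma abs_sub_max_min_le {c r t : ℝ} (hr : 0 ≤ r) (ht : |t| ≤ c + r) :
    |t - max (-c) (min c t)| ≤ r := by
  obtain ⟨lower, upper⟩ := abs_le.1 ht
  refine abs_le.2 ⟨?_, ?_⟩ <;> rcases max_cases (-c) (min c t) with h | h <;>
    rcases min_cases c t with h' | h' <;> linarith

namespace HarrisCondition

variable {Q : (S → ℝ) → S → ℝ} {w φ g : S → ℝ} {θ κ ε : ℝ}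

lemma harrisWeight_pos (H : HarrisCondition Q w θ κ ε) : 0 < harrisWeight κ ε :=
  Langevin.harrisWeight_pos H.kappa_pos H.eps_pos

lemma harrisRate_pos (H : HarrisCondition Q w θ κ ε) : 0 < harrisRate θ κ ε :=
  Langevin.harrisRate_pos H.theta_nonneg H.theta_lt_one H.kappa_pos H.eps_pos

lemma sub_le_of_bounded (H : HarrisCondition Q w θ κ ε) (hφ : QuadGrowth φ) {c : ℝ} (hc : 0 < c)
    (bound : ∀ y, |φ y| ≤ c) {z z' : S} (hz : w z + w z' ≤ 4 * κ / (1 - θ)) :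
    Q φ z - Q φ z' ≤ 2 * c * (1 - ε) := by
  have mem (y : S) : -1 ≤ c⁻¹ * φ y ∧ c⁻¹ * φ y ≤ 1 := by
    obtain ⟨lower, upper⟩ := abs_le.1 (bound y)
    constructor <;> rw [inv_mul_eq_div]
    · rwa [le_div_iff₀ hc, neg_one_mul]
    · exact (div_le_one hc).2 upper
  have minor := H.minorization z z' hz (fun y ↦ 2⁻¹ * c⁻¹ * φ y + 2⁻¹)
    ((hφ.const_mul _).add (.const _)) (fun y ↦ by linarith [(mem y).1])
    (fun y ↦ by linarith [(mem y).2])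
  rw [H.isMarkovOperator.affine hφ, H.isMarkovOperator.affine hφ] at minor
  calc Q φ z - Q φ z'
      = 2 * c * ((2⁻¹ * c⁻¹ * Q φ z + 2⁻¹) - (2⁻¹ * c⁻¹ * Q φ z' + 2⁻¹)) := by
        field_simp
        ring
    _ ≤ 2 * c * (1 - ε) := by gcongr

lemma sub_le_of_mem_small (H : HarrisCondition Q w θ κ ε) (hφ : QuadGrowth φ) {b c : ℝ}
    (hb : 0 ≤ b) (hc : 0 < c) (bound : ∀ y, |φ y| ≤ c + b * w y) {z z' : S}
    (hz : w z + w z' ≤ 4 * κ / (1 - θ)) :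
    Q φ z - Q φ z' ≤ 2 * c * (1 - ε) + b * (Q w z + Q w z') := by
  have hQ := H.isMarkovOperator
  set ψ : S → ℝ := fun y ↦ max (-c) (min c (φ y))
  have abs_ψ (y : S) : |ψ y| ≤ c :=
    abs_le.2 ⟨le_max_left _ _, max_le (by linarith) (min_le_left _ _)⟩
  have hψ : QuadGrowth ψ :=
    .of_abs_le (measurable_const.max (measurable_const.min hφ.1)) (.const c) abs_ψ
  have remainder (y : S) : |Q φ y - Q ψ y| ≤ b * Q w y := by
    rw [← hQ.sub hφ hψ, ← hQ.const_mul H.quadGrowth]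
    exact hQ.abs_apply_le (hφ.sub hψ) (H.quadGrowth.const_mul b)
      (fun y ↦ abs_sub_max_min_le (mul_nonneg hb (H.nonneg y)) (bound y)) y
  linarith [H.sub_le_of_bounded hψ hc abs_ψ hz, (abs_le.1 (remainder z)).2,
    (abs_le.1 (remainder z')).1]

lemma sub_le (H : HarrisCondition Q w θ κ ε) (hφ : QuadGrowth φ) {b c : ℝ}
    (bound : ∀ y, |φ y| ≤ c + b * w y) (z z' : S) :
    Q φ z - Q φ z' ≤ 2 * c + b * (Q w z + Q w z') := by
  have hQ := H.isMarkovOperator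
  have abs_Qφ (y : S) : |Q φ y| ≤ b * Q w y + c := by
    rw [← hQ.affine H.quadGrowth]
    exact hQ.abs_apply_le hφ ((H.quadGrowth.const_mul b).add (.const c))
      (fun y ↦ (bound y).trans_eq (add_comm _ _)) y
  linarith [(abs_le.1 (abs_Qφ z)).2, (abs_le.1 (abs_Qφ z')).1]

lemma contraction_of_abs_le (H : HarrisCondition Q w θ κ ε) (hφ : QuadGrowth φ) {c : ℝ}
    (hc : 0 < c) (bound : ∀ y, |φ y| ≤ c + c * harrisWeight κ ε * w y) (z z' : S) :
    Q φ z - Q φ z' ≤ harrisRate θ κ ε * (c * (2 + harrisWeight κ ε * (w z + w z'))) := by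
  have hβ := H.harrisWeight_pos
  set β := harrisWeight κ ε
  have hθ : 0 < 1 - θ := by linarith [H.theta_lt_one]
  set ρ := 4 * κ / (1 - θ) with hρ_def
  have hρ : 0 < ρ := div_pos (by linarith [H.kappa_pos]) hθ
  have hρκ : (1 - θ) / 2 * ρ = 2 * κ := by
    rw [hρ_def]
    field_simp
    norm_num
  set s := w z + w z'
  have hs : 0 ≤ s := add_nonneg (H.nonneg _) (H.nonneg _)
  have drift : c * β * (Q w z + Q w z') ≤ c * β * (θ * s + 2 * κ) := by
    refine mul_le_mul_of_nonneg_left ?_ (by positivity)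
    linarith [H.drift z, H.drift z']
  rcases le_or_gt s ρ with small | large
  · have hβκ : β * (2 * κ) = ε := div_mul_cancel₀ _ (by linarith [H.kappa_pos])
    calc Q φ z - Q φ z' ≤ 2 * c * (1 - ε) + c * β * (θ * s + 2 * κ) :=
          (H.sub_le_of_mem_small hφ (by positivity) hc bound small).trans (by linarith)
      _ = c * (2 * (1 - ε / 2) + β * s * θ) := by linear_combination c * hβκ
      _ ≤ c * (2 * harrisRate θ κ ε + β * s * harrisRate θ κ ε) := by
          gcongr
          exacts [(le_max_left _ _).trans (le_max_left _ _),
            (le_max_right _ _).trans (le_max_left _ _)]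
      _ = _ := by ring
  · calc Q φ z - Q φ z' ≤ 2 * c + c * β * (θ * s + 2 * κ) :=
          (H.sub_le hφ bound z z').trans (by linarith)
      _ ≤ 2 * c + c * β * (θ * s + (1 - θ) / 2 * s) := by
          rw [← hρκ]
          gcongr
      _ = c * (2 + β * ((1 + θ) / 2) * s) := by ring
      _ ≤ c * ((2 + β * ((1 + θ) / 2) * ρ) / (2 + β * ρ) * (2 + β * s)) := by
          gcongr
          rw [div_mul_eq_mul_div, le_div_iff₀ (by positivity)]
          nlinarith [mul_nonneg (mul_nonneg hβ.le (sub_nonneg.2 large.le)) hθ.le]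
      _ ≤ c * (harrisRate θ κ ε * (2 + β * s)) := by
          gcongr
          exact le_max_right _ _
      _ = _ := by ring

lemma contraction (H : HarrisCondition Q w θ κ ε) (hg : QuadGrowth g) {c : ℝ} (hc : 0 < c)
    (osc : ∀ z z', g z - g z' ≤ c * (2 + harrisWeight κ ε * (w z + w z'))) (z z' : S) :
    Q g z - Q g z' ≤ harrisRate θ κ ε * (c * (2 + harrisWeight κ ε * (w z + w z'))) := by
  obtain ⟨a, ha⟩ := exists_abs_sub_le_of_sub_le_add (g := g)
    (W := fun y ↦ c + c * harrisWeight κ ε * w y) fun z z' ↦ (osc z z').trans_eq (by ring)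
  have := H.contraction_of_abs_le (hg.sub (.const a)) hc ha z z'
  rwa [H.isMarkovOperator.sub hg (.const a), H.isMarkovOperator.sub hg (.const a),
    H.isMarkovOperator.const, H.isMarkovOperator.const, sub_sub_sub_cancel_right] at this

lemma iterate_contraction (H : HarrisCondition Q w θ κ ε) (hg : QuadGrowth g) {c : ℝ}
    (hc : 0 < c) (osc : ∀ z z', g z - g z' ≤ c * (2 + harrisWeight κ ε * (w z + w z'))) (n : ℕ)
    (z z' : S) : Q^[n] g z - Q^[n] g z'
      ≤ harrisRate θ κ ε ^ n * (c * (2 + harrisWeight κ ε * (w z + w z'))) := by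
  induction n generalizing z z' with
  | zero => simpa using osc z z'
  | succ n ih =>
    rw [Function.iterate_succ_apply', pow_succ', mul_assoc, ← mul_assoc _ c]
    exact H.contraction ((H.isMarkovOperator.iterate n).quadGrowth hg)
      (mul_pos (pow_pos H.harrisRate_pos n) hc) (fun y y' ↦ (ih y y').trans_eq (by ring)) z z'

end HarrisCondition

end Harris

/-! ### The Euler–Maruyama transition operator -/

lemma continuous_of_norm_sub_le {E F : Type*} [SeminormedAddCommGroup E]
    [SeminormedAddCommGroup F] {f : E → F} {K : ℝ} (h : ∀ x y, ‖f x - f y‖ ≤ K * ‖x - y‖) :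
    Continuous f := by
  refine (LipschitzWith.of_dist_le_mul (K := K.toNNReal) fun x y ↦ ?_).continuous
  rw [dist_eq_norm, dist_eq_norm]
  exact (h x y).trans (by gcongr; exact Real.le_coe_toNNReal K)

lemma QuadGrowth.of_lipschitz {S : Type*} [NormedAddCommGroup S] [MeasurableSpace S]
    [OpensMeasurableSpace S] {g : S → ℝ} {l : ℝ} (hl : 0 ≤ l)
    (h : ∀ z z', |g z - g z'| ≤ l * ‖z - z'‖) : QuadGrowth g := by
  refine ⟨(continuous_of_norm_sub_le h).measurable, |g 0| + l, fun z ↦ ?_⟩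
  have triangle : |g z| ≤ |g z - g 0| + |g 0| := by simpa using abs_add_le (g z - g 0) (g 0)
  have increment := h z 0
  rw [sub_zero] at increment
  have := mul_le_mul_of_nonneg_left (show ‖z‖ ≤ 1 + ‖z‖ ^ 2 by nlinarith [sq_nonneg (‖z‖ - 1)]) hl
  have := mul_nonneg (abs_nonneg (g 0)) (sq_nonneg ‖z‖)
  linarith

lemma norm_sq_le_norm_fst_sq_add_norm_snd_sq {E F : Type*} [SeminormedAddCommGroup E]
    [SeminormedAddCommGroup F] (z : E × F) : ‖z‖ ^ 2 ≤ ‖z.1‖ ^ 2 + ‖z.2‖ ^ 2 := by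
  rw [Prod.norm_def]
  rcases max_choice ‖z.1‖ ‖z.2‖ with h | h <;> rw [h] <;>
    linarith [sq_nonneg ‖z.1‖, sq_nonneg ‖z.2‖]

lemma norm_fst_sq_add_norm_snd_sq_le {E F : Type*} [SeminormedAddCommGroup E]
    [SeminormedAddCommGroup F] (z : E × F) : ‖z.1‖ ^ 2 + ‖z.2‖ ^ 2 ≤ 2 * ‖z‖ ^ 2 := by
  have := pow_le_pow_left₀ (norm_nonneg _) (norm_fst_le z) 2
  have := pow_le_pow_left₀ (norm_nonneg _) (norm_snd_le z) 2
  linarith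

section Chain

variable {E : Type*} [NormedAddCommGroup E] [InnerProductSpace ℝ E]

/-- The properties of the force field `F = ∇U` which make the Langevin dynamics ergodic: Lipschitz
continuity (with the resulting linear growth, for the same constant) and dissipativity. -/
structure DissipativeField (F : E → E) (L m B : ℝ) : Prop where
  lipschitz : ∀ x y, ‖F x - F y‖ ≤ L * ‖x - y‖
  growth : ∀ x, ‖F x‖ ≤ L * (‖x‖ + 1)
  dissipative : ∀ x, m * ‖x‖ ^ 2 - B * ‖x‖ ≤ inner ℝ x (F x)
  L_pos : 0 < L
  m_pos : 0 < m

/-- One step of the Euler–Maruyama chain with time step `h` and damping rate `γ`, from the state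
`z = (x, v)` and with noise `ξ`. -/
noncomputable def step (F : E → E) (γ h : ℝ) (z : E × E) (ξ : E) : E × E :=
  (z.1 + h • z.2, z.2 - h • F z.1 - (γ * h) • z.2 + √(2 * γ * h) • ξ)

variable {F : E → E} {L m B γ h : ℝ} {g : E × E → ℝ}

lemma DissipativeField.continuous (hF : DissipativeField F L m B) : Continuous F :=
  continuous_of_norm_sub_le hF.lipschitz

lemma step_eq_add (z : E × E) (ξ : E) :
    step F γ h z ξ = step F γ h z 0 + (0, √(2 * γ * h) • ξ) := by
  simp [step]

lemma step_sub_step (z z' : E × E) (ξ : E) :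
    step F γ h z ξ - step F γ h z' ξ = ((z.1 - z'.1) + h • (z.2 - z'.2),
      (z.2 - z'.2) - h • (F z.1 - F z'.1) - (γ * h) • (z.2 - z'.2)) := by
  simp only [step, Prod.mk_sub_mk, smul_sub]
  congr 1 <;> abel

lemma norm_step_sub_step_zero (z : E × E) (ξ : E) :
    ‖step F γ h z ξ - step F γ h z 0‖ = √(2 * γ * h) * ‖ξ‖ := by
  rw [step_eq_add, add_sub_cancel_left, Prod.norm_mk, norm_zero,
    max_eq_right (norm_nonneg _), norm_smul, Real.norm_of_nonneg (Real.sqrt_nonneg _)]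

lemma norm_step_zero_sub_le (hF : DissipativeField F L m B) (hγ : 0 < γ) (hh : 0 < h)
    (z : E × E) : ‖step F γ h z 0 - z‖ ≤ h * ((1 + L + γ) * (1 + ‖z‖)) := by
  have hL := hF.L_pos
  have displacement : step F γ h z 0 - z = (h • z.2, -(h • F z.1) - (γ * h) • z.2) := by
    ext1
    · simp [step]
    · simp only [step, smul_zero, add_zero, Prod.snd_sub]
      abel
  rw [displacement]
  refine max_le ?_ ?_
  · rw [norm_smul, Real.norm_of_nonneg hh.le]
    gcongr
    nlinarith [norm_snd_le z, norm_nonneg z]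
  · calc ‖-(h • F z.1) - (γ * h) • z.2‖ ≤ ‖-(h • F z.1)‖ + ‖(γ * h) • z.2‖ := norm_sub_le _ _
      _ = h * (‖F z.1‖ + γ * ‖z.2‖) := by
          rw [norm_neg, norm_smul, norm_smul, Real.norm_of_nonneg hh.le,
            Real.norm_of_nonneg (by positivity)]
          ring
      _ ≤ h * (L * (‖z‖ + 1) + γ * ‖z‖) := by
          gcongr
          exacts [(hF.growth _).trans (by gcongr; exact norm_fst_le z), norm_snd_le z]
      _ ≤ h * ((1 + L + γ) * (1 + ‖z‖)) := by
          gcongr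
          linarith [norm_nonneg z]

lemma one_add_norm_step_le (hF : DissipativeField F L m B) (hγ : 0 < γ) (hh : 0 < h)
    (hh₁ : h ≤ 1) (z : E × E) (ξ : E) :
    1 + ‖step F γ h z ξ‖ ≤ (2 + L + γ) * (1 + ‖z‖) + √(2 * γ) * ‖ξ‖ := by
  have triangle : ‖step F γ h z ξ‖
      ≤ ‖step F γ h z ξ - step F γ h z 0‖ + ‖step F γ h z 0 - z‖ + ‖z‖ := by
    simpa using norm_add₃_le (a := step F γ h z ξ - step F γ h z 0) (b := step F γ h z 0 - z)
      (c := z)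
  have drift : h * ((1 + L + γ) * (1 + ‖z‖)) ≤ 1 * ((1 + L + γ) * (1 + ‖z‖)) := by
    have := hF.L_pos
    gcongr
  have noise : √(2 * γ * h) * ‖ξ‖ ≤ √(2 * γ) * ‖ξ‖ := by
    exact mul_le_mul_of_nonneg_right
      (Real.sqrt_le_sqrt (mul_le_of_le_one_right (by positivity) hh₁)) (norm_nonneg ξ)
  rw [norm_step_sub_step_zero] at triangle
  linarith [norm_step_zero_sub_le hF hγ hh z]

lemma one_add_norm_step_sq_le (hF : DissipativeField F L m B) (hγ : 0 < γ) (hh : 0 < h)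
    (hh₁ : h ≤ 1) (z : E × E) (ξ : E) : 1 + ‖step F γ h z ξ‖ ^ 2
      ≤ (4 * (2 + L + γ) ^ 2 + 4 * γ) * (1 + ‖z‖ ^ 2) * (1 + ‖ξ‖ ^ 2) := by
  have hL := hF.L_pos
  set K := 2 + L + γ
  calc 1 + ‖step F γ h z ξ‖ ^ 2 ≤ (1 + ‖step F γ h z ξ‖) ^ 2 := by
        linarith [norm_nonneg (step F γ h z ξ), add_sq 1 ‖step F γ h z ξ‖]
    _ ≤ (K * (1 + ‖z‖) + √(2 * γ) * ‖ξ‖) ^ 2 := by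
        exact pow_le_pow_left₀ (by positivity) (one_add_norm_step_le hF hγ hh hh₁ z ξ) 2
    _ ≤ 2 * ((K * (1 + ‖z‖)) ^ 2 + (√(2 * γ) * ‖ξ‖) ^ 2) := add_sq_le
    _ = 2 * K ^ 2 * (1 + ‖z‖) ^ 2 + 4 * γ * ‖ξ‖ ^ 2 := by
        rw [mul_pow, mul_pow, Real.sq_sqrt (by positivity)]
        ring
    _ ≤ 2 * K ^ 2 * (2 * (1 ^ 2 + ‖z‖ ^ 2)) + 4 * γ * ‖ξ‖ ^ 2 := by
        gcongr
        exact add_sq_le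
    _ ≤ (4 * K ^ 2 + 4 * γ) * (1 + ‖z‖ ^ 2) * (1 + ‖ξ‖ ^ 2) := by
        have : 0 ≤ K ^ 2 * (1 + ‖z‖ ^ 2) * ‖ξ‖ ^ 2 := by positivity
        have : 0 ≤ γ * (1 + ‖z‖ ^ 2) := by positivity
        have : 0 ≤ γ * ‖z‖ ^ 2 * ‖ξ‖ ^ 2 := by positivity
        linarith

lemma norm_step_sub_step_le (hF : DissipativeField F L m B) (hγ : 0 < γ) (hh : 0 < h)
    (z z' : E × E) (ξ : E) :
    ‖step F γ h z ξ - step F γ h z' ξ‖ ≤ (1 + (1 + L + γ) * h) * ‖z - z'‖ := by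
  have hL := hF.L_pos
  have norm_fst : ‖z.1 - z'.1‖ ≤ ‖z - z'‖ := norm_fst_le (z - z')
  have norm_snd : ‖z.2 - z'.2‖ ≤ ‖z - z'‖ := norm_snd_le (z - z')
  have hr := mul_nonneg hh.le (norm_nonneg (z - z'))
  rw [step_sub_step]
  refine max_le ?_ ?_
  · calc _ ≤ ‖z.1 - z'.1‖ + h * ‖z.2 - z'.2‖ :=
          (norm_add_le _ _).trans_eq (by rw [norm_smul, Real.norm_of_nonneg hh.le])
      _ ≤ ‖z - z'‖ + h * ‖z - z'‖ := by gcongr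
      _ ≤ _ := by nlinarith
  · calc _ ≤ ‖z.2 - z'.2‖ + h * ‖F z.1 - F z'.1‖ + γ * h * ‖z.2 - z'.2‖ := by
          refine (norm_sub_le _ _).trans (add_le_add ((norm_sub_le _ _).trans_eq ?_) (le_of_eq ?_))
          · rw [norm_smul, Real.norm_of_nonneg hh.le]
          · rw [norm_smul, Real.norm_of_nonneg (by positivity)]
      _ ≤ ‖z - z'‖ + h * (L * ‖z - z'‖) + γ * h * ‖z - z'‖ := by
          gcongr
          exact (hF.lipschitz _ _).trans (by gcongr)
      _ ≤ _ := by linarith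

lemma abs_comp_step_le (hF : DissipativeField F L m B) (hγ : 0 < γ) (hh : 0 < h) (hh₁ : h ≤ 1)
    {A : ℝ} (hA : 0 ≤ A) (bound : ∀ z, |g z| ≤ A * (1 + ‖z‖ ^ 2)) (z : E × E) (ξ : E) :
    |g (step F γ h z ξ)|
      ≤ A * ((4 * (2 + L + γ) ^ 2 + 4 * γ) * (1 + ‖z‖ ^ 2)) * (1 + ‖ξ‖ ^ 2) := by
  rw [mul_assoc]
  exact (bound _).trans (by gcongr; exact one_add_norm_step_sq_le hF hγ hh hh₁ z ξ)

variable [MeasurableSpace E] [BorelSpace E] [FiniteDimensional ℝ E]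

/-- The transition operator of the Euler–Maruyama chain. -/
noncomputable def transition (F : E → E) (γ h : ℝ) (g : E × E → ℝ) (z : E × E) : ℝ :=
  ∫ ξ, g (step F γ h z ξ) ∂stdGaussian E

lemma measurable_uncurry_step (hF : DissipativeField F L m B) :
    Measurable fun p : (E × E) × E ↦ step F γ h p.1 p.2 := by
  have := hF.continuous.measurable
  unfold step
  fun_prop

lemma measurable_step (hF : DissipativeField F L m B) (z : E × E) :
    Measurable (step F γ h z) :=
  (measurable_uncurry_step hF).comp measurable_prodMk_left

variable (E) in
lemma integrable_one_add_norm_sq_stdGaussian :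
    Integrable (fun ξ : E ↦ 1 + ‖ξ‖ ^ 2) (stdGaussian E) :=
  (integrable_const 1).add (integrable_norm_pow_stdGaussian 2)

lemma QuadGrowth.integrable_step (hg : QuadGrowth g) (hF : DissipativeField F L m B) (hγ : 0 < γ)
    (hh : 0 < h) (hh₁ : h ≤ 1) (z : E × E) :
    Integrable (fun ξ ↦ g (step F γ h z ξ)) (stdGaussian E) := by
  obtain ⟨A, hA, bound⟩ := hg.exists_nonneg_bound
  exact ((integrable_one_add_norm_sq_stdGaussian E).const_mul _).mono'
    (hg.1.comp (measurable_step hF z)).aestronglyMeasurable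
    (.of_forall (abs_comp_step_le hF hγ hh hh₁ hA bound z))

lemma quadGrowth_transition (hF : DissipativeField F L m B) (hγ : 0 < γ) (hh : 0 < h)
    (hh₁ : h ≤ 1) (hg : QuadGrowth g) : QuadGrowth (transition F γ h g) := by
  have : StronglyMeasurable fun p : (E × E) × E ↦ g (step F γ h p.1 p.2) :=
    (hg.1.comp (measurable_uncurry_step hF)).stronglyMeasurable
  obtain ⟨A, hA, bound⟩ := hg.exists_nonneg_bound
  refine ⟨this.integral_prod_right.measurable,
    A * (4 * (2 + L + γ) ^ 2 + 4 * γ) * ∫ ξ : E, (1 + ‖ξ‖ ^ 2) ∂stdGaussian E, fun z ↦ ?_⟩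
  calc |transition F γ h g z| ≤ ∫ ξ, |g (step F γ h z ξ)| ∂stdGaussian E :=
        abs_integral_le_integral_abs
    _ ≤ ∫ ξ : E, A * ((4 * (2 + L + γ) ^ 2 + 4 * γ) * (1 + ‖z‖ ^ 2)) * (1 + ‖ξ‖ ^ 2)
          ∂stdGaussian E :=
        integral_mono (hg.integrable_step hF hγ hh hh₁ z).abs
          ((integrable_one_add_norm_sq_stdGaussian E).const_mul _)
          (abs_comp_step_le hF hγ hh hh₁ hA bound z)
    _ = _ := by
        rw [integral_const_mul]
        ring

lemma isMarkovOperator_transition (hF : DissipativeField F L m B) (hγ : 0 < γ) (hh : 0 < h)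
    (hh₁ : h ≤ 1) : IsMarkovOperator (transition F γ h) where
  quadGrowth := quadGrowth_transition hF hγ hh hh₁
  linear hf hg a b z := by
    unfold transition
    rw [integral_add ((hf.integrable_step hF hγ hh hh₁ z).const_mul a)
      ((hg.integrable_step hF hγ hh hh₁ z).const_mul b), integral_const_mul, integral_const_mul]
  mono hf hg hfg z := integral_mono (hf.integrable_step hF hγ hh hh₁ z)
    (hg.integrable_step hF hγ hh hh₁ z) fun _ ↦ hfg _
  const c z := by simp [transition]

lemma abs_transition_sub_transition_le (hF : DissipativeField F L m B) (hγ : 0 < γ) (hh : 0 < h)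
    (hh₁ : h ≤ 1) {l : ℝ} (hl : 0 ≤ l) (lipschitz : ∀ z z', |g z - g z'| ≤ l * ‖z - z'‖)
    (z z' : E × E) : |transition F γ h g z - transition F γ h g z'|
      ≤ l * (1 + (1 + L + γ) * h) * ‖z - z'‖ := by
  have hg := QuadGrowth.of_lipschitz hl lipschitz
  have hz := hg.integrable_step hF hγ hh hh₁ z
  have hz' := hg.integrable_step hF hγ hh hh₁ z'
  calc |transition F γ h g z - transition F γ h g z'|
      ≤ ∫ ξ, |g (step F γ h z ξ) - g (step F γ h z' ξ)| ∂stdGaussian E := by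
        rw [transition, transition, ← integral_sub hz hz']
        exact abs_integral_le_integral_abs
    _ ≤ ∫ _ : E, l * (1 + (1 + L + γ) * h) * ‖z - z'‖ ∂stdGaussian E := by
        refine integral_mono (hz.sub hz').abs (integrable_const _) fun ξ ↦ ?_
        refine (lipschitz _ _).trans ?_
        rw [mul_assoc]
        gcongr
        exact norm_step_sub_step_le hF hγ hh z z' ξ
    _ = _ := by simp

lemma abs_iterate_transition_sub_le (hF : DissipativeField F L m B) (hγ : 0 < γ) (hh : 0 < h)
    (hh₁ : h ≤ 1) {l : ℝ} (hl : 0 ≤ l) (lipschitz : ∀ z z', |g z - g z'| ≤ l * ‖z - z'‖) (n : ℕ)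
    (z z' : E × E) : |(transition F γ h)^[n] g z - (transition F γ h)^[n] g z'|
      ≤ l * (1 + (1 + L + γ) * h) ^ n * ‖z - z'‖ := by
  have hL := hF.L_pos
  induction n generalizing z z' with
  | zero => simpa using lipschitz z z'
  | succ n ih =>
    rw [Function.iterate_succ_apply', pow_succ, ← mul_assoc]
    exact abs_transition_sub_transition_le hF hγ hh hh₁ (by positivity) ih z z'

end Chain

/-! ### The Lyapunov function -/

section Lyapunov

variable {E : Type*} [NormedAddCommGroup E] [InnerProductSpace ℝ E]

/-- The quadratic Lyapunov function; the coefficients are chosen so that the `⟪x, v⟫` terms in its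
drift along the Langevin dynamics cancel. -/
noncomputable def lyapunov (γ : ℝ) (z : E × E) : ℝ :=
  1 + (γ * ‖z.1‖ ^ 2 + 2 * inner ℝ z.1 z.2 + 2 / γ * ‖z.2‖ ^ 2)

variable {F : E → E} {L m B γ h : ℝ}

lemma le_lyapunov (hγ : 0 < γ) (z : E × E) :
    1 + min (γ / 3) (1 / (2 * γ)) * ‖z‖ ^ 2 ≤ lyapunov γ z := by
  have cauchy_schwarz := (abs_le.1 (abs_real_inner_le_norm z.1 z.2)).1
  have square : 0 ≤ 2 / (3 * γ) * (γ * ‖z.1‖ - 3 / 2 * ‖z.2‖) ^ 2 := by positivity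
  have square_eq : 2 / (3 * γ) * (γ * ‖z.1‖ - 3 / 2 * ‖z.2‖) ^ 2
      = 2 / 3 * γ * ‖z.1‖ ^ 2 - 2 * (‖z.1‖ * ‖z.2‖) + (2 / γ - 1 / (2 * γ)) * ‖z.2‖ ^ 2 := by
    field_simp
    ring
  calc 1 + min (γ / 3) (1 / (2 * γ)) * ‖z‖ ^ 2
      ≤ 1 + (min (γ / 3) (1 / (2 * γ)) * ‖z.1‖ ^ 2
          + min (γ / 3) (1 / (2 * γ)) * ‖z.2‖ ^ 2) := by
        rw [← mul_add]
        gcongr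
        exact norm_sq_le_norm_fst_sq_add_norm_snd_sq z
    _ ≤ 1 + (γ / 3 * ‖z.1‖ ^ 2 + 1 / (2 * γ) * ‖z.2‖ ^ 2) := by
        gcongr
        exacts [min_le_left _ _, min_le_right _ _]
    _ ≤ lyapunov γ z := by
        rw [lyapunov]
        linarith

lemma lyapunov_le (hγ : 0 < γ) (z : E × E) :
    lyapunov γ z ≤ 1 + (2 * γ + 3 / γ) * (‖z.1‖ ^ 2 + ‖z.2‖ ^ 2) := by
  have cauchy_schwarz := (abs_le.1 (abs_real_inner_le_norm z.1 z.2)).2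
  have square : 0 ≤ 1 / γ * (γ * ‖z.1‖ - ‖z.2‖) ^ 2 := by positivity
  have square_eq : 1 / γ * (γ * ‖z.1‖ - ‖z.2‖) ^ 2
      = γ * ‖z.1‖ ^ 2 - 2 * (‖z.1‖ * ‖z.2‖) + (3 / γ - 2 / γ) * ‖z.2‖ ^ 2 := by
    field_simp
    ring
  have : 0 ≤ 3 / γ * ‖z.1‖ ^ 2 := by positivity
  have : 0 ≤ γ * ‖z.2‖ ^ 2 := by positivity
  rw [lyapunov]
  linarith

lemma lyapunov_le_norm_sq (hγ : 0 < γ) (z : E × E) :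
    lyapunov γ z ≤ (1 + 2 * (2 * γ + 3 / γ)) * (1 + ‖z‖ ^ 2) := by
  have hk : 0 < 2 * γ + 3 / γ := by positivity
  have := mul_le_mul_of_nonneg_left (norm_fst_sq_add_norm_snd_sq_le z) hk.le
  linarith [lyapunov_le hγ z, sq_nonneg ‖z‖]

lemma one_le_lyapunov (hγ : 0 < γ) (z : E × E) : 1 ≤ lyapunov γ z :=
  (le_add_of_nonneg_right (by positivity)).trans (le_lyapunov hγ z)

lemma lyapunov_step_zero (hγ : 0 < γ) (z : E × E) :
    lyapunov γ (step F γ h z 0) = lyapunov γ z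
      + h * (-2 * ‖z.2‖ ^ 2 - 2 * inner ℝ z.1 (F z.1) - 4 / γ * inner ℝ z.2 (F z.1))
      + h ^ 2 * (γ * ‖z.2‖ ^ 2 - 2 * inner ℝ z.2 (F z.1 + γ • z.2)
        + 2 / γ * ‖F z.1 + γ • z.2‖ ^ 2) := by
  obtain ⟨x, v⟩ := z
  have step_eq : step F γ h (x, v) 0 = (x + h • v, v - h • (F x + γ • v)) := by
    simp only [step, smul_zero, add_zero, smul_add, smul_smul]
    rw [mul_comm h γ, sub_sub]
  rw [step_eq]
  simp only [lyapunov, inner_add_left, inner_sub_right, inner_add_right, norm_sub_sq_real,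
    norm_add_sq_real, inner_smul_left, inner_smul_right, norm_smul, mul_pow, Real.norm_eq_abs,
    sq_abs, conj_trivial, real_inner_self_eq_norm_sq, real_inner_comm v]
  field_simp
  ring

/- `a`, `b` stand for `‖x‖`, `‖v‖` and `xF`, `vF` for the inner products with the force. The
friction `γ` is large enough for the `vF` term to be absorbed by the two negative ones. -/
lemma first_order_drift_le {a b xF vF : ℝ} (hL : 0 < L) (hm : 0 < m) (hγ : 0 < γ)
    (hLγ : 4 * L ≤ γ) (hLm : 4 * L ≤ γ * m) (hb : 0 ≤ b) (dissipative : m * a ^ 2 - B * a ≤ xF)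
    (abs_vF : |vF| ≤ b * (L * (a + 1))) :
    -2 * b ^ 2 - 2 * xF - 4 / γ * vF
      ≤ -(min 1 m) * (a ^ 2 + b ^ 2) + (1 / 2 + 2 * B ^ 2 / m) := by
  set r := 4 * L / γ with hr
  have hr₀ : 0 ≤ r := by positivity
  have hr₁ : r ≤ 1 := (div_le_one hγ).2 hLγ
  have hrm : r ≤ m := by rwa [hr, div_le_iff₀' hγ]
  have cross : -(4 / γ * vF) ≤ r * (b * a) + r * b := by
    have := mul_le_mul_of_nonneg_left (neg_le.1 (abs_le.1 abs_vF).1) (by positivity : 0 ≤ 4 / γ)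
    calc -(4 / γ * vF) ≤ 4 / γ * (b * (L * (a + 1))) := by linarith
      _ = _ := by rw [hr]; ring
  have quadratic : r * (b * a) ≤ m * a ^ 2 / 2 + b ^ 2 / 2 := by
    have := mul_le_mul_of_nonneg_left (two_mul_le_add_sq b a) hr₀
    have := mul_le_mul_of_nonneg_right hrm (sq_nonneg a)
    have := mul_le_mul_of_nonneg_right hr₁ (sq_nonneg b)
    linarith
  have linear : r * b ≤ b ^ 2 / 2 + 1 / 2 := by
    have := mul_le_mul_of_nonneg_right hr₁ hb
    linarith [two_mul_le_add_sq b 1]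
  have young : 2 * B * a ≤ m * a ^ 2 / 2 + 2 * B ^ 2 / m := by
    have square : 0 ≤ 1 / (2 * m) * (m * a - 2 * B) ^ 2 := by positivity
    have square_eq : 1 / (2 * m) * (m * a - 2 * B) ^ 2
        = m * a ^ 2 / 2 + 2 * B ^ 2 / m - 2 * B * a := by
      field_simp
      ring
    linarith
  have := mul_le_mul_of_nonneg_right (min_le_right 1 m) (sq_nonneg a)
  have := mul_le_mul_of_nonneg_right (min_le_left 1 m) (sq_nonneg b)
  linarith

lemma second_order_drift_le {a b r vr : ℝ} (hγ : 0 < γ) (hr : 0 ≤ r)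
    (r_le : r ≤ L * (a + 1) + γ * b) (abs_vr : |vr| ≤ b * r) :
    γ * b ^ 2 - 2 * vr + 2 / γ * r ^ 2
      ≤ (γ + 1 + (1 + 2 / γ) * (4 * L ^ 2 + 2 * γ ^ 2)) * (1 + (a ^ 2 + b ^ 2)) := by
  have r_sq_le : r ^ 2 ≤ (4 * L ^ 2 + 2 * γ ^ 2) * (1 + (a ^ 2 + b ^ 2)) := by
    calc r ^ 2 ≤ (L * (a + 1) + γ * b) ^ 2 := pow_le_pow_left₀ hr r_le 2
      _ ≤ 2 * ((L * (a + 1)) ^ 2 + (γ * b) ^ 2) := add_sq_le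
      _ = L ^ 2 * (2 * (a + 1) ^ 2) + 2 * γ ^ 2 * b ^ 2 := by ring
      _ ≤ L ^ 2 * (2 * (2 * (a ^ 2 + 1 ^ 2))) + 2 * γ ^ 2 * b ^ 2 := by
          gcongr
          exact add_sq_le
      _ ≤ _ := by
          have : 0 ≤ L ^ 2 * b ^ 2 := by positivity
          have : 0 ≤ γ ^ 2 * (1 + a ^ 2) := by positivity
          linarith
  have scaled := mul_le_mul_of_nonneg_left r_sq_le (by positivity : 0 ≤ 1 + 2 / γ)
  have : 0 ≤ (γ + 1) * (1 + a ^ 2) := by positivity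
  linarith [neg_le.1 (abs_le.1 abs_vr).1, two_mul_le_add_sq b r]

lemma lyapunov_step_zero_le (hF : DissipativeField F L m B) (hγ : 0 < γ) (hLγ : 4 * L ≤ γ)
    (hLm : 4 * L ≤ γ * m) (hh : 0 < h) (z : E × E) :
    lyapunov γ (step F γ h z 0) ≤ lyapunov γ z
      + h * (-(min 1 m) * (‖z.1‖ ^ 2 + ‖z.2‖ ^ 2) + (1 / 2 + 2 * B ^ 2 / m))
      + h ^ 2 * ((γ + 1 + (1 + 2 / γ) * (4 * L ^ 2 + 2 * γ ^ 2))
        * (1 + (‖z.1‖ ^ 2 + ‖z.2‖ ^ 2))) := by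
  obtain ⟨x, v⟩ := z
  rw [lyapunov_step_zero hγ]
  gcongr
  · exact first_order_drift_le hF.L_pos hF.m_pos hγ hLγ hLm (norm_nonneg v) (hF.dissipative x)
      ((abs_real_inner_le_norm v (F x)).trans
        (mul_le_mul_of_nonneg_left (hF.growth x) (norm_nonneg _)))
  · refine second_order_drift_le hγ (norm_nonneg _) ?_ (abs_real_inner_le_norm v _)
    calc ‖F x + γ • v‖ ≤ ‖F x‖ + ‖γ • v‖ := norm_add_le _ _
      _ ≤ L * (‖x‖ + 1) + γ * ‖v‖ := by
          rw [norm_smul, Real.norm_of_nonneg hγ.le]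
          gcongr
          exact hF.growth x

variable [MeasurableSpace E] [BorelSpace E] [FiniteDimensional ℝ E]

lemma measurable_lyapunov : Measurable (lyapunov γ : E × E → ℝ) := by
  unfold lyapunov
  fun_prop

lemma quadGrowth_lyapunov (hγ : 0 < γ) : QuadGrowth (lyapunov γ : E × E → ℝ) := by
  refine ⟨measurable_lyapunov, 1 + 2 * (2 * γ + 3 / γ), fun z ↦ ?_⟩
  rw [abs_of_nonneg (zero_le_one.trans (one_le_lyapunov hγ z))]
  exact lyapunov_le_norm_sq hγ z

lemma transition_lyapunov (hγ : 0 < γ) (hh : 0 < h) (z : E × E) :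
    transition F γ h (lyapunov γ) z
      = lyapunov γ (step F γ h z 0) + 4 * h * ∫ ξ : E, ‖ξ‖ ^ 2 ∂stdGaussian E := by
  set σ := √(2 * γ * h)
  have hσ : σ ^ 2 = 2 * γ * h := Real.sq_sqrt (by positivity)
  set y := step F γ h z 0
  have step_eq (ξ : E) : step F γ h z ξ = y + (0, σ • ξ) := step_eq_add z ξ
  have expand (ξ : E) : lyapunov γ (step F γ h z ξ) = lyapunov γ y
      + inner ℝ ((2 * σ) • y.1 + (4 / γ * σ) • y.2) ξ + 4 * h * ‖ξ‖ ^ 2 := by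
    rw [step_eq]
    simp only [lyapunov, Prod.fst_add, Prod.snd_add, add_zero, inner_add_left, inner_add_right,
      norm_add_sq_real, inner_smul_left, inner_smul_right, norm_smul, mul_pow, Real.norm_eq_abs,
      sq_abs, hσ, conj_trivial]
    field_simp
    ring
  have integrable_affine : Integrable (fun ξ ↦ lyapunov γ y
      + inner ℝ ((2 * σ) • y.1 + (4 / γ * σ) • y.2) ξ) (stdGaussian E) :=
    (integrable_const _).add (integrable_inner_stdGaussian _)
  simp_rw [transition, expand]
  rw [integral_add integrable_affine ((integrable_norm_pow_stdGaussian 2).const_mul _),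
    integral_add (integrable_const _) (integrable_inner_stdGaussian _),
    integral_inner_stdGaussian, integral_const_mul]
  simp

lemma exists_transition_lyapunov_le (hF : DissipativeField F L m B) (hγ : 0 < γ)
    (hLγ : 4 * L ≤ γ) (hLm : 4 * L ≤ γ * m) :
    ∃ c > 0, ∃ K > 0, ∃ h₀ > 0, h₀ ≤ 1 ∧ ∀ h, 0 < h → h ≤ h₀ → c * h ≤ 1 ∧
      ∀ z, transition F γ h (lyapunov γ) z ≤ (1 - c * h) * lyapunov γ z + c * h * K := by
  have hL := hF.L_pos
  have hm := hF.m_pos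
  set p := min 1 m
  have hp : 0 < p := lt_min one_pos hm
  set K₂ := γ + 1 + (1 + 2 / γ) * (4 * L ^ 2 + 2 * γ ^ 2)
  have : 0 < K₂ := by positivity
  set K₁ := 1 / 2 + 2 * B ^ 2 / m
  have hK₁ : 0 < K₁ := by positivity
  set A := 2 * γ + 3 / γ
  have hA : 0 < A := by positivity
  set M := ∫ ξ : E, ‖ξ‖ ^ 2 ∂stdGaussian E
  have hM : 0 ≤ M := integral_nonneg fun ξ ↦ by positivity
  set c := p / (2 * A) with hc_def
  have hc : 0 < c := by positivity
  have hcA : c * A = p / 2 := by rw [hc_def]; field_simp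
  refine ⟨c, hc, (K₁ + p / 2 + c + 4 * M) / c, by positivity,
    min 1 (min (p / (2 * K₂)) (1 / c)), by positivity, min_le_left _ _,
    fun h hh hh₀ ↦ ⟨?_, fun z ↦ ?_⟩⟩
  · exact (le_div_iff₀' hc).1 (hh₀.trans ((min_le_right _ _).trans (min_le_right _ _)))
  have hh₂ : h * (2 * K₂) ≤ p := (le_div_iff₀ (by positivity)).1
    (hh₀.trans ((min_le_right _ _).trans (min_le_left _ _)))
  rw [transition_lyapunov hγ hh]
  set s := ‖z.1‖ ^ 2 + ‖z.2‖ ^ 2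
  have step_le : lyapunov γ (step F γ h z 0)
      ≤ lyapunov γ z + h * (-p * s + K₁) + h ^ 2 * (K₂ * (1 + s)) :=
    lyapunov_step_zero_le hF hγ hLγ hLm hh z
  have upper : c * h * lyapunov γ z ≤ c * h * (1 + A * s) :=
    mul_le_mul_of_nonneg_left (lyapunov_le hγ z) (mul_pos hc hh).le
  have second_order : h ^ 2 * (K₂ * (1 + s)) ≤ h * (p / 2) * (1 + s) := by
    have : h * (1 + s) * (h * (2 * K₂)) ≤ h * (1 + s) * p := by gcongr
    linarith
  have constant : c * h * ((K₁ + p / 2 + c + 4 * M) / c) = h * (K₁ + p / 2 + c + 4 * M) := by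
    field_simp
  have slope : c * h * (1 + A * s) = c * h + h * (p / 2) * s := by
    rw [← hcA]
    ring
  change lyapunov γ (step F γ h z 0) + 4 * h * M ≤ _
  linarith

end Lyapunov

/-! ### Bridges -/

section Bridge

variable {E : Type*} [SeminormedAddCommGroup E] [NormedSpace ℝ E] {h r : ℝ} {n k : ℕ}

/-- A path of displacements in phase space which vanishes after `n` time steps, has size at most `ρ`
and acceleration at most `ρ`. -/
structure IsBridge (n : ℕ) (h ρ : ℝ) (D V : ℕ → E) : Prop where
  position_last : D n = 0
  velocity_last : V n = 0
  position_succ : ∀ k, D (k + 1) = D k + h • V k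
  norm_position_le : ∀ k < n, ‖D k‖ ≤ ρ
  norm_velocity_le : ∀ k < n, ‖V k‖ ≤ ρ
  norm_velocity_succ_sub_le : ∀ k < n, ‖V (k + 1) - V k‖ ≤ h * ρ

/-- Linear interpolation from `e` at time `0` to `0` at time `n`, corrected by the parabola
`k (n - k)` in the direction `w`. -/
noncomputable def bridgeVelocity (n : ℕ) (e w : E) (k : ℕ) : E :=
  (1 - (k : ℝ) / n) • e + ((k : ℝ) * (n - k)) • w

/-- The displacement which starts from `d` and has velocity `bridgeVelocity n e w`. -/
noncomputable def bridgePosition (n : ℕ) (h : ℝ) (d e w : E) (k : ℕ) : E :=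
  d + h • ∑ i ∈ Finset.range k, bridgeVelocity n e w i

/-- The direction of the parabolic correction for which the final displacement vanishes. -/
noncomputable def bridgeDirection (n : ℕ) (h : ℝ) (d e : E) : E :=
  (-(6 / (h * n * ((n : ℝ) ^ 2 - 1)))) • (d + (h * ((n : ℝ) + 1) / 2) • e)

lemma sum_bridgeVelocity (hn : n ≠ 0) (e w : E) (k : ℕ) :
    ∑ i ∈ Finset.range k, bridgeVelocity n e w i
      = ((k : ℝ) - k * (k - 1) / (2 * n)) • e
        + ((n : ℝ) * (k * (k - 1)) / 2 - (k - 1) * k * (2 * k - 1) / 6) • w := by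
  induction k with
  | zero => simp
  | succ k ih =>
    rw [Finset.sum_range_succ, ih, bridgeVelocity, add_add_add_comm, ← add_smul, ← add_smul]
    push_cast
    congr 2
    · field_simp
      ring
    · ring

lemma one_lt_cast_sq (hn : 2 ≤ n) : (1 : ℝ) < (n : ℝ) ^ 2 :=
  one_lt_pow₀ (by exact_mod_cast hn) two_ne_zero

lemma bridgePosition_last (hn : 2 ≤ n) (hh : h ≠ 0) (d e : E) :
    bridgePosition n h d e (bridgeDirection n h d e) n = 0 := by
  have hn₀ : n ≠ 0 := by lia
  have hn₁ : (n : ℝ) ^ 2 - 1 ≠ 0 := (sub_pos.2 (one_lt_cast_sq hn)).ne'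
  have coeff_direction : h * ((n : ℝ) * (n * (n - 1)) / 2 - (n - 1) * n * (2 * n - 1) / 6)
      * -(6 / (h * n * ((n : ℝ) ^ 2 - 1))) = -1 := by
    field_simp
    ring
  have coeff_velocity : h * ((n : ℝ) - n * (n - 1) / (2 * n)) = h * ((n : ℝ) + 1) / 2 := by
    field_simp
    ring
  rw [bridgePosition, sum_bridgeVelocity hn₀, bridgeDirection, smul_add, smul_smul h, smul_smul h,
    smul_smul, coeff_direction, coeff_velocity]
  simp

lemma norm_bridgeDirection_le (hn : 2 ≤ n) (hh : 0 < h) (hnh₁ : 1 ≤ n * h) (hnh₂ : n * h ≤ 2)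
    {d e : E} (hd : ‖d‖ ≤ r) (he : ‖e‖ ≤ r) :
    (n : ℝ) ^ 2 * ‖bridgeDirection n h d e‖ ≤ 36 * r := by
  have two_le : (2 : ℝ) ≤ n := by exact_mod_cast hn
  have hq : 0 < (n : ℝ) ^ 2 - 1 := sub_pos.2 (one_lt_cast_sq hn)
  have coeff_le : 6 / (h * n * ((n : ℝ) ^ 2 - 1)) ≤ 12 / (n : ℝ) ^ 2 := by
    rw [div_le_div_iff₀ (by positivity) (by positivity)]
    have := mul_le_mul_of_nonneg_right hnh₁ hq.le
    nlinarith
  have vector_le : ‖d + (h * ((n : ℝ) + 1) / 2) • e‖ ≤ 3 * r := by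
    have half_time_le : h * ((n : ℝ) + 1) / 2 ≤ 2 := by nlinarith
    calc ‖d + (h * ((n : ℝ) + 1) / 2) • e‖ ≤ ‖d‖ + h * ((n : ℝ) + 1) / 2 * ‖e‖ := by
          refine (norm_add_le _ _).trans_eq ?_
          rw [norm_smul, Real.norm_of_nonneg (by positivity)]
      _ ≤ r + 2 * r := by gcongr
      _ = 3 * r := by ring
  rw [bridgeDirection, norm_smul, norm_neg, Real.norm_of_nonneg (by positivity)]
  calc (n : ℝ) ^ 2 * (6 / (h * n * ((n : ℝ) ^ 2 - 1)) * ‖d + (h * ((n : ℝ) + 1) / 2) • e‖)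
      ≤ (n : ℝ) ^ 2 * (12 / (n : ℝ) ^ 2 * (3 * r)) := by gcongr
    _ = 36 * r := by
        field_simp
        ring

lemma norm_bridgeVelocity_le (hn : n ≠ 0) {e w : E} (he : ‖e‖ ≤ r)
    (hw : (n : ℝ) ^ 2 * ‖w‖ ≤ 36 * r) (hk : k ≤ n) : ‖bridgeVelocity n e w k‖ ≤ 10 * r := by
  have hk' : (k : ℝ) ≤ n := by exact_mod_cast hk
  have hkn : (k : ℝ) / n ≤ 1 := (div_le_one (by positivity)).2 hk'
  have : (0 : ℝ) ≤ k / n := by positivity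
  have parabola_le : (k : ℝ) * (n - k) ≤ (n : ℝ) ^ 2 / 4 := by
    linarith [sq_nonneg ((n : ℝ) - 2 * k)]
  have parabola_nonneg : 0 ≤ (k : ℝ) * (n - k) := mul_nonneg k.cast_nonneg (sub_nonneg.2 hk')
  calc ‖bridgeVelocity n e w k‖ ≤ (1 - (k : ℝ) / n) * ‖e‖ + (k : ℝ) * (n - k) * ‖w‖ := by
        refine (norm_add_le _ _).trans_eq ?_
        rw [norm_smul, norm_smul, Real.norm_of_nonneg (sub_nonneg.2 hkn),
          Real.norm_of_nonneg parabola_nonneg]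
    _ ≤ 1 * r + (n : ℝ) ^ 2 / 4 * ‖w‖ := by
        gcongr
        linarith
    _ ≤ 10 * r := by linarith

lemma norm_bridgeVelocity_succ_sub_le (hn : n ≠ 0) (hh : 0 < h) (hnh₁ : 1 ≤ n * h) {e w : E}
    (he : ‖e‖ ≤ r) (hw : (n : ℝ) ^ 2 * ‖w‖ ≤ 36 * r) (hk : k < n) :
    ‖bridgeVelocity n e w (k + 1) - bridgeVelocity n e w k‖ ≤ h * (37 * r) := by
  have hk' : (k : ℝ) + 1 ≤ n := by exact_mod_cast hk
  have increment : bridgeVelocity n e w (k + 1) - bridgeVelocity n e w k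
      = (-(1 / (n : ℝ))) • e + ((n : ℝ) - 2 * k - 1) • w := by
    rw [bridgeVelocity, bridgeVelocity, add_sub_add_comm, ← sub_smul, ← sub_smul]
    push_cast
    congr 2
    · field_simp
      ring
    · ring
  have coeff_le : |(n : ℝ) - 2 * k - 1| ≤ n := by
    rw [abs_le]
    constructor <;> linarith [k.cast_nonneg (α := ℝ)]
  have inv_le : 1 / (n : ℝ) ≤ h := (div_le_iff₀' (by positivity)).2 hnh₁
  calc ‖bridgeVelocity n e w (k + 1) - bridgeVelocity n e w k‖
      ≤ 1 / (n : ℝ) * ‖e‖ + |(n : ℝ) - 2 * k - 1| * ‖w‖ := by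
        rw [increment]
        refine (norm_add_le _ _).trans_eq ?_
        rw [norm_smul, norm_smul, norm_neg, Real.norm_of_nonneg (by positivity), Real.norm_eq_abs]
    _ ≤ 1 / (n : ℝ) * ‖e‖ + n * ‖w‖ := by gcongr
    _ = 1 / (n : ℝ) * (‖e‖ + (n : ℝ) ^ 2 * ‖w‖) := by field_simp
    _ ≤ h * (r + 36 * r) := by gcongr
    _ = h * (37 * r) := by ring

lemma isBridge (hn : 2 ≤ n) (hh : 0 < h) (hnh₁ : 1 ≤ n * h) (hnh₂ : n * h ≤ 2) {d e : E}
    (hd : ‖d‖ ≤ r) (he : ‖e‖ ≤ r) :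
    IsBridge n h (37 * r) (bridgePosition n h d e (bridgeDirection n h d e))
      (bridgeVelocity n e (bridgeDirection n h d e)) := by
  have hr : 0 ≤ r := (norm_nonneg _).trans hd
  have hn₀ : n ≠ 0 := by lia
  have hw := norm_bridgeDirection_le hn hh hnh₁ hnh₂ hd he
  have velocity_le {k : ℕ} (hk : k ≤ n) := norm_bridgeVelocity_le hn₀ he hw hk
  refine ⟨bridgePosition_last hn hh.ne' d e, by simp [bridgeVelocity, hn₀],
    fun k ↦ by simp [bridgePosition, Finset.sum_range_succ, add_assoc], fun k hk ↦ ?_,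
    fun k hk ↦ (velocity_le hk.le).trans (by gcongr; norm_num),
    fun k hk ↦ norm_bridgeVelocity_succ_sub_le hn₀ hh hnh₁ he hw hk⟩
  have sum_le := norm_sum_le_of_le (Finset.range k)
    fun i hi ↦ velocity_le ((Finset.mem_range.1 hi).trans hk).le
  rw [Finset.sum_const, Finset.card_range, nsmul_eq_mul] at sum_le
  calc ‖bridgePosition n h d e (bridgeDirection n h d e) k‖
      ≤ ‖d‖ + h * ‖∑ i ∈ Finset.range k, bridgeVelocity n e (bridgeDirection n h d e) i‖ := by
        refine (norm_add_le _ _).trans_eq ?_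
        rw [norm_smul, Real.norm_of_nonneg hh.le]
    _ ≤ r + h * (k * (10 * r)) := by gcongr
    _ ≤ r + h * (n * (10 * r)) := by gcongr
    _ = r + n * h * (10 * r) := by ring
    _ ≤ r + 2 * (10 * r) := by gcongr
    _ ≤ 37 * r := by linarith

end Bridge

/-! ### The Harnack inequality -/

/-- The dimension-free Harnack inequality with power two between the points `z` and `z'`. -/
def HarnackInequality {S : Type*} [Norm S] [MeasurableSpace S] (Q : (S → ℝ) → S → ℝ) (M : ℝ)
    (z z' : S) : Prop :=
  ∀ g : S → ℝ, Measurable g → QuadGrowth (fun y ↦ g y ^ 2) → (∀ y, 0 ≤ g y) →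
    Q g z ^ 2 ≤ M * Q (fun y ↦ g y ^ 2) z'

section Harnack

variable {E : Type*} [NormedAddCommGroup E] [InnerProductSpace ℝ E] {F : E → E} {L m B γ h ρ : ℝ}

/-- The shift of the noise which makes the chain started from `z + (d, e)` move to the chain
started from `z`, displaced by `(d + h • e, e')`. -/
noncomputable def noiseShift (F : E → E) (γ h : ℝ) (z : E × E) (d e e' : E) : E :=
  (√(2 * γ * h))⁻¹ • ((e' - e) + h • (F (z.1 + d) - F z.1) + (γ * h) • e)

lemma step_add_noiseShift (hγ : 0 < γ) (hh : 0 < h) (z : E × E) (d e e' ξ : E) :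
    step F γ h (z + (d, e)) (ξ + noiseShift F γ h z d e e')
      = step F γ h z ξ + (d + h • e, e') := by
  have hσ : √(2 * γ * h) ≠ 0 := (Real.sqrt_pos.2 (by positivity)).ne'
  ext1
  · simp only [step, Prod.fst_add, Prod.snd_add, smul_add]
    abel
  · simp only [step, noiseShift, Prod.fst_add, Prod.snd_add]
    rw [smul_add (Real.sqrt _), smul_inv_smul₀ hσ]
    simp only [smul_add, smul_sub]
    abel

lemma norm_noiseShift_sq_le (hF : DissipativeField F L m B) (hγ : 0 < γ) (hh : 0 < h) (z : E × E)
    {d e e' : E} (hd : ‖d‖ ≤ ρ) (he : ‖e‖ ≤ ρ) (he' : ‖e' - e‖ ≤ h * ρ) :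
    ‖noiseShift F γ h z d e e'‖ ^ 2 ≤ h * ((1 + L + γ) ^ 2 / (2 * γ)) * ρ ^ 2 := by
  have hL := hF.L_pos
  have norm_le : ‖(e' - e) + h • (F (z.1 + d) - F z.1) + (γ * h) • e‖
      ≤ h * ((1 + L + γ) * ρ) := by
    have force_le : ‖F (z.1 + d) - F z.1‖ ≤ L * ‖d‖ := by
      simpa only [add_sub_cancel_left] using hF.lipschitz (z.1 + d) z.1
    calc ‖(e' - e) + h • (F (z.1 + d) - F z.1) + (γ * h) • e‖
        ≤ ‖e' - e‖ + h * ‖F (z.1 + d) - F z.1‖ + γ * h * ‖e‖ := by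
          refine norm_add₃_le.trans_eq ?_
          rw [norm_smul, norm_smul, Real.norm_of_nonneg hh.le,
            Real.norm_of_nonneg (mul_pos hγ hh).le]
      _ ≤ h * ρ + h * (L * ρ) + γ * h * ρ := by
          gcongr
          exact force_le.trans (by gcongr)
      _ = h * ((1 + L + γ) * ρ) := by ring
  rw [noiseShift, norm_smul, norm_inv, Real.norm_of_nonneg (Real.sqrt_nonneg _), mul_pow, inv_pow,
    Real.sq_sqrt (by positivity)]
  calc (2 * γ * h)⁻¹ * ‖(e' - e) + h • (F (z.1 + d) - F z.1) + (γ * h) • e‖ ^ 2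
      ≤ (2 * γ * h)⁻¹ * (h * ((1 + L + γ) * ρ)) ^ 2 := by gcongr
    _ = h * ((1 + L + γ) ^ 2 / (2 * γ)) * ρ ^ 2 := by field_simp

variable [MeasurableSpace E] [BorelSpace E] [FiniteDimensional ℝ E]

lemma sq_transition_le_of_shift (hF : DissipativeField F L m B) (hγ : 0 < γ) (hh : 0 < h)
    (hh₁ : h ≤ 1) {f g : E × E → ℝ} (hf : QuadGrowth f) (hg : QuadGrowth g)
    (f_nonneg : ∀ y, 0 ≤ f y) (g_nonneg : ∀ y, 0 ≤ g y) {C : ℝ} (hC : 0 ≤ C) {δ z z' : E × E}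
    (f_sq_le : ∀ y, f y ^ 2 ≤ C * g (y + δ)) {u : E}
    (shift : ∀ ξ, step F γ h z' (ξ + u) = step F γ h z ξ + δ) :
    transition F γ h f z ^ 2 ≤ C * Real.exp (‖u‖ ^ 2) * transition F γ h g z' := by
  set k : E → ℝ := fun ξ ↦ √(g (step F γ h z' ξ))
  have k_sq (ξ : E) : k ξ ^ 2 = g (step F γ h z' ξ) := Real.sq_sqrt (g_nonneg _)
  have integrable_k_sq : Integrable (fun ξ ↦ k ξ ^ 2) (stdGaussian E) := by
    simp_rw [k_sq]
    exact hg.integrable_step hF hγ hh hh₁ z'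
  obtain ⟨integrable_shift, cameron_martin⟩ := sq_integral_comp_add_right_le
    (hg.1.comp (measurable_step hF z')).sqrt integrable_k_sq u
  have transition_le : transition F γ h f z ≤ √C * ∫ ξ, k (ξ + u) ∂stdGaussian E := by
    rw [← integral_const_mul]
    refine integral_mono (hf.integrable_step hF hγ hh hh₁ z) (integrable_shift.const_mul _)
      fun ξ ↦ le_of_sq_le_sq ?_ (by positivity)
    change f (step F γ h z ξ) ^ 2 ≤ (√C * k (ξ + u)) ^ 2
    rw [mul_pow, k_sq, shift, Real.sq_sqrt hC]
    exact f_sq_le _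
  calc transition F γ h f z ^ 2 ≤ (√C * ∫ ξ, k (ξ + u) ∂stdGaussian E) ^ 2 :=
        pow_le_pow_left₀ ((isMarkovOperator_transition hF hγ hh hh₁).apply_nonneg hf f_nonneg z)
          transition_le 2
    _ = C * (∫ ξ, k (ξ + u) ∂stdGaussian E) ^ 2 := by rw [mul_pow, Real.sq_sqrt hC]
    _ ≤ C * (Real.exp (‖u‖ ^ 2) * ∫ ξ, k ξ ^ 2 ∂stdGaussian E) :=
        mul_le_mul_of_nonneg_left cameron_martin hC
    _ = C * Real.exp (‖u‖ ^ 2) * transition F γ h g z' := by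
        simp_rw [k_sq, mul_assoc]
        rfl

lemma IsBridge.sq_iterate_transition_le (hF : DissipativeField F L m B) (hγ : 0 < γ) (hh : 0 < h)
    (hh₁ : h ≤ 1) {g : E × E → ℝ} (hg : Measurable g) (hg2 : QuadGrowth fun y ↦ g y ^ 2)
    (g_nonneg : ∀ y, 0 ≤ g y) {n : ℕ} {D V : ℕ → E} (bridge : IsBridge n h ρ D V) {i j : ℕ}
    (hij : i + j = n) (z : E × E) :
    (transition F γ h)^[i] g z ^ 2
      ≤ Real.exp (i * (h * ((1 + L + γ) ^ 2 / (2 * γ)) * ρ ^ 2))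
        * (transition F γ h)^[i] (fun y ↦ g y ^ 2) (z + (D j, V j)) := by
  induction i generalizing j z with
  | zero =>
    obtain rfl : j = n := by lia
    simp [bridge.position_last, bridge.velocity_last, Prod.mk_zero_zero]
  | succ i ih =>
    have hj : j < n := by lia
    have hP := (isMarkovOperator_transition hF hγ hh hh₁).iterate i
    have hg1 := QuadGrowth.of_sq hg hg2
    have g_sq_nonneg (y : E × E) : 0 ≤ g y ^ 2 := sq_nonneg _
    rw [Function.iterate_succ_apply', Function.iterate_succ_apply']
    have one_step := sq_transition_le_of_shift hF hγ hh hh₁ (hP.quadGrowth hg1)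
      (hP.quadGrowth hg2) (hP.apply_nonneg hg1 g_nonneg) (hP.apply_nonneg hg2 g_sq_nonneg)
      (Real.exp_nonneg _) (ih (j := j + 1) (by lia)) (z := z) fun ξ ↦ by
        rw [step_add_noiseShift hγ hh, bridge.position_succ]
    refine one_step.trans ?_
    have : 0 ≤ transition F γ h ((transition F γ h)^[i] fun y ↦ g y ^ 2) (z + (D j, V j)) :=
      (isMarkovOperator_transition hF hγ hh hh₁).apply_nonneg (hP.quadGrowth hg2)
        (hP.apply_nonneg hg2 g_sq_nonneg) _
    rw [← Real.exp_add, Nat.cast_succ, add_one_mul]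
    gcongr
    exact norm_noiseShift_sq_le hF hγ hh z (bridge.norm_position_le j hj)
      (bridge.norm_velocity_le j hj) (bridge.norm_velocity_succ_sub_le j hj)

lemma exists_harnackInequality (hF : DissipativeField F L m B) (hγ : 0 < γ) :
    ∃ K > 0, ∀ h : ℝ, 0 < h → h ≤ 1 → ∀ n : ℕ, 2 ≤ n → 1 ≤ n * h → n * h ≤ 2 → ∀ z z',
      HarnackInequality (transition F γ h)^[n] (Real.exp (K * ‖z - z'‖ ^ 2)) z z' := by
  have hL := hF.L_pos
  refine ⟨2 * ((1 + L + γ) ^ 2 / (2 * γ)) * 37 ^ 2, by positivity,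
    fun h hh hh₁ n hn hnh₁ hnh₂ z z' g hg hg2 g_nonneg ↦ ?_⟩
  have bridge : IsBridge n h (37 * ‖z - z'‖) _ _ :=
    isBridge hn hh hnh₁ hnh₂ (d := (z' - z).1) (e := (z' - z).2)
      (norm_sub_rev z z' ▸ norm_fst_le _) (norm_sub_rev z z' ▸ norm_snd_le _)
  have along_bridge := bridge.sq_iterate_transition_le hF hγ hh hh₁ hg hg2 g_nonneg
    (add_zero n) z
  rw [show bridgePosition n h _ _ _ 0 = (z' - z).1 by simp [bridgePosition],
    show bridgeVelocity n (z' - z).2 _ 0 = (z' - z).2 by simp [bridgeVelocity],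
    Prod.mk.eta, add_sub_cancel] at along_bridge
  refine along_bridge.trans (mul_le_mul_of_nonneg_right (Real.exp_le_exp.2 ?_)
    (((isMarkovOperator_transition hF hγ hh hh₁).iterate n).apply_nonneg hg2
      (fun _ ↦ sq_nonneg _) z'))
  calc n * (h * ((1 + L + γ) ^ 2 / (2 * γ)) * (37 * ‖z - z'‖) ^ 2)
      = n * h * ((1 + L + γ) ^ 2 / (2 * γ)) * 37 ^ 2 * ‖z - z'‖ ^ 2 := by ring
    _ ≤ 2 * ((1 + L + γ) ^ 2 / (2 * γ)) * 37 ^ 2 * ‖z - z'‖ ^ 2 := by gcongr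

end Harnack

section HarnackConsequences

variable {S : Type*} [Norm S] [MeasurableSpace S] {Q : (S → ℝ) → S → ℝ} {g : S → ℝ} {M q : ℝ}
  {z z' : S}

lemma HarnackInequality.mono {M' : ℝ} (H : HarnackInequality Q M z z') (hQ : IsMarkovOperator Q)
    (hM : M ≤ M') : HarnackInequality Q M' z z' := fun g hg hg2 g_nonneg ↦
  (H g hg hg2 g_nonneg).trans
    (mul_le_mul_of_nonneg_right hM (hQ.apply_nonneg hg2 (fun _ ↦ sq_nonneg _) z'))

lemma HarnackInequality.sub_le (H : HarnackInequality Q M z z') (hQ : IsMarkovOperator Q)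
    (hM : 2 ≤ M) (hg : QuadGrowth g) (g_nonneg : ∀ y, 0 ≤ g y) (g_le_one : ∀ y, g y ≤ 1) :
    Q g z - Q g z' ≤ 1 - 1 / M := by
  have hM₀ : 0 < M := by linarith
  have g_sq_le (y : S) : g y ^ 2 ≤ g y := by
    simpa using pow_le_pow_of_le_one (g_nonneg y) (g_le_one y) one_le_two
  have hg2 : QuadGrowth fun y ↦ g y ^ 2 := .of_abs_le (hg.1.pow_const 2) hg fun y ↦ by
    rw [abs_of_nonneg (sq_nonneg _)]
    exact g_sq_le y
  have lower : Q g z ^ 2 / M ≤ Q g z' := by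
    rw [div_le_iff₀' hM₀]
    exact (H g hg.1 hg2 g_nonneg).trans (by gcongr; exact hQ.mono hg2 hg g_sq_le z')
  have Qg_le_one : Q g z ≤ 1 := (hQ.mono hg (.const 1) g_le_one z).trans_eq (hQ.const 1 z)
  have gap : 0 ≤ (1 - Q g z) * (M - 1 - Q g z) / M := by
    have : 0 ≤ 1 - Q g z := by linarith
    have : 0 ≤ M - 1 - Q g z := by linarith
    positivity
  have gap_eq : (1 - Q g z) * (M - 1 - Q g z) / M = 1 - 1 / M - (Q g z - Q g z ^ 2 / M) := by
    field_simp
    ring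
  linarith

lemma HarnackInequality.sq_apply_add_le (H : HarnackInequality Q M z z') (hQ : IsMarkovOperator Q)
    (hg : Measurable g) (hg2 : QuadGrowth fun y ↦ g y ^ 2) (t : ℝ) :
    (Q g z + t) ^ 2 ≤ M * (Q (fun y ↦ g y ^ 2) z' + 2 * t * Q g z' + t ^ 2) := by
  have hg1 := QuadGrowth.of_sq hg hg2
  have square_eq : (fun y ↦ (g y + t) ^ 2) = fun y ↦ 1 * g y ^ 2 + 2 * t * g y + t ^ 2 := by
    ext y
    ring
  have measurable_abs : Measurable fun y ↦ |g y + t| := by fun_prop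
  have quadGrowth_abs_sq : QuadGrowth fun y ↦ |g y + t| ^ 2 := by
    simp only [sq_abs, square_eq]
    exact (hg2.linear hg1 _ _).add (.const _)
  have apply_abs := H _ measurable_abs quadGrowth_abs_sq fun y ↦ abs_nonneg _
  simp only [sq_abs, square_eq] at apply_abs
  rw [hQ.add (hg2.linear hg1 _ _) (.const _), hQ.linear hg2 hg1, hQ.const, one_mul] at apply_abs
  have apply_add : Q (fun y ↦ g y + t) z = Q g z + t := by rw [hQ.add hg1 (.const t), hQ.const]
  refine le_trans ?_ apply_abs
  rw [← apply_add, ← sq_abs]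
  gcongr
  exact hQ.abs_apply_le (hg1.add (.const t)) (.of_sq measurable_abs quadGrowth_abs_sq)
    (fun _ ↦ le_rfl) z

lemma HarnackInequality.sq_sub_le (H : HarnackInequality Q (1 + q) z z')
    (hQ : IsMarkovOperator Q) (hq : 0 < q) (hg : Measurable g)
    (hg2 : QuadGrowth fun y ↦ g y ^ 2) :
    (Q g z - Q g z') ^ 2 ≤ q * Q (fun y ↦ g y ^ 2) z' := by
  -- this translation of `g` optimizes the inequality
  have optimal := H.sq_apply_add_le hQ hg hg2 ((Q g z - Q g z') / q - Q g z')
  set a := Q g z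
  set b := Q g z'
  set v := Q (fun y ↦ g y ^ 2) z'
  have left_eq : (a + ((a - b) / q - b)) ^ 2
      = (1 + q) * ((a - b) ^ 2 / q ^ 2 + (a - b) ^ 2 / q) := by
    field_simp
    ring
  have right_eq : v + 2 * ((a - b) / q - b) * b + ((a - b) / q - b) ^ 2
      = v - b ^ 2 + (a - b) ^ 2 / q ^ 2 := by
    field_simp
    ring
  rw [left_eq, right_eq] at optimal
  have variance_bound : (a - b) ^ 2 / q ≤ v - b ^ 2 := by
    linarith [le_of_mul_le_mul_left optimal (by linarith)]
  exact (div_le_iff₀' hq).1 (variance_bound.trans (sub_le_self v (sq_nonneg b)))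

end HarnackConsequences

/-! ### Mixing over a unit of physical time -/

section SquareRoot

variable {S : Type*} [Norm S] [MeasurableSpace S] {Q : (S → ℝ) → S → ℝ} {V : S → ℝ}

lemma QuadGrowth.sqrt (hV : QuadGrowth V) (V_nonneg : ∀ z, 0 ≤ V z) :
    QuadGrowth fun z ↦ √(V z) :=
  .of_sq hV.1.sqrt (by simpa only [Real.sq_sqrt (V_nonneg _)] using hV)

lemma IsMarkovOperator.apply_sqrt_le (hQ : IsMarkovOperator Q) (hV : QuadGrowth V)
    (V_nonneg : ∀ z, 0 ≤ V z) {a b : ℝ} (ha : 0 ≤ a) (hb : 0 ≤ b) {z : S}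
    (drift : Q V z ≤ a * V z + b) : Q (fun y ↦ √(V y)) z ≤ √a * √(V z) + √b := by
  have sq_sqrt_V : (fun y ↦ √(V y) ^ 2) = V := funext fun y ↦ Real.sq_sqrt (V_nonneg y)
  have jensen := hQ.sq_apply_le hV.1.sqrt (by rwa [sq_sqrt_V]) z
  rw [sq_sqrt_V] at jensen
  refine le_of_sq_le_sq (jensen.trans (drift.trans ?_)) (by positivity)
  calc a * V z + b = (√a * √(V z)) ^ 2 + √b ^ 2 := by
        rw [mul_pow, Real.sq_sqrt ha, Real.sq_sqrt (V_nonneg z), Real.sq_sqrt hb]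
    _ ≤ (√a * √(V z) + √b) ^ 2 := by
        have : 0 ≤ √a * √(V z) * √b := by positivity
        linarith

end SquareRoot

section AbstractMixing

variable {S : Type*} [NormedAddCommGroup S] [MeasurableSpace S] {Q : (S → ℝ) → S → ℝ}
  {w g : S → ℝ} {a A c l α θ κ ε K₁ K₂ C : ℝ}

lemma HarrisCondition.iterate_sub_le_of_lipschitz (H : HarrisCondition Q w θ κ ε) (ha : 0 < a)
    (hA : 0 ≤ A) (le_w : ∀ z, a * ‖z‖ ≤ w z) (w_le : ∀ z, w z ≤ A * (1 + ‖z‖))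
    (hg : QuadGrowth g) (hl : 0 < l) (lipschitz : ∀ z z', |g z - g z'| ≤ l * ‖z - z'‖) (i : ℕ)
    (z z' : S) : Q^[i] g z - Q^[i] g z' ≤
      (2 + 2 * (harrisWeight κ ε * A)) / (harrisWeight κ ε * a) * l * harrisRate θ κ ε ^ i *
        (1 + ‖z‖ + ‖z'‖) := by
  have hβ := H.harrisWeight_pos
  have hα := H.harrisRate_pos
  set β := harrisWeight κ ε
  have osc (z z' : S) : g z - g z' ≤ l / (β * a) * (2 + β * (w z + w z')) :=
    calc g z - g z' ≤ l * (‖z‖ + ‖z'‖) :=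
          ((le_abs_self _).trans (lipschitz z z')).trans (by gcongr; exact norm_sub_le z z')
      _ = l / (β * a) * (0 + β * (a * ‖z‖ + a * ‖z'‖)) := by
          field_simp
          ring
      _ ≤ l / (β * a) * (2 + β * (w z + w z')) := by
          gcongr
          exacts [zero_le_two, le_w z, le_w z']
  have weight_le : 2 + β * (w z + w z') ≤ (2 + 2 * (β * A)) * (1 + ‖z‖ + ‖z'‖) := by
    have := mul_le_mul_of_nonneg_left (add_le_add (w_le z) (w_le z')) hβ.le
    have : 0 ≤ (2 + β * A) * (‖z‖ + ‖z'‖) := by positivity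
    linarith
  calc Q^[i] g z - Q^[i] g z' ≤ harrisRate θ κ ε ^ i * (l / (β * a) * (2 + β * (w z + w z'))) :=
        H.iterate_contraction hg (by positivity) osc i z z'
    _ ≤ harrisRate θ κ ε ^ i * (l / (β * a) * ((2 + 2 * (β * A)) * (1 + ‖z‖ + ‖z'‖))) := by
        gcongr
    _ = _ := by ring

lemma HarrisCondition.abs_iterate_sub_le_of_lipschitz (H : HarrisCondition Q w θ κ ε)
    (ha : 0 < a) (hA : 0 ≤ A) (le_w : ∀ z, a * ‖z‖ ≤ w z) (w_le : ∀ z, w z ≤ A * (1 + ‖z‖))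
    (hg : QuadGrowth g) (hl : 0 < l) (lipschitz : ∀ z z', |g z - g z'| ≤ l * ‖z - z'‖) (i : ℕ)
    (z z' : S) : |Q^[i] g z - Q^[i] g z'| ≤
      (2 + 2 * (harrisWeight κ ε * A)) / (harrisWeight κ ε * a) * l * harrisRate θ κ ε ^ i *
        (1 + ‖z‖ + ‖z'‖) := by
  refine abs_sub_le_iff.2 ⟨H.iterate_sub_le_of_lipschitz ha hA le_w w_le hg hl lipschitz i z z',
    ?_⟩
  rw [add_right_comm]
  exact H.iterate_sub_le_of_lipschitz ha hA le_w w_le hg hl lipschitz i z' z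

lemma quadGrowth_norm_sq [OpensMeasurableSpace S] : QuadGrowth fun z : S ↦ ‖z‖ ^ 2 :=
  ⟨measurable_norm.pow_const 2, 1, fun z ↦ by
    rw [abs_of_nonneg (by positivity)]
    linarith⟩

lemma exp_mul_sq_sub_one_le {K r : ℝ} (hK : 0 ≤ K) (hr₀ : 0 ≤ r) (hr₁ : r ≤ 1) :
    Real.exp (K * r ^ 2) - 1 ≤ K * Real.exp K * r ^ 2 := by
  have tangent := Real.add_one_le_exp (-(K * r ^ 2))
  have mono : Real.exp (K * r ^ 2) ≤ Real.exp K :=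
    Real.exp_le_exp.2 (mul_le_of_le_one_right hK (pow_le_one₀ hr₀ hr₁))
  calc Real.exp (K * r ^ 2) - 1
      = Real.exp (K * r ^ 2) * (1 - Real.exp (-(K * r ^ 2))) := by
        rw [mul_sub, ← Real.exp_add]
        simp
    _ ≤ Real.exp K * (K * r ^ 2) := by
        gcongr
        · linarith [Real.exp_le_one_iff.2 (neg_nonpos.2 (by positivity : 0 ≤ K * r ^ 2))]
        · linarith
    _ = _ := by ring

/-- The constant in the gradient bound which a Harnack constant `exp (K₁ ‖z - z'‖ ^ 2)` and a
second moment bound with constant `K₂` imply. -/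
noncomputable def smoothingConst (K₁ K₂ : ℝ) : ℝ := √(K₁ * Real.exp K₁ * (2 * (1 + K₂)))

lemma IsMarkovOperator.apply_sq_le_of_abs_le [OpensMeasurableSpace S] (hQ : IsMarkovOperator Q)
    (hg : QuadGrowth g) (hK₂ : 0 ≤ K₂) {z' : S}
    (moment : Q (fun y ↦ ‖y‖ ^ 2) z' ≤ K₂ * (1 + ‖z'‖ ^ 2))
    (bound : ∀ y, |g y| ≤ c * (1 + ‖y‖ + ‖z'‖)) :
    QuadGrowth (fun y ↦ g y ^ 2) ∧
      Q (fun y ↦ g y ^ 2) z' ≤ c ^ 2 * (2 * (1 + K₂)) * (1 + ‖z'‖) ^ 2 := by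
  have sq_le (y : S) : g y ^ 2 ≤ c ^ 2 * 2 * ‖y‖ ^ 2 + c ^ 2 * 2 * (1 + ‖z'‖) ^ 2 :=
    calc g y ^ 2 = |g y| ^ 2 := (sq_abs _).symm
      _ ≤ (c * (1 + ‖y‖ + ‖z'‖)) ^ 2 := pow_le_pow_left₀ (abs_nonneg _) (bound y) 2
      _ = c ^ 2 * (‖y‖ + (1 + ‖z'‖)) ^ 2 := by ring
      _ ≤ c ^ 2 * (2 * (‖y‖ ^ 2 + (1 + ‖z'‖) ^ 2)) := by
          gcongr
          exact add_sq_le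
      _ = _ := by ring
  have majorant := ((quadGrowth_norm_sq (S := S)).const_mul (c ^ 2 * 2)).add
    (.const (c ^ 2 * 2 * (1 + ‖z'‖) ^ 2))
  have quadGrowth_sq : QuadGrowth fun y ↦ g y ^ 2 :=
    .of_abs_le (hg.1.pow_const 2) majorant fun y ↦ by
      rw [abs_of_nonneg (sq_nonneg _)]
      exact sq_le y
  refine ⟨quadGrowth_sq, (hQ.mono quadGrowth_sq majorant sq_le z').trans ?_⟩
  rw [hQ.affine quadGrowth_norm_sq]
  calc c ^ 2 * 2 * Q (fun y ↦ ‖y‖ ^ 2) z' + c ^ 2 * 2 * (1 + ‖z'‖) ^ 2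
      ≤ c ^ 2 * 2 * (K₂ * (1 + ‖z'‖) ^ 2) + c ^ 2 * 2 * (1 + ‖z'‖) ^ 2 := by
        gcongr
        refine moment.trans ?_
        gcongr
        nlinarith [norm_nonneg z']
    _ = _ := by ring

lemma HarnackInequality.abs_sub_le [OpensMeasurableSpace S] {z z' : S}
    (H : HarnackInequality Q (Real.exp (K₁ * ‖z - z'‖ ^ 2)) z z') (hQ : IsMarkovOperator Q)
    (hK₁ : 0 < K₁) (hK₂ : 0 ≤ K₂) (moment : Q (fun y ↦ ‖y‖ ^ 2) z' ≤ K₂ * (1 + ‖z'‖ ^ 2))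
    (hg : QuadGrowth g) (hc : 0 ≤ c) (osc : ∀ y, |g y - g z'| ≤ c * (1 + ‖y‖ + ‖z'‖))
    (hr₀ : 0 < ‖z - z'‖) (hr₁ : ‖z - z'‖ ≤ 1) :
    |Q g z - Q g z'| ≤ c * smoothingConst K₁ K₂ * (1 + ‖z'‖) * ‖z - z'‖ := by
  set r := ‖z - z'‖
  have centered := hg.sub (.const (g z'))
  obtain ⟨quadGrowth_sq, apply_sq_le⟩ := hQ.apply_sq_le_of_abs_le centered hK₂ moment osc
  have hq : 0 < Real.exp (K₁ * r ^ 2) - 1 := sub_pos.2 (Real.one_lt_exp_iff.2 (by positivity))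
  rw [← add_sub_cancel 1 (Real.exp (K₁ * r ^ 2))] at H
  have sq_le := H.sq_sub_le hQ hq centered.1 quadGrowth_sq
  rw [hQ.sub hg (.const _), hQ.sub hg (.const _), hQ.const, hQ.const,
    sub_sub_sub_cancel_right] at sq_le
  refine abs_le_of_sq_le_sq (sq_le.trans ?_) (by unfold smoothingConst; positivity)
  calc (Real.exp (K₁ * r ^ 2) - 1) * Q (fun y ↦ (g y - g z') ^ 2) z'
      ≤ K₁ * Real.exp K₁ * r ^ 2 * (c ^ 2 * (2 * (1 + K₂)) * (1 + ‖z'‖) ^ 2) := by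
        gcongr
        exacts [hQ.apply_nonneg quadGrowth_sq (fun _ ↦ sq_nonneg _) z',
          exp_mul_sq_sub_one_le hK₁.le hr₀.le hr₁]
    _ = (c * √(K₁ * Real.exp K₁ * (2 * (1 + K₂))) * (1 + ‖z'‖) * r) ^ 2 := by
        simp only [mul_pow, Real.sq_sqrt (by positivity : 0 ≤ K₁ * Real.exp K₁ * (2 * (1 + K₂)))]
        ring

lemma IsMarkovOperator.abs_iterate_sub_le_mul_min [OpensMeasurableSpace S]
    (hQ : IsMarkovOperator Q) (hK₁ : 0 < K₁) (hK₂ : 0 ≤ K₂)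
    (harnack : ∀ z z', HarnackInequality Q (Real.exp (K₁ * ‖z - z'‖ ^ 2)) z z')
    (moment : ∀ z, Q (fun y ↦ ‖y‖ ^ 2) z ≤ K₂ * (1 + ‖z‖ ^ 2)) (hg : QuadGrowth g)
    (hl : 0 ≤ l) (lipschitz : ∀ z z', |g z - g z'| ≤ l * ‖z - z'‖) (hα : 0 < α) (hC : 0 ≤ C)
    (decay : ∀ (i : ℕ) z z', |Q^[i] g z - Q^[i] g z'| ≤ C * l * α ^ i * (1 + ‖z‖ + ‖z'‖))
    (i : ℕ) (z z' : S) : |Q^[i] g z - Q^[i] g z'| ≤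
      (C + 1 + C * smoothingConst K₁ K₂ / α) * l * α ^ i * (1 + ‖z‖ + ‖z'‖) *
        min 1 ‖z - z'‖ := by
  set J := smoothingConst K₁ K₂
  have hJ : 0 ≤ J := Real.sqrt_nonneg _
  have hJα : 0 ≤ C * J / α := by positivity
  rcases le_or_gt 1 ‖z - z'‖ with far | near
  · rw [min_eq_left far, mul_one]
    exact (decay i z z').trans (by gcongr; linarith)
  rw [min_eq_right near.le]
  cases i with
  | zero =>
    calc |g z - g z'| ≤ 1 * l * α ^ 0 * 1 * ‖z - z'‖ := by simpa using lipschitz z z'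
      _ ≤ _ := by
          gcongr
          exacts [by linarith, by linarith [norm_nonneg z, norm_nonneg z']]
  | succ j =>
    rcases eq_or_ne z z' with rfl | distinct
    · simp
    rw [Function.iterate_succ_apply']
    calc |Q (Q^[j] g) z - Q (Q^[j] g) z'|
        ≤ C * l * α ^ j * J * (1 + ‖z'‖) * ‖z - z'‖ :=
          (harnack z z').abs_sub_le hQ hK₁ hK₂ (moment z') ((hQ.iterate j).quadGrowth hg)
            (by positivity) (fun y ↦ decay j y z')
            (norm_sub_pos_iff.2 distinct) near.le
      _ = C * J / α * l * α ^ (j + 1) * (1 + ‖z'‖) * ‖z - z'‖ := by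
          rw [pow_succ]
          field_simp
      _ ≤ _ := by
          gcongr
          exacts [by linarith, by linarith [norm_nonneg z]]

end AbstractMixing

section Mixing

variable {E : Type*} [NormedAddCommGroup E] [InnerProductSpace ℝ E] {F : E → E} {L m B γ : ℝ}

lemma exists_sqrt_lyapunov_bounds (hγ : 0 < γ) : ∃ a > 0, ∃ A > 0, ∀ z : E × E,
    a * ‖z‖ ≤ √(lyapunov γ z) ∧ √(lyapunov γ z) ≤ A * (1 + ‖z‖) := by
  refine ⟨√(min (γ / 3) (1 / (2 * γ))), Real.sqrt_pos.2 (by positivity),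
    √(1 + 2 * (2 * γ + 3 / γ)), Real.sqrt_pos.2 (by positivity), fun z ↦ ⟨?_, ?_⟩⟩
  · refine Real.le_sqrt_of_sq_le ?_
    rw [mul_pow, Real.sq_sqrt (by positivity)]
    linarith [le_lyapunov hγ z]
  · refine Real.sqrt_le_iff.2 ⟨by positivity, ?_⟩
    rw [mul_pow, Real.sq_sqrt (by positivity)]
    refine (lyapunov_le_norm_sq hγ z).trans ?_
    gcongr
    nlinarith [norm_nonneg z]

variable [MeasurableSpace E] [BorelSpace E] [FiniteDimensional ℝ E]

lemma exists_iterate_transition_lyapunov_le (hF : DissipativeField F L m B) (hγ : 0 < γ)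
    (hLγ : 4 * L ≤ γ) (hLm : 4 * L ≤ γ * m) :
    ∃ c > 0, ∃ K > 0, ∃ h₀ > 0, h₀ ≤ 1 ∧ ∀ h : ℝ, 0 < h → h ≤ h₀ → ∀ (n : ℕ) z,
      (transition F γ h)^[n] (lyapunov γ) z ≤ Real.exp (-(c * (n * h))) * lyapunov γ z + K := by
  obtain ⟨c, hc, K, hK, h₀, hh₀, hh₀₁, drift⟩ := exists_transition_lyapunov_le hF hγ hLγ hLm
  refine ⟨c, hc, K, hK, h₀, hh₀, hh₀₁, fun h hh hle n z ↦ ?_⟩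
  obtain ⟨hch, drift⟩ := drift h hh hle
  have iterate_drift :=
    (isMarkovOperator_transition hF hγ hh (hle.trans hh₀₁)).iterate_apply_le_of_drift
      (quadGrowth_lyapunov hγ) (sub_nonneg.2 hch) hK.le (by simpa using drift) n z
  have : 0 ≤ lyapunov γ z := zero_le_one.trans (one_le_lyapunov hγ z)
  calc _ ≤ (1 - c * h) ^ n * lyapunov γ z + K := iterate_drift
    _ ≤ Real.exp (-(c * h)) ^ n * lyapunov γ z + K := by
        gcongr
        exact Real.one_sub_le_exp_neg _
    _ = Real.exp (-(c * (n * h))) * lyapunov γ z + K := by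
        rw [← Real.exp_nat_mul]
        ring_nf

lemma exists_iterate_transition_norm_sq_le (hF : DissipativeField F L m B) (hγ : 0 < γ)
    (hLγ : 4 * L ≤ γ) (hLm : 4 * L ≤ γ * m) :
    ∃ K > 0, ∃ h₀ > 0, h₀ ≤ 1 ∧ ∀ h : ℝ, 0 < h → h ≤ h₀ → ∀ (n : ℕ) (z : E × E),
      (transition F γ h)^[n] (fun y ↦ ‖y‖ ^ 2) z ≤ K * (1 + ‖z‖ ^ 2) := by
  obtain ⟨c, hc, K, hK, h₀, hh₀, hh₀₁, drift⟩ :=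
    exists_iterate_transition_lyapunov_le hF hγ hLγ hLm
  set a := min (γ / 3) (1 / (2 * γ))
  have ha : 0 < a := by positivity
  set A := 1 + 2 * (2 * γ + 3 / γ)
  refine ⟨1 / a * (A + K), by positivity, h₀, hh₀, hh₀₁, fun h hh hle n z ↦ ?_⟩
  have hP := (isMarkovOperator_transition hF hγ hh (hle.trans hh₀₁)).iterate n
  have norm_sq_le (y : E × E) : ‖y‖ ^ 2 ≤ 1 / a * lyapunov γ y := by
    rw [one_div_mul_eq_div, le_div_iff₀' ha]
    linarith [le_lyapunov hγ y]
  have : 0 ≤ lyapunov γ z := zero_le_one.trans (one_le_lyapunov hγ z)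
  calc (transition F γ h)^[n] (fun y ↦ ‖y‖ ^ 2) z
      ≤ 1 / a * (transition F γ h)^[n] (lyapunov γ) z := by
        rw [← hP.const_mul (quadGrowth_lyapunov hγ)]
        exact hP.mono quadGrowth_norm_sq ((quadGrowth_lyapunov hγ).const_mul _) norm_sq_le z
    _ ≤ 1 / a * (1 * lyapunov γ z + K) := by
        gcongr
        refine (drift h hh hle n z).trans ?_
        gcongr
        exact Real.exp_le_one_iff.2 (by simpa using by positivity)
    _ ≤ 1 / a * (1 * (A * (1 + ‖z‖ ^ 2)) + K * (1 + ‖z‖ ^ 2)) := by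
        gcongr
        exacts [lyapunov_le_norm_sq hγ z, le_mul_of_one_le_right hK.le (by nlinarith)]
    _ = _ := by ring

lemma exists_harrisCondition (hF : DissipativeField F L m B) (hγ : 0 < γ) (hLγ : 4 * L ≤ γ)
    (hLm : 4 * L ≤ γ * m) :
    ∃ θ κ ε : ℝ, 0 ≤ θ ∧ θ < 1 ∧ 0 < κ ∧ 0 < ε ∧ ∃ h₀ > 0, h₀ ≤ 1 ∧ ∀ h : ℝ, 0 < h → h ≤ h₀ →
      ∀ n : ℕ, 2 ≤ n → 1 ≤ n * h → n * h ≤ 2 →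
        HarrisCondition (transition F γ h)^[n] (fun z ↦ √(lyapunov γ z)) θ κ ε := by
  obtain ⟨c, hc, K, hK, h₀, hh₀, hh₀₁, drift⟩ :=
    exists_iterate_transition_lyapunov_le hF hγ hLγ hLm
  obtain ⟨a, ha, A, -, bounds⟩ := exists_sqrt_lyapunov_bounds (E := E) hγ
  obtain ⟨K₁, hK₁, harnack⟩ := exists_harnackInequality hF hγ
  have V_nonneg (z : E × E) : 0 ≤ lyapunov γ z := zero_le_one.trans (one_le_lyapunov hγ z)
  have hθ : √(Real.exp (-c)) < 1 := by
    rw [Real.sqrt_lt' one_pos, one_pow]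
    exact Real.exp_lt_one_iff.2 (neg_neg_iff_pos.2 hc)
  set ρ := 4 * √K / (1 - √(Real.exp (-c)))
  set M := max 2 (Real.exp (K₁ * (ρ / a) ^ 2))
  have : 0 < M := lt_max_of_lt_left two_pos
  refine ⟨√(Real.exp (-c)), √K, 1 / M, Real.sqrt_nonneg _, hθ, Real.sqrt_pos.2 hK,
    by positivity, h₀, hh₀, hh₀₁, fun h hh hle n hn hnh₁ hnh₂ ↦ ?_⟩
  have hQ := (isMarkovOperator_transition hF hγ hh (hle.trans hh₀₁)).iterate n
  refine ⟨hQ, (quadGrowth_lyapunov hγ).sqrt V_nonneg, fun z ↦ Real.sqrt_nonneg _,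
    Real.sqrt_nonneg _, hθ, Real.sqrt_pos.2 hK, by positivity, fun z ↦ ?_,
    fun z z' hz g hg g_nonneg g_le_one ↦ ?_⟩
  · refine hQ.apply_sqrt_le (quadGrowth_lyapunov hγ) V_nonneg (Real.exp_pos _).le hK.le
      ((drift h hh hle n z).trans ?_)
    have := V_nonneg z
    gcongr
    exact le_mul_of_one_le_right hc.le hnh₁
  · have close : ‖z - z'‖ ≤ ρ / a := by
      rw [le_div_iff₀' ha]
      linarith [mul_le_mul_of_nonneg_left (norm_sub_le z z') ha.le, (bounds z).1, (bounds z').1]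
    have harnack_M : HarnackInequality (transition F γ h)^[n] M z z' :=
      (harnack h hh (hle.trans hh₀₁) n hn hnh₁ hnh₂ z z').mono hQ
        (le_max_of_le_right (Real.exp_le_exp.2 (by gcongr)))
    exact harnack_M.sub_le hQ (le_max_left _ _) hg g_nonneg g_le_one

/- The factor `min 1 ‖z - z'‖` is what makes the solution of the Poisson equation locally
Lipschitz. -/
lemma exists_mixing (hF : DissipativeField F L m B) (hγ : 0 < γ) (hLγ : 4 * L ≤ γ)
    (hLm : 4 * L ≤ γ * m) :
    ∃ α > 0, α < 1 ∧ ∃ C > 0, ∃ h₀ > 0, h₀ ≤ 1 ∧ ∀ h : ℝ, 0 < h → h ≤ h₀ →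
      ∀ n : ℕ, 2 ≤ n → 1 ≤ n * h → n * h ≤ 2 → ∀ (g : E × E → ℝ) (l : ℝ), 0 < l →
      (∀ z z', |g z - g z'| ≤ l * ‖z - z'‖) → ∀ (i : ℕ) z z',
        |((transition F γ h)^[n])^[i] g z - ((transition F γ h)^[n])^[i] g z'| ≤
          C * l * α ^ i * (1 + ‖z‖ + ‖z'‖) * min 1 ‖z - z'‖ := by
  obtain ⟨θ, κ, ε, hθ₀, hθ, hκ, hε, h₁, hh₁, -, harris⟩ := exists_harrisCondition hF hγ hLγ hLm
  obtain ⟨a, ha, A, hA, bounds⟩ := exists_sqrt_lyapunov_bounds (E := E) hγ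
  obtain ⟨K₁, hK₁, harnack⟩ := exists_harnackInequality hF hγ
  obtain ⟨K₂, hK₂, h₂, hh₂, hh₂₁, moment⟩ := exists_iterate_transition_norm_sq_le hF hγ hLγ hLm
  have hα := harrisRate_pos hθ₀ hθ hκ hε
  have hβ := harrisWeight_pos hκ hε
  set C := (2 + 2 * (harrisWeight κ ε * A)) / (harrisWeight κ ε * a)
  have hC : 0 < C := by positivity
  have hJ : 0 ≤ smoothingConst K₁ K₂ := Real.sqrt_nonneg _
  refine ⟨harrisRate θ κ ε, hα, harrisRate_lt_one hθ hκ hε,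
    C + 1 + C * smoothingConst K₁ K₂ / harrisRate θ κ ε, by positivity, min h₁ h₂,
    lt_min hh₁ hh₂, (min_le_right _ _).trans hh₂₁,
    fun h hh hle n hn hnh₁ hnh₂ g l hl lipschitz ↦ ?_⟩
  have H := harris h hh (hle.trans (min_le_left _ _)) n hn hnh₁ hnh₂
  have hle₂ := hle.trans (min_le_right _ _)
  have hg := QuadGrowth.of_lipschitz hl.le lipschitz
  exact H.isMarkovOperator.abs_iterate_sub_le_mul_min hK₁ hK₂.le
    (harnack h hh (hle₂.trans hh₂₁) n hn hnh₁ hnh₂) (moment h hh hle₂ n) hg hl.le lipschitz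
    hα hC.le (H.abs_iterate_sub_le_of_lipschitz ha hA.le (fun z ↦ (bounds z).1)
      (fun z ↦ (bounds z).2) hg hl lipschitz)

end Mixing

/-! ### The discrete Poisson equation -/

section Poisson

lemma IsMarkovOperator.telescope {S : Type*} [Norm S] [MeasurableSpace S]
    {P : (S → ℝ) → S → ℝ} {f : S → ℝ} (hP : IsMarkovOperator P) (hf : QuadGrowth f) (h : ℝ)
    (n : ℕ) (z : S) :
    h * ∑ j ∈ Finset.range n, P^[j] f z - P (fun y ↦ h * ∑ j ∈ Finset.range n, P^[j] f y) z
      = h * (f z - P^[n] f z) := by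
  have iterates : ∀ j ∈ Finset.range n, QuadGrowth (P^[j] f) :=
    fun j _ ↦ (hP.iterate j).quadGrowth hf
  rw [hP.const_mul (.sum _ iterates), hP.sum _ iterates, ← mul_sub, ← Finset.sum_sub_distrib]
  simp only [← Function.iterate_succ_apply' P]
  rw [Finset.sum_range_sub' (fun j ↦ P^[j] f z) n, Function.iterate_zero_apply]

lemma sum_range_mul_le_of_geometric {a : ℕ → ℝ} {n : ℕ} {α b : ℝ} (hα₀ : 0 ≤ α) (hα₁ : α < 1)
    (hb : 0 ≤ b) (h : ∀ i, ∀ r < n, a (n * i + r) ≤ b * α ^ i) (k : ℕ) :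
    ∑ j ∈ Finset.range (n * k), a j ≤ n * b * (1 - α)⁻¹ := by
  have blocks : ∑ j ∈ Finset.range (n * k), a j ≤ n * b * ∑ i ∈ Finset.range k, α ^ i := by
    induction k with
    | zero => simp
    | succ k ih =>
      rw [Nat.mul_succ, Finset.sum_range_add, Finset.sum_range_succ, mul_add]
      have block : ∑ r ∈ Finset.range n, a (n * k + r) ≤ ∑ _r ∈ Finset.range n, b * α ^ k :=
        Finset.sum_le_sum fun r hr ↦ h k r (Finset.mem_range.1 hr)
      rw [Finset.sum_const, Finset.card_range, nsmul_eq_mul, ← mul_assoc] at block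
      exact add_le_add ih block
  refine blocks.trans (mul_le_mul_of_nonneg_left ?_ (by positivity))
  rw [← tsum_geometric_of_lt_one hα₀ hα₁]
  exact (summable_geometric_of_lt_one hα₀ hα₁).sum_le_tsum _ fun i _ ↦ pow_nonneg hα₀ i

lemma exists_nat_mul_mem_Icc {h : ℝ} (hh : 0 < h) (hle : h ≤ 1 / 2) :
    ∃ n : ℕ, 2 ≤ n ∧ 1 ≤ n * h ∧ n * h ≤ 2 := by
  have le_ceil := Nat.le_ceil (1 / h)
  have two_le : 2 ≤ 1 / h := by
    rw [le_div_iff₀ hh]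
    linarith
  refine ⟨⌈1 / h⌉₊, by exact_mod_cast two_le.trans le_ceil, (div_le_iff₀ hh).1 le_ceil, ?_⟩
  calc ⌈1 / h⌉₊ * h ≤ (1 / h + 1) * h := by
        gcongr
        exact (Nat.ceil_lt_add_one (by positivity)).le
    _ = 1 + h := by field_simp
    _ ≤ 2 := by linarith

/-- A solution `ψ` of the Poisson equation `ψ - P ψ = h (f - π f)` of the chain with time step `h`,
in which the unknown constant `π f` is replaced by a nearly constant function `e`. -/
structure IsPoissonSolution {S : Type*} [NormedAddCommGroup S] [MeasurableSpace S]
    (P : (S → ℝ) → S → ℝ) (f : S → ℝ) (h C : ℝ) (ψ e : S → ℝ) : Prop where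
  quadGrowth : QuadGrowth ψ
  quadGrowth_error : QuadGrowth e
  sub_apply : ∀ z, ψ z - P ψ z = h * (f z - e z)
  abs_sub_le : ∀ z z', |ψ z - ψ z'| ≤ C * (1 + ‖z‖ + ‖z'‖) * min 1 ‖z - z'‖
  abs_error_sub_le : ∀ z z', |e z - e z'| ≤ C * h * (1 + ‖z‖ + ‖z'‖)

variable {E : Type*} [NormedAddCommGroup E] [InnerProductSpace ℝ E] [FiniteDimensional ℝ E]
  [MeasurableSpace E] [BorelSpace E] {F : E → E} {L m B γ h l : ℝ} {f : E × E → ℝ}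

lemma abs_iterate_transition_sub_le_exp (hF : DissipativeField F L m B) (hγ : 0 < γ) (hh : 0 < h)
    (hh₁ : h ≤ 1) (hl : 0 ≤ l) (lipschitz : ∀ z z', |f z - f z'| ≤ l * ‖z - z'‖) {n : ℕ}
    (hnh : n * h ≤ 2) (z z' : E × E) :
    |(transition F γ h)^[n] f z - (transition F γ h)^[n] f z'| ≤
      l * Real.exp (2 * (1 + L + γ)) * ‖z - z'‖ := by
  have hL := hF.L_pos
  refine (abs_iterate_transition_sub_le hF hγ hh hh₁ hl lipschitz n z z').trans ?_
  gcongr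
  calc (1 + (1 + L + γ) * h) ^ n ≤ Real.exp ((1 + L + γ) * h) ^ n := by
        gcongr
        linarith [Real.add_one_le_exp ((1 + L + γ) * h)]
    _ = Real.exp (n * h * (1 + L + γ)) := by
        rw [← Real.exp_nat_mul]
        ring_nf
    _ ≤ Real.exp (2 * (1 + L + γ)) := by gcongr

lemma exists_isPoissonSolution (hF : DissipativeField F L m B) (hγ : 0 < γ) (hLγ : 4 * L ≤ γ)
    (hLm : 4 * L ≤ γ * m) (hl : 0 < l) (lipschitz : ∀ z z', |f z - f z'| ≤ l * ‖z - z'‖) :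
    ∃ C > 0, ∃ h₀ > 0, h₀ ≤ 1 / 2 ∧ ∀ h : ℝ, 0 < h → h ≤ h₀ →
      ∃ ψ e, IsPoissonSolution (transition F γ h) f h C ψ e := by
  obtain ⟨α, hα₀, hα₁, C, hC, h₀, hh₀, -, mixing⟩ := exists_mixing hF hγ hLγ hLm
  have hf := QuadGrowth.of_lipschitz hl.le lipschitz
  set X := Real.exp (2 * (1 + L + γ))
  have : 0 < (1 - α)⁻¹ := inv_pos.2 (sub_pos.2 hα₁)
  refine ⟨2 * (C * (l * X)) * (1 - α)⁻¹ + C * l, by positivity, min h₀ (1 / 2), by positivity,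
    min_le_right _ _, fun h hh hle ↦ ?_⟩
  have hh₁ : h ≤ 1 := hle.trans ((min_le_right _ _).trans (by norm_num))
  have hP := isMarkovOperator_transition hF hγ hh hh₁
  obtain ⟨n, hn, hnh₁, hnh₂⟩ := exists_nat_mul_mem_Icc hh (hle.trans (min_le_right _ _))
  replace mixing := mixing h hh (hle.trans (min_le_left _ _)) n hn hnh₁ hnh₂
  obtain ⟨k, hk⟩ := exists_pow_lt_of_lt_one hh hα₁
  set P := transition F γ h
  refine ⟨fun y ↦ h * ∑ j ∈ Finset.range (n * k), P^[j] f y, P^[n * k] f,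
    (QuadGrowth.sum _ fun j _ ↦ (hP.iterate j).quadGrowth hf).const_mul h,
    (hP.iterate _).quadGrowth hf, hP.telescope hf h _, fun z z' ↦ ?_, fun z z' ↦ ?_⟩
  · set ω := (1 + ‖z‖ + ‖z'‖) * min 1 ‖z - z'‖
    have term (i r : ℕ) (hr : r < n) :
        |P^[n * i + r] f z - P^[n * i + r] f z'| ≤ C * (l * X) * ω * α ^ i := by
      have hrh : r * h ≤ 2 := le_trans (by gcongr) hnh₂
      rw [Function.iterate_add_apply, Function.iterate_mul]
      exact (mixing _ (l * X) (by positivity)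
        (abs_iterate_transition_sub_le_exp hF hγ hh hh₁ hl.le lipschitz hrh) i z z').trans_eq
        (by ring)
    rw [← mul_sub, ← Finset.sum_sub_distrib, abs_mul, abs_of_pos hh, mul_assoc _ _ (min _ _)]
    calc h * |∑ j ∈ Finset.range (n * k), (P^[j] f z - P^[j] f z')|
        ≤ h * (n * (C * (l * X) * ω) * (1 - α)⁻¹) := by
          gcongr
          exact (Finset.abs_sum_le_sum_abs _ _).trans
            (sum_range_mul_le_of_geometric hα₀.le hα₁ (by positivity) term k)
      _ = n * h * (C * (l * X)) * (1 - α)⁻¹ * ω := by ring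
      _ ≤ (2 * (C * (l * X)) * (1 - α)⁻¹ + C * l) * ω := by
          gcongr
          linarith [mul_le_mul_of_nonneg_right hnh₂
            (by positivity : 0 ≤ C * (l * X) * (1 - α)⁻¹), mul_pos hC hl]
  · rw [Function.iterate_mul]
    calc _ ≤ C * l * α ^ k * (1 + ‖z‖ + ‖z'‖) * min 1 ‖z - z'‖ := mixing f l hl lipschitz k z z'
      _ ≤ (2 * (C * (l * X)) * (1 - α)⁻¹ + C * l) * h * (1 + ‖z‖ + ‖z'‖) * 1 := by
          gcongr
          exacts [le_add_of_nonneg_left (by positivity), min_le_left _ _]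
      _ = _ := mul_one _

end Poisson

/-! ### The Boltzmann measure -/

lemma one_add_norm_sq_le {S : Type*} [SeminormedAddCommGroup S] (z : S) :
    (1 + ‖z‖) ^ 2 ≤ 2 * (1 + ‖z‖ ^ 2) := by
  simpa using add_sq_le (a := 1) (b := ‖z‖)

lemma abs_exp_sub_one_le_mul_exp {t K : ℝ} (ht : |t| ≤ K) :
    |Real.exp t - 1| ≤ K * Real.exp K := by
  have hK : 0 ≤ K := (abs_nonneg t).trans ht
  have exp_le : Real.exp t ≤ Real.exp K := Real.exp_le_exp.2 ((le_abs_self t).trans ht)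
  have one_le : 1 ≤ Real.exp K := Real.one_le_exp hK
  obtain ⟨neg_le, le⟩ := abs_le.1 ht
  refine abs_le.2 ⟨by nlinarith [Real.add_one_le_exp t], ?_⟩
  calc Real.exp t - 1 = Real.exp t * (1 - Real.exp (-t)) := by
        rw [mul_sub, ← Real.exp_add]
        simp
    _ ≤ Real.exp t * t := by
        gcongr
        linarith [Real.one_sub_le_exp_neg t]
    _ ≤ Real.exp K * K := by
        refine (mul_le_mul_of_nonneg_left le (Real.exp_pos t).le).trans ?_
        gcongr
    _ = K * Real.exp K := mul_comm _ _

lemma integral_tilted_eq_integral_comp_mul_exp {α : Type*} [MeasurableSpace α] {μ : Measure α}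
    {φ : α → α} (hφ : MeasurePreserving φ μ μ) {f ψ : α → ℝ} (hf : Measurable f)
    (hψ : Measurable ψ) : ∫ x, ψ x ∂μ.tilted f
      = ∫ x, ψ (φ x) * Real.exp (f (φ x) - f x) ∂μ.tilted f := by
  have change (g : α → ℝ) (hg : Measurable g) : ∫ x, g x ∂μ = ∫ x, g (φ x) ∂μ := by
    rw [← integral_map hφ.aemeasurable hg.aestronglyMeasurable, hφ.map_eq]
  rw [integral_tilted, integral_tilted, change _ (by fun_prop)]
  refine integral_congr_ae (.of_forall fun x ↦ ?_)
  simp only [smul_eq_mul, Real.exp_sub]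
  field_simp

section Boltzmann

variable {E : Type*} [NormedAddCommGroup E] [InnerProductSpace ℝ E]

/-- The potentials for which the Boltzmann measure exists and is nearly invariant: `U` has gradient
`F`, in the form of a first-order Taylor estimate, and grows at least quadratically. -/
structure ConfiningPotential (U : E → ℝ) (F : E → E) (L m B : ℝ) : Prop where
  continuous : Continuous U
  taylor : ∀ x y, |U y - U x - inner ℝ (F x) (y - x)| ≤ L * ‖y - x‖ ^ 2
  lower : ∀ x, U 0 + m / 2 * ‖x‖ ^ 2 - B * ‖x‖ ≤ U x

/-- The total energy of the state `z = (x, v)`. -/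
noncomputable def hamiltonian (U : E → ℝ) (z : E × E) : ℝ := ‖z.2‖ ^ 2 / 2 + U z.1

variable {U : E → ℝ} {F : E → E} {L m B : ℝ}

lemma ConfiningPotential.le_hamiltonian (hU : ConfiningPotential U F L m B) (hm : 0 < m)
    (z : E × E) : 1 / 2 * ‖z.2‖ ^ 2 + m / 4 * ‖z.1‖ ^ 2 + (U 0 - B ^ 2 / m) ≤ hamiltonian U z := by
  have young : B * ‖z.1‖ ≤ m / 4 * ‖z.1‖ ^ 2 + B ^ 2 / m := by
    have square : m / 4 * ‖z.1‖ ^ 2 + B ^ 2 / m - B * ‖z.1‖ = (m * ‖z.1‖ / 2 - B) ^ 2 / m := by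
      field_simp
      ring
    have : 0 ≤ (m * ‖z.1‖ / 2 - B) ^ 2 / m := by positivity
    linarith
  unfold hamiltonian
  linarith [hU.lower z.1]

variable [MeasurableSpace E] [BorelSpace E]

lemma ConfiningPotential.measurable_hamiltonian (hU : ConfiningPotential U F L m B) :
    Measurable (hamiltonian U) := by
  have := hU.continuous.measurable
  unfold hamiltonian
  fun_prop

variable [FiniteDimensional ℝ E]

/-- The Boltzmann probability measure, with density proportional to `exp (-hamiltonian U z)`. -/
noncomputable def boltzmann (U : E → ℝ) : Measure (E × E) :=
  (volume : Measure (E × E)).tilted fun z ↦ -hamiltonian U z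

namespace ConfiningPotential

lemma integrable_exp_sub_hamiltonian (hU : ConfiningPotential U F L m B) (hm : 0 < m) {a : ℝ}
    (ha : 0 ≤ a) (ha₁ : a ≤ 1 / 4) (ha₂ : a ≤ m / 8) :
    Integrable fun z : E × E ↦ Real.exp (a * (1 + ‖z‖ ^ 2) - hamiltonian U z) := by
  have gaussian : Integrable fun z : E × E ↦ Real.exp (-(m / 8 * ‖z.1‖ ^ 2))
      * Real.exp (-(1 / 4 * ‖z.2‖ ^ 2)) := by
    rw [Measure.volume_eq_prod]
    exact (integrable_exp_neg_mul_norm_sq E (by positivity)).mul_prod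
      (integrable_exp_neg_mul_norm_sq E (by positivity))
  have := hU.measurable_hamiltonian
  refine (gaussian.const_mul (Real.exp (a - (U 0 - B ^ 2 / m)))).mono'
    (by fun_prop : Measurable _).aestronglyMeasurable (.of_forall fun z ↦ ?_)
  rw [Real.norm_of_nonneg (Real.exp_pos _).le, ← Real.exp_add, ← Real.exp_add, Real.exp_le_exp]
  have split : a * ‖z‖ ^ 2 ≤ a * (‖z.1‖ ^ 2 + ‖z.2‖ ^ 2) :=
    mul_le_mul_of_nonneg_left (norm_sq_le_norm_fst_sq_add_norm_snd_sq z) ha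
  have position := mul_le_mul_of_nonneg_right ha₂ (sq_nonneg ‖z.1‖)
  have velocity := mul_le_mul_of_nonneg_right ha₁ (sq_nonneg ‖z.2‖)
  linarith [hU.le_hamiltonian hm z]

lemma integrable_exp_neg_hamiltonian (hU : ConfiningPotential U F L m B) (hm : 0 < m) :
    Integrable fun z : E × E ↦ Real.exp (-hamiltonian U z) := by
  simpa using hU.integrable_exp_sub_hamiltonian hm le_rfl (by norm_num) (by positivity)

lemma isProbabilityMeasure_boltzmann (hU : ConfiningPotential U F L m B) (hm : 0 < m) :
    IsProbabilityMeasure (boltzmann U) :=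
  isProbabilityMeasure_tilted (hU.integrable_exp_neg_hamiltonian hm)

lemma exists_integrable_exp_boltzmann (hU : ConfiningPotential U F L m B) (hm : 0 < m) :
    ∃ δ > 0, Integrable (fun z ↦ Real.exp (δ * (1 + ‖z‖ ^ 2))) (boltzmann U) := by
  refine ⟨min (1 / 4) (m / 8), by positivity, ?_⟩
  rw [boltzmann, integrable_tilted_iff (hU.integrable_exp_neg_hamiltonian hm)]
  refine (hU.integrable_exp_sub_hamiltonian hm (by positivity) (min_le_left _ _)
    (min_le_right _ _)).congr (.of_forall fun z ↦ ?_)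
  simp only [smul_eq_mul, ← Real.exp_add, neg_add_eq_sub]

lemma integrable_one_add_norm_sq_boltzmann (hU : ConfiningPotential U F L m B) (hm : 0 < m) :
    Integrable (fun z ↦ 1 + ‖z‖ ^ 2) (boltzmann U) := by
  obtain ⟨δ, hδ, integrable_exp⟩ := hU.exists_integrable_exp_boltzmann hm
  refine (integrable_exp.const_mul δ⁻¹).mono' (by fun_prop : Measurable _).aestronglyMeasurable
    (.of_forall fun z ↦ ?_)
  rw [Real.norm_of_nonneg (by positivity), ← div_eq_inv_mul, le_div_iff₀' hδ]
  linarith [Real.add_one_le_exp (δ * (1 + ‖z‖ ^ 2))]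

lemma integrable_boltzmann (hU : ConfiningPotential U F L m B) (hm : 0 < m) {g : E × E → ℝ}
    (hg : QuadGrowth g) : Integrable g (boltzmann U) := by
  obtain ⟨measurable_g, A, bound⟩ := hg
  exact ((hU.integrable_one_add_norm_sq_boltzmann hm).const_mul A).mono'
    measurable_g.aestronglyMeasurable (.of_forall bound)

lemma boltzmann_eq_prod (hU : ConfiningPotential U F L m B) :
    boltzmann U = ((volume : Measure E).tilted fun x ↦ -U x).prod (stdGaussian E) := by
  have := hU.continuous.measurable
  rw [stdGaussian_eq_tilted, tilted_prod_tilted (by fun_prop) (by fun_prop), boltzmann,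
    Measure.volume_eq_prod]
  congr 1
  funext z
  rw [hamiltonian]
  ring

lemma measurePreserving_boltzmann (hU : ConfiningPotential U F L m B) {c s : ℝ}
    (hcs : c ^ 2 + s ^ 2 = 1) :
    MeasurePreserving (fun p : (E × E) × E ↦ (p.1.1, c • p.1.2 + s • p.2))
      ((boltzmann U).prod (stdGaussian E)) (boltzmann U) := by
  have rotation : MeasurePreserving (fun p : E × E ↦ c • p.1 + s • p.2)
      ((stdGaussian E).prod (stdGaussian E)) (stdGaussian E) :=
    ⟨by fun_prop, map_smul_add_smul_stdGaussian hcs⟩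
  rw [hU.boltzmann_eq_prod]
  exact ((MeasurePreserving.id _).prod rotation).comp (measurePreserving_prodAssoc _ _ _)

end ConfiningPotential

end Boltzmann

/-! ### The symplectic Euler step -/

section Symplectic

variable {E : Type*} [NormedAddCommGroup E] [InnerProductSpace ℝ E]

/-- The symplectic Euler step, which evaluates the force at the updated position. It preserves the
Lebesgue measure and nearly preserves the energy. -/
def symplecticStep (F : E → E) (h : ℝ) (z : E × E) : E × E :=
  (z.1 + h • z.2, z.2 - h • F (z.1 + h • z.2))

variable {U : E → ℝ} {F : E → E} {L m B h : ℝ}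

lemma norm_fst_add_smul_snd_le (hh : 0 < h) (hh₁ : h ≤ 1) (z : E × E) :
    ‖z.1 + h • z.2‖ ≤ 2 * ‖z‖ := by
  calc ‖z.1 + h • z.2‖ ≤ ‖z.1‖ + h * ‖z.2‖ := by
        refine (norm_add_le _ _).trans_eq ?_
        rw [norm_smul, Real.norm_of_nonneg hh.le]
    _ ≤ ‖z‖ + 1 * ‖z‖ := by
        gcongr
        exacts [norm_fst_le z, norm_snd_le z]
    _ = 2 * ‖z‖ := by ring

lemma DissipativeField.norm_apply_fst_add_smul_snd_le (hF : DissipativeField F L m B) (hh : 0 < h)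
    (hh₁ : h ≤ 1) (z : E × E) : ‖F (z.1 + h • z.2)‖ ≤ 2 * L * (1 + ‖z‖) := by
  have hL := hF.L_pos
  calc ‖F (z.1 + h • z.2)‖ ≤ L * (‖z.1 + h • z.2‖ + 1) := hF.growth _
    _ ≤ L * (2 * (1 + ‖z‖)) := by
        gcongr
        linarith [norm_fst_add_smul_snd_le hh hh₁ z]
    _ = _ := by ring

lemma one_add_norm_symplecticStep_le (hF : DissipativeField F L m B) (hh : 0 < h) (hh₁ : h ≤ 1)
    (z : E × E) : 1 + ‖symplecticStep F h z‖ ≤ (2 + 2 * L) * (1 + ‖z‖) := by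
  have hL := hF.L_pos
  have velocity : ‖z.2 - h • F (z.1 + h • z.2)‖ ≤ ‖z‖ + 1 * (2 * L * (1 + ‖z‖)) := by
    refine (norm_sub_le _ _).trans ?_
    rw [norm_smul, Real.norm_of_nonneg hh.le]
    gcongr
    exacts [norm_snd_le z, hF.norm_apply_fst_add_smul_snd_le hh hh₁ z]
  have : ‖symplecticStep F h z‖ ≤ 1 + 2 * ‖z‖ + 2 * L * (1 + ‖z‖) := by
    have := mul_nonneg hL.le (norm_nonneg z)
    refine max_le ((norm_fst_add_smul_snd_le hh hh₁ z).trans ?_) (velocity.trans ?_) <;>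
      linarith [norm_nonneg z]
  linarith

lemma one_add_norm_symplecticStep_sq_le (hF : DissipativeField F L m B) (hh : 0 < h)
    (hh₁ : h ≤ 1) (z : E × E) :
    1 + ‖symplecticStep F h z‖ ^ 2 ≤ 2 * (2 + 2 * L) ^ 2 * (1 + ‖z‖ ^ 2) := by
  calc 1 + ‖symplecticStep F h z‖ ^ 2 ≤ (1 + ‖symplecticStep F h z‖) ^ 2 := by
        linarith [norm_nonneg (symplecticStep F h z), add_sq 1 ‖symplecticStep F h z‖]
    _ ≤ ((2 + 2 * L) * (1 + ‖z‖)) ^ 2 := by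
        gcongr
        exact one_add_norm_symplecticStep_le hF hh hh₁ z
    _ = (2 + 2 * L) ^ 2 * (1 + ‖z‖) ^ 2 := mul_pow _ _ _
    _ ≤ (2 + 2 * L) ^ 2 * (2 * (1 + ‖z‖ ^ 2)) := by
        gcongr
        exact one_add_norm_sq_le z
    _ = _ := by ring

lemma abs_hamiltonian_symplecticStep_sub_le (hF : DissipativeField F L m B)
    (hU : ConfiningPotential U F L m B) (hh : 0 < h) (hh₁ : h ≤ 1) (z : E × E) :
    |hamiltonian U (symplecticStep F h z) - hamiltonian U z|
      ≤ h ^ 2 * ((4 * L ^ 2 + L) * (1 + ‖z‖ ^ 2)) := by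
  have hL := hF.L_pos
  have force := hF.norm_apply_fst_add_smul_snd_le hh hh₁ z
  -- Expanding around the new position makes the terms of order `h` cancel those of the kick.
  have taylor := hU.taylor (z.1 + h • z.2) z.1
  rw [sub_add_cancel_left, inner_neg_right, inner_smul_right, norm_neg, norm_smul,
    Real.norm_of_nonneg hh.le, mul_pow] at taylor
  unfold hamiltonian symplecticStep
  dsimp only
  set x' := z.1 + h • z.2
  have kinetic : ‖z.2 - h • F x'‖ ^ 2
      = ‖z.2‖ ^ 2 - 2 * (h * inner ℝ (F x') z.2) + h ^ 2 * ‖F x'‖ ^ 2 := by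
    rw [norm_sub_sq_real, inner_smul_right, norm_smul, Real.norm_of_nonneg hh.le, mul_pow,
      real_inner_comm]
  have force_sq : ‖F x'‖ ^ 2 ≤ 8 * L ^ 2 * (1 + ‖z‖ ^ 2) := by
    calc ‖F x'‖ ^ 2 ≤ (2 * L * (1 + ‖z‖)) ^ 2 := by gcongr
      _ = 4 * L ^ 2 * (1 + ‖z‖) ^ 2 := by ring
      _ ≤ 4 * L ^ 2 * (2 * (1 + ‖z‖ ^ 2)) := by
          gcongr
          exact one_add_norm_sq_le z
      _ = _ := by ring
  have speed_sq : ‖z.2‖ ^ 2 ≤ 1 + ‖z‖ ^ 2 := by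
    have := pow_le_pow_left₀ (norm_nonneg _) (norm_snd_le z) 2
    linarith
  have split : ‖z.2 - h • F x'‖ ^ 2 / 2 + U x' - (‖z.2‖ ^ 2 / 2 + U z.1)
      = h ^ 2 * ‖F x'‖ ^ 2 / 2 - (U z.1 - U x' - -(h * inner ℝ (F x') z.2)) := by
    rw [kinetic]
    ring
  rw [split]
  refine (abs_sub _ _).trans ?_
  rw [abs_of_nonneg (by positivity : 0 ≤ h ^ 2 * ‖F x'‖ ^ 2 / 2)]
  calc _ ≤ h ^ 2 * (8 * L ^ 2 * (1 + ‖z‖ ^ 2)) / 2 + L * (h ^ 2 * (1 + ‖z‖ ^ 2)) := by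
        refine add_le_add (by gcongr) (taylor.trans (by gcongr))
    _ = _ := by ring

lemma sq_mul_exp_half_le {δ w : ℝ} (hδ : 0 < δ) (hw : 0 ≤ w) :
    w ^ 2 * Real.exp (δ / 2 * w) ≤ 8 / δ ^ 2 * Real.exp (δ * w) := by
  have quadratic := Real.quadratic_le_exp_of_nonneg (x := δ / 2 * w) (by positivity)
  calc w ^ 2 * Real.exp (δ / 2 * w)
      = 8 / δ ^ 2 * ((δ / 2 * w) ^ 2 / 2 * Real.exp (δ / 2 * w)) := by
        field_simp
        ring
    _ ≤ 8 / δ ^ 2 * (Real.exp (δ / 2 * w) * Real.exp (δ / 2 * w)) := by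
        gcongr
        linarith [mul_nonneg (half_pos hδ).le hw]
    _ = _ := by
        rw [← Real.exp_add]
        ring_nf

lemma abs_comp_symplecticStep_mul_exp_sub_one_le (hF : DissipativeField F L m B)
    (hU : ConfiningPotential U F L m B) (hh : 0 < h) (hh₁ : h ≤ 1) {δ : ℝ} (hδ : 0 < δ)
    (small : h ^ 2 * (4 * L ^ 2 + L) ≤ δ / 2) {ψ : E × E → ℝ} {A : ℝ} (hA : 0 ≤ A)
    (bound : ∀ z, |ψ z| ≤ A * (1 + ‖z‖ ^ 2)) (z : E × E) :
    |ψ (symplecticStep F h z) * (Real.exp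
        (-(hamiltonian U (symplecticStep F h z) - hamiltonian U z)) - 1)|
      ≤ A * (2 * (2 + 2 * L) ^ 2 * (4 * L ^ 2 + L) * (8 / δ ^ 2)) * h ^ 2
        * Real.exp (δ * (1 + ‖z‖ ^ 2)) := by
  have hL := hF.L_pos
  have energy := abs_hamiltonian_symplecticStep_sub_le hF hU hh hh₁ z
  set κ := 4 * L ^ 2 + L
  set Λ := 2 * (2 + 2 * L) ^ 2
  rw [← mul_assoc, ← abs_neg] at energy
  have observable : |ψ (symplecticStep F h z)| ≤ A * (Λ * (1 + ‖z‖ ^ 2)) :=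
    (bound _).trans (by gcongr; exact one_add_norm_symplecticStep_sq_le hF hh hh₁ z)
  rw [abs_mul]
  calc _ ≤ A * (Λ * (1 + ‖z‖ ^ 2))
        * (h ^ 2 * κ * (1 + ‖z‖ ^ 2) * Real.exp (h ^ 2 * κ * (1 + ‖z‖ ^ 2))) :=
        mul_le_mul observable (abs_exp_sub_one_le_mul_exp energy) (abs_nonneg _) (by positivity)
    _ = A * Λ * κ * h ^ 2 * ((1 + ‖z‖ ^ 2) ^ 2 * Real.exp (h ^ 2 * κ * (1 + ‖z‖ ^ 2))) := by ring
    _ ≤ A * Λ * κ * h ^ 2 * ((1 + ‖z‖ ^ 2) ^ 2 * Real.exp (δ / 2 * (1 + ‖z‖ ^ 2))) := by gcongr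
    _ ≤ A * Λ * κ * h ^ 2 * (8 / δ ^ 2 * Real.exp (δ * (1 + ‖z‖ ^ 2))) := by
        gcongr A * Λ * κ * h ^ 2 * ?_
        exact sq_mul_exp_half_le hδ (by positivity)
    _ = _ := by ring

variable [MeasurableSpace E] [BorelSpace E] [FiniteDimensional ℝ E]

lemma measurePreserving_symplecticStep (hF : Continuous F) :
    MeasurePreserving (symplecticStep F h) (volume : Measure (E × E)) volume := by
  have measurable_F := hF.measurable
  have kick : MeasurePreserving (fun p : E × E ↦ (p.1, p.2 - h • F p.1))
      ((volume : Measure E).prod volume) (volume.prod volume) :=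
    (MeasurePreserving.id _).skew_product (by fun_prop)
      (.of_forall fun x ↦ (measurePreserving_sub_right volume (h • F x)).map_eq)
  have drift : MeasurePreserving (fun p : E × E ↦ (p.1, p.2 + h • p.1))
      ((volume : Measure E).prod volume) (volume.prod volume) :=
    (MeasurePreserving.id _).skew_product (by fun_prop)
      (.of_forall fun v ↦ (measurePreserving_add_right volume (h • v)).map_eq)
  exact kick.comp (Measure.measurePreserving_swap.comp (drift.comp Measure.measurePreserving_swap))

lemma quadGrowth_comp_symplecticStep (hF : DissipativeField F L m B) (hh : 0 < h) (hh₁ : h ≤ 1)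
    {ψ : E × E → ℝ} (hψ : QuadGrowth ψ) : QuadGrowth fun z ↦ ψ (symplecticStep F h z) := by
  obtain ⟨A, hA, bound⟩ := hψ.exists_nonneg_bound
  refine ⟨hψ.1.comp (measurePreserving_symplecticStep hF.continuous).measurable,
    A * (2 * (2 + 2 * L) ^ 2), fun z ↦ (bound _).trans ?_⟩
  rw [mul_assoc]
  exact mul_le_mul_of_nonneg_left (one_add_norm_symplecticStep_sq_le hF hh hh₁ z) hA

lemma abs_integral_comp_symplecticStep_sub_eq (hF : DissipativeField F L m B)
    (hU : ConfiningPotential U F L m B) (hh : 0 < h) (hh₁ : h ≤ 1) {ψ : E × E → ℝ}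
    (hψ : QuadGrowth ψ) (hint : Integrable (fun z ↦ ψ (symplecticStep F h z) * (Real.exp
      (-(hamiltonian U (symplecticStep F h z) - hamiltonian U z)) - 1)) (boltzmann U)) :
    |∫ z, ψ (symplecticStep F h z) ∂boltzmann U - ∫ z, ψ z ∂boltzmann U|
      = |∫ z, ψ (symplecticStep F h z) * (Real.exp
          (-(hamiltonian U (symplecticStep F h z) - hamiltonian U z)) - 1) ∂boltzmann U| := by
  rw [abs_sub_comm, sub_eq_of_eq_add']
  have change : ∫ z, ψ z ∂boltzmann U = ∫ z, ψ (symplecticStep F h z) * Real.exp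
      (-hamiltonian U (symplecticStep F h z) - -hamiltonian U z) ∂boltzmann U :=
    integral_tilted_eq_integral_comp_mul_exp (measurePreserving_symplecticStep hF.continuous)
      hU.measurable_hamiltonian.neg hψ.1
  rw [change, ← integral_add
    (hU.integrable_boltzmann hF.m_pos (quadGrowth_comp_symplecticStep hF hh hh₁ hψ)) hint]
  refine integral_congr_ae (.of_forall fun z ↦ ?_)
  simp only [neg_sub_neg, neg_sub]
  ring

lemma exists_abs_integral_comp_symplecticStep_sub_le (hF : DissipativeField F L m B)
    (hU : ConfiningPotential U F L m B) :
    ∃ K > 0, ∃ h₀ > 0, h₀ ≤ 1 ∧ ∀ h : ℝ, 0 < h → h ≤ h₀ → ∀ ψ : E × E → ℝ, QuadGrowth ψ →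
      ∀ A, 0 ≤ A → (∀ z, |ψ z| ≤ A * (1 + ‖z‖ ^ 2)) →
        |∫ z, ψ (symplecticStep F h z) ∂boltzmann U - ∫ z, ψ z ∂boltzmann U| ≤ A * K * h ^ 2 := by
  obtain ⟨δ, hδ, integrable_exp⟩ := hU.exists_integrable_exp_boltzmann hF.m_pos
  have hL := hF.L_pos
  have := hU.isProbabilityMeasure_boltzmann hF.m_pos
  have hD : 0 < ∫ z, Real.exp (δ * (1 + ‖z‖ ^ 2)) ∂boltzmann U := integral_exp_pos integrable_exp
  refine ⟨2 * (2 + 2 * L) ^ 2 * (4 * L ^ 2 + L) * (8 / δ ^ 2)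
      * ∫ z, Real.exp (δ * (1 + ‖z‖ ^ 2)) ∂boltzmann U, by positivity,
    min 1 (δ / (2 * (4 * L ^ 2 + L))), by positivity,
    min_le_left _ _, fun h hh hle ψ hψ A hA bound ↦ ?_⟩
  have hh₁ : h ≤ 1 := hle.trans (min_le_left _ _)
  have small : h ^ 2 * (4 * L ^ 2 + L) ≤ δ / 2 := by
    have linear : h * (2 * (4 * L ^ 2 + L)) ≤ δ :=
      (le_div_iff₀ (by positivity)).1 (hle.trans (min_le_right _ _))
    have : h ^ 2 * (4 * L ^ 2 + L) ≤ h * (4 * L ^ 2 + L) := by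
      gcongr
      exact pow_le_of_le_one hh.le hh₁ two_ne_zero
    linarith
  have majorant := abs_comp_symplecticStep_mul_exp_sub_one_le hF hU hh hh₁ hδ small hA bound
  have measurable_integrand : Measurable fun z ↦ ψ (symplecticStep F h z) * (Real.exp
      (-(hamiltonian U (symplecticStep F h z) - hamiltonian U z)) - 1) := by
    have := hU.measurable_hamiltonian
    have := (measurePreserving_symplecticStep (h := h) hF.continuous).measurable
    have := hψ.1
    fun_prop
  rw [abs_integral_comp_symplecticStep_sub_eq hF hU hh hh₁ hψ ((integrable_exp.const_mul _).mono'
    measurable_integrand.aestronglyMeasurable (.of_forall majorant))]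
  refine (abs_integral_le_integral_abs.trans (integral_mono_of_nonneg (.of_forall fun _ ↦
    abs_nonneg _) (integrable_exp.const_mul _) (.of_forall majorant))).trans_eq ?_
  rw [integral_const_mul]
  ring

end Symplectic

/-! ### The bias of the invariant measure -/

lemma one_sub_sqrt_one_sub_two_mul_le {u : ℝ} (hu₀ : 0 ≤ u) (hu : 2 * u ≤ 1) :
    1 - √(1 - 2 * u) ≤ 2 * u := by
  have := Real.le_sqrt_of_sq_le (x := 1 - 2 * u) (y := 1 - 2 * u)
    (pow_le_of_le_one (by linarith) (by linarith) two_ne_zero)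
  linarith

lemma abs_one_sub_sub_sqrt_one_sub_two_mul_le {u : ℝ} (hu : 2 * u ≤ 1) :
    |1 - u - √(1 - 2 * u)| ≤ 2 * u ^ 2 := by
  have sqrt_nonneg := Real.sqrt_nonneg (1 - 2 * u)
  have sqrt_le : √(1 - 2 * u) ≤ 1 - u :=
    Real.sqrt_le_iff.2 ⟨by linarith, by linarith [sq_nonneg u, sub_sq 1 u]⟩
  have difference_of_squares :
      (1 - u - √(1 - 2 * u)) * (1 - u + √(1 - 2 * u)) = u ^ 2 := by
    linear_combination - Real.sq_sqrt (by linarith : 0 ≤ 1 - 2 * u)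
  rw [abs_of_nonneg (by linarith)]
  nlinarith

lemma le_one_add_norm_mul_one_add_norm {S T : Type*} [SeminormedAddCommGroup S]
    [SeminormedAddCommGroup T] (z : S) (ξ : T) :
    1 + ‖z‖ ≤ (1 + ‖z‖) * (1 + ‖ξ‖) ∧ ‖ξ‖ ≤ (1 + ‖z‖) * (1 + ‖ξ‖) := by
  have := mul_nonneg (norm_nonneg z) (norm_nonneg ξ)
  constructor <;> linarith [norm_nonneg z, norm_nonneg ξ]

section Bias

variable {E : Type*} [NormedAddCommGroup E] [InnerProductSpace ℝ E]

/-- Gaussian refreshment of the velocity, which preserves the Boltzmann measure. An Euler–Maruyama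
step is close to a refreshment followed by a symplectic Euler step. -/
noncomputable def refresh (γ h : ℝ) (z : E × E) (ξ : E) : E × E :=
  (z.1, √(1 - 2 * (γ * h)) • z.2 + √(2 * γ * h) • ξ)

variable {U : E → ℝ} {F : E → E} {L m B γ h : ℝ}

lemma one_add_norm_refresh_le (hγ : 0 < γ) (hh : 0 < h) (hh₁ : h ≤ 1) (z : E × E) (ξ : E) :
    1 + ‖refresh γ h z ξ‖ ≤ (1 + √(2 * γ)) * ((1 + ‖z‖) * (1 + ‖ξ‖)) := by
  obtain ⟨state, noise⟩ := le_one_add_norm_mul_one_add_norm z ξ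
  have velocity : ‖√(1 - 2 * (γ * h)) • z.2 + √(2 * γ * h) • ξ‖
      ≤ 1 * ‖z‖ + √(2 * γ) * ‖ξ‖ := by
    refine (norm_add_le _ _).trans ?_
    rw [norm_smul, norm_smul, Real.norm_of_nonneg (Real.sqrt_nonneg _),
      Real.norm_of_nonneg (Real.sqrt_nonneg _)]
    have : 2 * γ * h ≤ 2 * γ := mul_le_of_le_one_right (by positivity) hh₁
    gcongr
    · exact Real.sqrt_le_one.2 (by linarith [mul_pos hγ hh])
    · exact norm_snd_le z
  have : ‖refresh γ h z ξ‖ ≤ ‖z‖ + √(2 * γ) * ‖ξ‖ :=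
    max_le ((norm_fst_le z).trans (le_add_of_nonneg_right (by positivity)))
      (velocity.trans_eq (by rw [one_mul]))
  have := mul_le_mul_of_nonneg_left noise (Real.sqrt_nonneg (2 * γ))
  linarith

lemma norm_snd_sub_refresh_snd_le (hγ : 0 < γ) (hh : 0 < h) (hh₁ : h ≤ 1)
    (hγh : 2 * (γ * h) ≤ 1) (z : E × E) (ξ : E) : ‖z.2 - (refresh γ h z ξ).2‖
      ≤ (2 * γ + √(2 * γ)) * √h * ((1 + ‖z‖) * (1 + ‖ξ‖)) := by
  obtain ⟨state, noise⟩ := le_one_add_norm_mul_one_add_norm z ξ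
  set Y := (1 + ‖z‖) * (1 + ‖ξ‖)
  have contraction_le : 1 - √(1 - 2 * (γ * h)) ≤ 2 * γ * √h := by
    calc _ ≤ 2 * (γ * h) := one_sub_sqrt_one_sub_two_mul_le (by positivity) hγh
      _ = 2 * γ * h := by ring
      _ ≤ 2 * γ * √h := by
          gcongr
          exact Real.le_sqrt_of_sq_le (pow_le_of_le_one hh.le hh₁ two_ne_zero)
  have contraction_nonneg : 0 ≤ 1 - √(1 - 2 * (γ * h)) :=
    sub_nonneg.2 (Real.sqrt_le_one.2 (by linarith [mul_pos hγ hh]))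
  have split : z.2 - (refresh γ h z ξ).2 = (1 - √(1 - 2 * (γ * h))) • z.2
      - (√(2 * γ) * √h) • ξ := by
    rw [refresh, sub_smul, one_smul, Real.sqrt_mul (by positivity : 0 ≤ 2 * γ), sub_add_eq_sub_sub]
  calc ‖z.2 - (refresh γ h z ξ).2‖ ≤ (1 - √(1 - 2 * (γ * h))) * ‖z.2‖
        + √(2 * γ) * √h * ‖ξ‖ := by
        rw [split]
        refine (norm_sub_le _ _).trans_eq ?_
        rw [norm_smul, norm_smul, Real.norm_of_nonneg contraction_nonneg,
          Real.norm_of_nonneg (by positivity)]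
    _ ≤ 2 * γ * √h * Y + √(2 * γ) * √h * Y := by
        gcongr
        linarith [norm_snd_le z]
    _ = _ := by ring

lemma step_sub_symplecticStep_refresh (z : E × E) (ξ : E) :
    step F γ h z ξ - symplecticStep F h (refresh γ h z ξ)
      = (h • (z.2 - (refresh γ h z ξ).2), (1 - γ * h - √(1 - 2 * (γ * h))) • z.2
          + h • (F (z.1 + h • (refresh γ h z ξ).2) - F z.1)) := by
  ext1
  · simp [step, symplecticStep, refresh, smul_sub]
  · simp only [step, symplecticStep, refresh, Prod.snd_sub, sub_smul, smul_sub, one_smul]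
    abel

/-- The Lipschitz-type constant of `norm_step_sub_symplecticStep_refresh_le`. -/
noncomputable def splittingConst (L γ : ℝ) : ℝ :=
  2 * γ + 2 * γ ^ 2 + (L + 1) * (1 + √(2 * γ))

lemma norm_step_sub_symplecticStep_refresh_le (hF : DissipativeField F L m B) (hγ : 0 < γ)
    (hh : 0 < h) (hh₁ : h ≤ 1) (hγh : 2 * (γ * h) ≤ 1) (z : E × E) (ξ : E) :
    ‖step F γ h z ξ - symplecticStep F h (refresh γ h z ξ)‖
      ≤ splittingConst L γ * (h * √h) * ((1 + ‖z‖) * (1 + ‖ξ‖)) := by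
  have hL := hF.L_pos
  have velocity := (norm_snd_le _).trans (le_of_add_le_of_nonneg_right
    (one_add_norm_refresh_le hγ hh hh₁ z ξ) zero_le_one)
  have increment := norm_snd_sub_refresh_snd_le hγ hh hh₁ hγh z ξ
  have friction := abs_one_sub_sub_sqrt_one_sub_two_mul_le hγh
  obtain ⟨state, -⟩ := le_one_add_norm_mul_one_add_norm z ξ
  rw [step_sub_symplecticStep_refresh]
  set Y := (1 + ‖z‖) * (1 + ‖ξ‖)
  set w := (refresh γ h z ξ).2
  set q := √(2 * γ)
  have h_le_sqrt : h ≤ √h :=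
    Real.le_sqrt_of_sq_le (pow_le_of_le_one hh.le hh₁ two_ne_zero)
  have hLq : 0 ≤ L * (1 + q) := by positivity
  refine max_le ?_ ?_
  · rw [norm_smul, Real.norm_of_nonneg hh.le]
    calc h * ‖z.2 - w‖ ≤ h * ((2 * γ + q) * √h * Y) := by gcongr
      _ = (2 * γ + q) * (h * √h) * Y := by ring
      _ ≤ _ := by
        gcongr ?_ * (h * √h) * Y
        unfold splittingConst
        nlinarith [sq_nonneg γ]
  · calc _ ≤ |1 - γ * h - √(1 - 2 * (γ * h))| * ‖z.2‖ + h * (L * (h * ‖w‖)) := by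
          refine (norm_add_le _ _).trans ?_
          rw [norm_smul, norm_smul, Real.norm_eq_abs, Real.norm_of_nonneg hh.le]
          gcongr
          simpa [norm_smul, abs_of_pos hh] using hF.lipschitz (z.1 + h • w) z.1
      _ ≤ 2 * (γ * h) ^ 2 * Y + h * (L * (h * ((1 + q) * Y))) := by
          gcongr
          linarith [norm_snd_le z]
      _ = (2 * γ ^ 2 + L * (1 + q)) * (h * h) * Y := by ring
      _ ≤ (2 * γ ^ 2 + L * (1 + q)) * (h * √h) * Y := by gcongr
      _ ≤ splittingConst L γ * (h * √h) * Y := by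
          gcongr ?_ * (h * √h) * Y
          unfold splittingConst
          linarith [Real.sqrt_nonneg (2 * γ)]

lemma exists_abs_comp_step_sub_comp_symplecticStep_refresh_le (hF : DissipativeField F L m B)
    (hγ : 0 < γ) : ∃ K > 0, ∀ h : ℝ, 0 < h → h ≤ 1 → 2 * (γ * h) ≤ 1 → ∀ (ψ : E × E → ℝ) (C : ℝ),
      0 ≤ C → (∀ z z', |ψ z - ψ z'| ≤ C * (1 + ‖z‖ + ‖z'‖) * ‖z - z'‖) → ∀ z ξ,
      |ψ (step F γ h z ξ) - ψ (symplecticStep F h (refresh γ h z ξ))|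
        ≤ C * K * (h * √h) * ((1 + ‖z‖ ^ 2) * (1 + ‖ξ‖ ^ 2)) := by
  have hL := hF.L_pos
  set q := √(2 * γ)
  have hS : 0 < splittingConst L γ := by unfold splittingConst; positivity
  set K := 2 + L + γ + q + (2 + 2 * L) * (1 + q)
  refine ⟨4 * (K * splittingConst L γ), by positivity, fun h hh hh₁ hγh ψ C hC lipschitz z ξ ↦ ?_⟩
  have step_le := one_add_norm_step_le hF hγ hh hh₁ z ξ
  have symplectic_le := one_add_norm_symplecticStep_le hF hh hh₁ (refresh γ h z ξ)
  have refresh_le := mul_le_mul_of_nonneg_left (one_add_norm_refresh_le hγ hh hh₁ z ξ)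
    (by positivity : 0 ≤ 2 + 2 * L)
  have difference := norm_step_sub_symplecticStep_refresh_le hF hγ hh hh₁ hγh z ξ
  obtain ⟨state, noise⟩ := le_one_add_norm_mul_one_add_norm z ξ
  have Y_sq_le : ((1 + ‖z‖) * (1 + ‖ξ‖)) ^ 2 ≤ 4 * ((1 + ‖z‖ ^ 2) * (1 + ‖ξ‖ ^ 2)) := by
    rw [mul_pow]
    exact (mul_le_mul (one_add_norm_sq_le z) (one_add_norm_sq_le ξ) (by positivity)
      (by positivity)).trans_eq (by ring)
  set Y := (1 + ‖z‖) * (1 + ‖ξ‖)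
  have size_le : 1 + ‖step F γ h z ξ‖ + ‖symplecticStep F h (refresh γ h z ξ)‖ ≤ K * Y := by
    linarith [mul_le_mul_of_nonneg_left state (by positivity : 0 ≤ 2 + L + γ),
      mul_le_mul_of_nonneg_left noise (Real.sqrt_nonneg (2 * γ))]
  calc _ ≤ C * (K * Y) * (splittingConst L γ * (h * √h) * Y) :=
        (lipschitz _ _).trans (by gcongr)
    _ = C * (K * splittingConst L γ) * (h * √h) * Y ^ 2 := by ring
    _ ≤ C * (K * splittingConst L γ) * (h * √h)
        * (4 * ((1 + ‖z‖ ^ 2) * (1 + ‖ξ‖ ^ 2))) := by gcongr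
    _ = _ := by ring

variable [MeasurableSpace E] [BorelSpace E] [FiniteDimensional ℝ E] {ψ : E × E → ℝ}

lemma measurePreserving_refresh (hU : ConfiningPotential U F L m B) (hγ : 0 < γ) (hh : 0 < h)
    (hγh : 2 * (γ * h) ≤ 1) : MeasurePreserving (fun p : (E × E) × E ↦ refresh γ h p.1 p.2)
      ((boltzmann U).prod (stdGaussian E)) (boltzmann U) := by
  refine hU.measurePreserving_boltzmann ?_
  rw [Real.sq_sqrt (by linarith), Real.sq_sqrt (by positivity)]
  ring

lemma integrable_comp_step_boltzmann_prod (hF : DissipativeField F L m B)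
    (hU : ConfiningPotential U F L m B) (hγ : 0 < γ) (hh : 0 < h) (hh₁ : h ≤ 1)
    (hψ : QuadGrowth ψ) : Integrable (fun p : (E × E) × E ↦ ψ (step F γ h p.1 p.2))
      ((boltzmann U).prod (stdGaussian E)) := by
  have := hU.isProbabilityMeasure_boltzmann hF.m_pos
  obtain ⟨A, hA, bound⟩ := hψ.exists_nonneg_bound
  exact (((hU.integrable_one_add_norm_sq_boltzmann hF.m_pos).mul_prod
    (integrable_one_add_norm_sq_stdGaussian E)).const_mul (A * (4 * (2 + L + γ) ^ 2 + 4 * γ))).mono'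
    (hψ.1.comp (measurable_uncurry_step hF)).aestronglyMeasurable
    (.of_forall fun p ↦ (abs_comp_step_le hF hγ hh hh₁ hA bound p.1 p.2).trans_eq (by ring))

lemma exists_abs_integral_transition_sub_comp_symplecticStep_le (hF : DissipativeField F L m B)
    (hU : ConfiningPotential U F L m B) (hγ : 0 < γ) :
    ∃ K > 0, ∀ h : ℝ, 0 < h → h ≤ 1 → 2 * (γ * h) ≤ 1 → ∀ ψ : E × E → ℝ, QuadGrowth ψ → ∀ C, 0 ≤ C →
      (∀ z z', |ψ z - ψ z'| ≤ C * (1 + ‖z‖ + ‖z'‖) * ‖z - z'‖) →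
      |∫ z, transition F γ h ψ z ∂boltzmann U - ∫ z, ψ (symplecticStep F h z) ∂boltzmann U|
        ≤ C * K * (h * √h) := by
  have := hU.isProbabilityMeasure_boltzmann hF.m_pos
  have moment := (hU.integrable_one_add_norm_sq_boltzmann hF.m_pos).mul_prod
    (integrable_one_add_norm_sq_stdGaussian E)
  obtain ⟨K, hK, pointwise⟩ := exists_abs_comp_step_sub_comp_symplecticStep_refresh_le hF hγ
  set M := ∫ p : (E × E) × E, (1 + ‖p.1‖ ^ 2) * (1 + ‖p.2‖ ^ 2)
    ∂(boltzmann U).prod (stdGaussian E)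
  have : 0 ≤ M := integral_nonneg fun p ↦ by positivity
  refine ⟨K * (M + 1), by positivity, fun h hh hh₁ hγh ψ hψ C hC lipschitz ↦ ?_⟩
  have refresh_preserves := measurePreserving_refresh hU hγ hh hγh
  have integrable_step := integrable_comp_step_boltzmann_prod hF hU hγ hh hh₁ hψ
  have integrable_symplectic := hU.integrable_boltzmann hF.m_pos
    (quadGrowth_comp_symplecticStep hF hh hh₁ hψ)
  have transition_eq : ∫ z, transition F γ h ψ z ∂boltzmann U
      = ∫ p : (E × E) × E, ψ (step F γ h p.1 p.2) ∂(boltzmann U).prod (stdGaussian E) :=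
    (integral_prod _ integrable_step).symm
  have integrable_symplectic_refresh : Integrable (fun p : (E × E) × E ↦
      ψ (symplecticStep F h (refresh γ h p.1 p.2))) ((boltzmann U).prod (stdGaussian E)) :=
    refresh_preserves.integrable_comp_of_integrable integrable_symplectic
  have symplectic_eq := integral_map (f := fun z ↦ ψ (symplecticStep F h z))
    refresh_preserves.aemeasurable (by
      rw [refresh_preserves.map_eq]
      exact integrable_symplectic.aestronglyMeasurable)
  rw [refresh_preserves.map_eq] at symplectic_eq
  rw [transition_eq, symplectic_eq, ← integral_sub integrable_step integrable_symplectic_refresh]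
  calc _ ≤ ∫ p : (E × E) × E, C * K * (h * √h) * ((1 + ‖p.1‖ ^ 2) * (1 + ‖p.2‖ ^ 2))
        ∂(boltzmann U).prod (stdGaussian E) :=
        abs_integral_le_integral_abs.trans (integral_mono_of_nonneg
          (.of_forall fun _ ↦ abs_nonneg _) (moment.const_mul _)
          (.of_forall fun p ↦ pointwise h hh hh₁ hγh ψ C hC lipschitz p.1 p.2))
    _ = C * K * (h * √h) * M := integral_const_mul _ _
    _ ≤ C * (K * (M + 1)) * (h * √h) := by
        linarith [mul_nonneg (mul_nonneg hC hK.le) (mul_nonneg hh.le (Real.sqrt_nonneg h))]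

lemma exists_abs_integral_transition_sub_le (hF : DissipativeField F L m B)
    (hU : ConfiningPotential U F L m B) (hγ : 0 < γ) :
    ∃ K > 0, ∃ h₀ > 0, h₀ ≤ 1 ∧ ∀ h : ℝ, 0 < h → h ≤ h₀ → ∀ ψ : E × E → ℝ, QuadGrowth ψ →
      ∀ C, 0 ≤ C → (∀ z z', |ψ z - ψ z'| ≤ C * (1 + ‖z‖ + ‖z'‖) * ‖z - z'‖) →
      |∫ z, transition F γ h ψ z ∂boltzmann U - ∫ z, ψ z ∂boltzmann U|
        ≤ C * K * (h * √h) := by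
  have := hU.isProbabilityMeasure_boltzmann hF.m_pos
  obtain ⟨K, hK, splitting⟩ := exists_abs_integral_transition_sub_comp_symplecticStep_le hF hU hγ
  obtain ⟨K', hK', h₁, hh₁, h₁_le, symplectic⟩ :=
    exists_abs_integral_comp_symplecticStep_sub_le hF hU
  refine ⟨K + 2 * K', by positivity, min h₁ (1 / (2 * γ)), by positivity,
    (min_le_left _ _).trans h₁_le, fun h hh hh₀ ψ hψ C hC lipschitz ↦ ?_⟩
  have h_le_one := hh₀.trans ((min_le_left _ _).trans h₁_le)
  have hγh : 2 * (γ * h) ≤ 1 := by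
    have := (le_div_iff₀' (by positivity)).1 (hh₀.trans (min_le_right _ _))
    linarith
  have centered_bound (z : E × E) : |ψ z - ψ 0| ≤ 2 * C * (1 + ‖z‖ ^ 2) := by
    have := lipschitz z 0
    rw [norm_zero, add_zero, sub_zero] at this
    calc |ψ z - ψ 0| ≤ C * ((1 + ‖z‖) * ‖z‖) := this.trans_eq (mul_assoc _ _ _)
      _ ≤ C * (1 + ‖z‖) ^ 2 := by
        rw [sq]
        gcongr
        linarith
      _ ≤ C * (2 * (1 + ‖z‖ ^ 2)) := by gcongr; exact one_add_norm_sq_le z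
      _ = _ := by ring
  have near_invariance := symplectic h hh (hh₀.trans (min_le_left _ _)) (fun z ↦ ψ z - ψ 0)
    (hψ.sub (.const _)) (2 * C) (by positivity) centered_bound
  rw [integral_sub (hU.integrable_boltzmann hF.m_pos
    (quadGrowth_comp_symplecticStep hF hh h_le_one hψ)) (integrable_const _),
    integral_sub (hU.integrable_boltzmann hF.m_pos hψ) (integrable_const _),
    sub_sub_sub_cancel_right] at near_invariance
  have h_sq_le : h ^ 2 ≤ h * √h := by
    rw [sq]
    gcongr
    exact Real.le_sqrt_of_sq_le (pow_le_of_le_one hh.le h_le_one two_ne_zero)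
  calc _ ≤ C * K * (h * √h) + 2 * C * K' * h ^ 2 := (abs_sub_le _ _ _).trans
        (add_le_add (splitting h hh h_le_one hγh ψ hψ C hC lipschitz) near_invariance)
    _ ≤ C * K * (h * √h) + 2 * C * K' * (h * √h) := by gcongr
    _ = _ := by ring

lemma IsPoissonSolution.abs_integral_boltzmann_sub_le (hF : DissipativeField F L m B)
    (hU : ConfiningPotential U F L m B) (hγ : 0 < γ) (hh : 0 < h) (hh₁ : h ≤ 1) {f : E × E → ℝ}
    {C K : ℝ} {e : E × E → ℝ} (hψ : IsPoissonSolution (transition F γ h) f h C ψ e)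
    (hf : QuadGrowth f) (near_invariance : |∫ z, transition F γ h ψ z ∂boltzmann U
      - ∫ z, ψ z ∂boltzmann U| ≤ K * (h * √h)) :
    |∫ z, f z ∂boltzmann U - ∫ z, e z ∂boltzmann U| ≤ K * √h := by
  have integrable_quadGrowth {g : E × E → ℝ} (hg : QuadGrowth g) : Integrable g (boltzmann U) :=
    hU.integrable_boltzmann hF.m_pos hg
  refine le_of_mul_le_mul_left ?_ hh
  calc h * |∫ z, f z ∂boltzmann U - ∫ z, e z ∂boltzmann U|
      = |∫ z, h * (f z - e z) ∂boltzmann U| := by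
        rw [integral_const_mul, integral_sub (integrable_quadGrowth hf)
          (integrable_quadGrowth hψ.quadGrowth_error), abs_mul, abs_of_pos hh]
    _ = |∫ z, transition F γ h ψ z ∂boltzmann U - ∫ z, ψ z ∂boltzmann U| := by
        simp only [← hψ.sub_apply]
        rw [integral_sub (integrable_quadGrowth hψ.quadGrowth) (integrable_quadGrowth
          (quadGrowth_transition hF hγ hh hh₁ hψ.quadGrowth)), abs_sub_comm]
    _ ≤ h * (K * √h) := near_invariance.trans_eq (by ring)

lemma exists_abs_integral_boltzmann_sub_le (hF : DissipativeField F L m B)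
    (hU : ConfiningPotential U F L m B) (hγ : 0 < γ) :
    ∃ K > 0, ∃ h₀ > 0, ∀ h : ℝ, 0 < h → h ≤ h₀ → ∀ (f : E × E → ℝ) (C : ℝ) (ψ e : E × E → ℝ),
      QuadGrowth f → 0 ≤ C → IsPoissonSolution (transition F γ h) f h C ψ e →
      |∫ z, f z ∂boltzmann U - e 0| ≤ C * K * √h := by
  have := hU.isProbabilityMeasure_boltzmann hF.m_pos
  obtain ⟨K, hK, h₀, hh₀, h₀_le, near_invariance⟩ := exists_abs_integral_transition_sub_le hF hU hγ
  have moment := hU.integrable_one_add_norm_sq_boltzmann hF.m_pos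
  set M := ∫ z : E × E, (1 + ‖z‖ ^ 2) ∂boltzmann U
  have : 0 ≤ M := integral_nonneg fun z ↦ by positivity
  refine ⟨K + 2 * M, by positivity, h₀, hh₀, fun h hh hh_le f C ψ e hf hC hψ ↦ ?_⟩
  have hh₁ := hh_le.trans h₀_le
  have mean_error := hψ.abs_integral_boltzmann_sub_le hF hU hγ hh hh₁ hf
    (near_invariance h hh hh_le ψ hψ.quadGrowth C hC fun z z' ↦ (hψ.abs_sub_le z z').trans
      (by gcongr; exact min_le_right _ _))
  have error_oscillation : |∫ z, e z ∂boltzmann U - e 0| ≤ 2 * C * h * M := by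
    calc _ = |∫ z, (e z - e 0) ∂boltzmann U| := by
          rw [integral_sub (hU.integrable_boltzmann hF.m_pos hψ.quadGrowth_error)
            (integrable_const _), integral_const, probReal_univ, one_smul]
      _ ≤ ∫ z, 2 * C * h * (1 + ‖z‖ ^ 2) ∂boltzmann U :=
          abs_integral_le_integral_abs.trans (integral_mono_of_nonneg
            (.of_forall fun _ ↦ abs_nonneg _) (moment.const_mul _) (.of_forall fun z ↦ ?_))
      _ = _ := integral_const_mul _ _
    calc |e z - e 0| ≤ C * h * (1 + ‖z‖ + ‖(0 : E × E)‖) := hψ.abs_error_sub_le z 0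
      _ ≤ C * h * (2 * (1 + ‖z‖ ^ 2)) := by
          rw [norm_zero, add_zero]
          gcongr
          linarith [sq_nonneg (‖z‖ - 1), sq_nonneg ‖z‖]
      _ = _ := by ring
  have h_le_sqrt : h ≤ √h :=
    Real.le_sqrt_of_sq_le (pow_le_of_le_one hh.le hh₁ two_ne_zero)
  calc _ ≤ C * K * √h + 2 * C * h * M :=
        (abs_sub_le _ _ _).trans (add_le_add mean_error error_oscillation)
    _ ≤ C * K * √h + 2 * C * √h * M := by gcongr
    _ = _ := by ring

end Bias

/-! ### Potentials that are strongly convex outside a ball -/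

section Potential

variable {E : Type*} [NormedAddCommGroup E] [InnerProductSpace ℝ E]
  {U : E → ℝ} {C B m R : ℝ}

lemma differentiable_fderiv_of_contDiff_two (hU : ContDiff ℝ 2 U) :
    Differentiable ℝ (fderiv ℝ U) :=
  (hU.fderiv_right (m := 1) le_rfl).differentiable one_ne_zero

lemma norm_fderiv_sub_fderiv_le (hU : ContDiff ℝ 2 U)
    (hessian_le : ∀ x, ‖iteratedFDeriv ℝ 2 U x‖ ≤ C) (x y : E) :
    ‖fderiv ℝ U x - fderiv ℝ U y‖ ≤ C * ‖x - y‖ := by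
  refine convex_univ.norm_image_sub_le_of_norm_fderiv_le
    (fun z _ ↦ differentiable_fderiv_of_contDiff_two hU z) (fun z _ ↦ ?_) (Set.mem_univ y)
    (Set.mem_univ x)
  rw [← norm_iteratedFDeriv_one, norm_iteratedFDeriv_fderiv]
  exact hessian_le z

lemma hasDerivAt_smul_right (x : E) (t : ℝ) : HasDerivAt (fun t : ℝ ↦ t • x) x t := by
  simpa using (hasDerivAt_id t).smul_const x

lemma mul_norm_sq_le_fderiv_sub_fderiv (hU : ContDiff ℝ 2 U)
    (convex : ∀ x, R ≤ ‖x‖ → ∀ y, m * ‖y‖ ^ 2 ≤ iteratedFDeriv ℝ 2 U x ![y, y]) {x : E} {t₀ : ℝ}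
    (ht₀ : 0 ≤ t₀) (ht₁ : t₀ ≤ 1) (hR : R ≤ t₀ * ‖x‖) :
    m * ‖x‖ ^ 2 * (1 - t₀) ≤ fderiv ℝ U x x - fderiv ℝ U (t₀ • x) x := by
  have hasDerivAt_ray (t : ℝ) : HasDerivAt (fun t : ℝ ↦ fderiv ℝ U (t • x) x)
      (fderiv ℝ (fderiv ℝ U) (t • x) x x) t := by
    have := (differentiable_fderiv_of_contDiff_two hU (t • x)).hasFDerivAt.comp_hasDerivAt t
      (hasDerivAt_smul_right x t)
    exact (this.clm_apply (hasDerivAt_const t x)).congr_deriv (by simp)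
  have mean_value := (convex_Icc t₀ 1).mul_sub_le_image_sub_of_le_deriv
    (f := fun t : ℝ ↦ fderiv ℝ U (t • x) x) (C := m * ‖x‖ ^ 2)
    (fun t _ ↦ (hasDerivAt_ray t).continuousAt.continuousWithinAt)
    (fun t _ ↦ (hasDerivAt_ray t).differentiableAt.differentiableWithinAt)
    (fun t ht ↦ by
      rw [interior_Icc] at ht
      have hR_ray : R ≤ ‖t • x‖ := by
        rw [norm_smul, Real.norm_of_nonneg (ht₀.trans ht.1.le)]
        exact hR.trans (mul_le_mul_of_nonneg_right ht.1.le (norm_nonneg x))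
      have convex_ray := convex (t • x) hR_ray x
      rw [(hasDerivAt_ray t).deriv]
      rwa [iteratedFDeriv_two_apply] at convex_ray)
    t₀ (Set.left_mem_Icc.2 ht₁) 1 (Set.right_mem_Icc.2 ht₁) ht₁
  simpa only [one_smul] using mean_value

variable [CompleteSpace E]

lemma norm_gradient_sub_gradient_le (hU : ContDiff ℝ 2 U)
    (hessian_le : ∀ x, ‖iteratedFDeriv ℝ 2 U x‖ ≤ C) (x y : E) :
    ‖gradient U x - gradient U y‖ ≤ C * ‖x - y‖ := by
  rw [gradient, gradient, ← map_sub, LinearIsometryEquiv.norm_map]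
  exact norm_fderiv_sub_fderiv_le hU hessian_le x y

lemma mul_norm_sq_sub_le_inner_gradient (hU : ContDiff ℝ 2 U) (hm : 0 ≤ m) (hR : 0 < R)
    (convex : ∀ x, R ≤ ‖x‖ → ∀ y, m * ‖y‖ ^ 2 ≤ iteratedFDeriv ℝ 2 U x ![y, y])
    (gradient_le : ∀ x, ‖x‖ ≤ R → ‖gradient U x‖ ≤ C) (x : E) :
    m * ‖x‖ ^ 2 - (m * R + C) * ‖x‖ ≤ inner ℝ x (gradient U x) := by
  have inner_ge {w : E} (hw : ‖w‖ ≤ R) : -(C * ‖x‖) ≤ fderiv ℝ U w x := by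
    rw [← inner_gradient_left, ← neg_le_neg_iff, neg_neg]
    exact (neg_le_abs _).trans
      ((abs_real_inner_le_norm _ _).trans (by gcongr; exact gradient_le w hw))
  rw [real_inner_comm, inner_gradient_left]
  rcases le_or_gt ‖x‖ R with norm_le | lt_norm
  · have : m * ‖x‖ ^ 2 ≤ m * R * ‖x‖ := by
      rw [sq, mul_assoc]
      gcongr
    linarith [inner_ge norm_le]
  · have norm_pos : 0 < ‖x‖ := hR.trans lt_norm
    have radius_eq : R / ‖x‖ * ‖x‖ = R := div_mul_cancel₀ _ norm_pos.ne'
    have growth := mul_norm_sq_le_fderiv_sub_fderiv hU convex (x := x) (by positivity)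
      ((div_le_one norm_pos).2 lt_norm.le) radius_eq.ge
    have at_sphere := inner_ge (w := (R / ‖x‖) • x) (by
      rw [norm_smul, Real.norm_of_nonneg (by positivity), radius_eq])
    have : m * ‖x‖ ^ 2 * (1 - R / ‖x‖) = m * ‖x‖ ^ 2 - m * R * ‖x‖ := by
      linear_combination (- m * ‖x‖) * radius_eq
    linarith

lemma le_of_mul_norm_sq_sub_le_inner_gradient (hU : Differentiable ℝ U)
    (dissipative : ∀ x, m * ‖x‖ ^ 2 - B * ‖x‖ ≤ inner ℝ x (gradient U x)) (x : E) :
    U 0 + m / 2 * ‖x‖ ^ 2 - B * ‖x‖ ≤ U x := by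
  set g : ℝ → ℝ := fun t ↦ U (t • x) - (m / 2 * ‖x‖ ^ 2 * t ^ 2 - B * ‖x‖ * t)
  have hasDerivAt_g (t : ℝ) :
      HasDerivAt g (fderiv ℝ U (t • x) x - (m * ‖x‖ ^ 2 * t - B * ‖x‖)) t := by
    refine (((hU (t • x)).hasFDerivAt.comp_hasDerivAt t (hasDerivAt_smul_right x t)).sub
      (((hasDerivAt_pow 2 t).const_mul (m / 2 * ‖x‖ ^ 2)).sub
        ((hasDerivAt_id t).const_mul (B * ‖x‖)))).congr_deriv ?_
    simp only [Nat.cast_ofNat, Nat.add_one_sub_one, pow_one, mul_one]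
    ring
  have monotone_g := monotoneOn_of_deriv_nonneg (convex_Icc (0 : ℝ) 1)
    (fun t _ ↦ (hasDerivAt_g t).continuousAt.continuousWithinAt)
    (fun t _ ↦ (hasDerivAt_g t).differentiableAt.differentiableWithinAt)
    (fun t ht ↦ by
      rw [interior_Icc] at ht
      rw [(hasDerivAt_g t).deriv]
      have := dissipative (t • x)
      rw [norm_smul, Real.norm_of_nonneg ht.1.le, real_inner_smul_left, real_inner_comm,
        inner_gradient_left] at this
      exact le_of_mul_le_mul_left (by linarith) ht.1)
  have := monotone_g (Set.left_mem_Icc.2 zero_le_one) (Set.right_mem_Icc.2 zero_le_one) zero_le_one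
  simp only [g, zero_smul, one_smul] at this
  linarith

lemma abs_sub_sub_inner_gradient_le (hU : ContDiff ℝ 2 U) (hC : 0 ≤ C)
    (hessian_le : ∀ x, ‖iteratedFDeriv ℝ 2 U x‖ ≤ C) (x y : E) :
    |U y - U x - inner ℝ (gradient U x) (y - x)| ≤ C * ‖y - x‖ ^ 2 := by
  have := (convex_segment x y).norm_image_sub_le_of_norm_fderiv_le' (f := U) (φ := fderiv ℝ U x)
    (C := C * ‖y - x‖) (fun z _ ↦ hU.differentiable two_ne_zero z) (fun z hz ↦ by
      refine (norm_fderiv_sub_fderiv_le hU hessian_le z x).trans ?_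
      gcongr
      exact norm_sub_le_of_mem_segment hz)
    (left_mem_segment ℝ x y) (right_mem_segment ℝ x y)
  rw [inner_gradient_left, sq, ← mul_assoc]
  exact this

lemma exists_dissipativeField_confiningPotential (hU : ContDiff ℝ 2 U)
    (hessian_le : ∀ x, ‖iteratedFDeriv ℝ 2 U x‖ ≤ C) (hm : 0 < m)
    (convex : ∀ x, R ≤ ‖x‖ → ∀ y, m * ‖y‖ ^ 2 ≤ iteratedFDeriv ℝ 2 U x ![y, y]) :
    ∃ L B, DissipativeField (gradient U) L m B ∧ ConfiningPotential U (gradient U) L m B := by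
  have hC : 0 ≤ C := (norm_nonneg _).trans (hessian_le 0)
  set L := C + ‖gradient U 0‖ + 1
  set R' := max R 1
  have hR' : 0 < R' := by positivity
  have lipschitz (x y : E) : ‖gradient U x - gradient U y‖ ≤ L * ‖x - y‖ :=
    (norm_gradient_sub_gradient_le hU hessian_le x y).trans
      (by gcongr; linarith [norm_nonneg (gradient U 0)])
  have growth (x : E) : ‖gradient U x‖ ≤ L * (‖x‖ + 1) := by
    have at_zero := norm_le_norm_add_norm_sub' (gradient U x) (gradient U 0)
    have difference := lipschitz x 0
    rw [sub_zero] at difference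
    linarith
  have dissipative := mul_norm_sq_sub_le_inner_gradient hU hm.le hR'
    (fun x hx ↦ convex x ((le_max_left _ _).trans hx)) (C := L * (R' + 1))
    fun x hx ↦ (growth x).trans (by gcongr)
  refine ⟨L, m * R' + L * (R' + 1), ⟨lipschitz, growth, dissipative, by positivity, hm⟩,
    hU.continuous, fun x y ↦ ?_,
    le_of_mul_norm_sq_sub_le_inner_gradient (hU.differentiable two_ne_zero) dissipative⟩
  exact (abs_sub_sub_inner_gradient_le hU hC hessian_le x y).trans
    (by gcongr; linarith [norm_nonneg (gradient U 0)])

end Potential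

/-! ### Second moments along a random recursion -/

section SecondMoment

variable {Ω : Type*} {mΩ : MeasurableSpace Ω} {P : Measure Ω}

lemma lintegral_ofReal_sq (u : Ω → ℝ) :
    ∫⁻ ω, ENNReal.ofReal (u ω ^ 2) ∂P = eLpNorm u 2 P ^ 2 := by
  have := eLpNorm_nnreal_pow_eq_lintegral (f := u) (μ := P) (p := 2) two_ne_zero
  simp only [NNReal.coe_ofNat, ENNReal.rpow_ofNat, ENNReal.coe_ofNat] at this
  rw [this]
  simp only [Real.enorm_eq_ofReal_abs, ← ENNReal.ofReal_pow (abs_nonneg _), sq_abs]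

lemma lintegral_ofReal_sq_le_iff {u v : Ω → ℝ} {a : ℝ} (ha : 0 ≤ a) :
    ∫⁻ ω, ENNReal.ofReal (u ω ^ 2) ∂P
        ≤ ENNReal.ofReal (a ^ 2) * ∫⁻ ω, ENNReal.ofReal (v ω ^ 2) ∂P ↔
      eLpNorm u 2 P ≤ ENNReal.ofReal a * eLpNorm v 2 P := by
  rw [lintegral_ofReal_sq, lintegral_ofReal_sq, ENNReal.ofReal_pow ha, ← mul_pow,
    ENNReal.pow_le_pow_left_iff two_ne_zero]

lemma eLpNorm_const_mul_of_nonneg {c : ℝ} (hc : 0 ≤ c) (u : Ω → ℝ) (p : ℝ≥0∞) :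
    eLpNorm (fun ω ↦ c * u ω) p P = ENNReal.ofReal c * eLpNorm u p P := by
  rw [← Real.enorm_of_nonneg hc]
  exact eLpNorm_const_smul c u p P

lemma eLpNorm_add_le_ofReal_mul {u v : Ω → ℝ} {p : ℝ≥0∞} (hp : 1 ≤ p)
    (hu_meas : Measurable u) (hv_meas : Measurable v) {a b : ℝ}
    (ha : 0 ≤ a) (hb : 0 ≤ b) {A : ℝ≥0∞} (hu : eLpNorm u p P ≤ ENNReal.ofReal a * A)
    (hv : eLpNorm v p P ≤ ENNReal.ofReal b * A) :
    eLpNorm (fun ω ↦ u ω + v ω) p P ≤ ENNReal.ofReal (a + b) * A := by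
  rw [ENNReal.ofReal_add ha hb, add_mul]
  exact (eLpNorm_add_le hu_meas.aestronglyMeasurable hv_meas.aestronglyMeasurable hp).trans
    (add_le_add hu hv)

lemma lintegral_ofReal_sq_add_sub_integral [IsProbabilityMeasure P] {Y : Ω → ℝ}
    (hY : MemLp Y 2 P) (s : ℝ) :
    ∫⁻ ω, ENNReal.ofReal ((s + (Y ω - ∫ ω', Y ω' ∂P)) ^ 2) ∂P
      = ENNReal.ofReal (s ^ 2 + Var[Y; P]) := by
  have centered : MemLp (fun ω ↦ Y ω - ∫ ω', Y ω' ∂P) 2 P := hY.sub (memLp_const _)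
  have shifted : MemLp (fun ω ↦ s + (Y ω - ∫ ω', Y ω' ∂P)) 2 P := (memLp_const s).add centered
  have shifted_mean : ∫ ω, (s + (Y ω - ∫ ω', Y ω' ∂P)) ∂P = s := by
    rw [integral_add (integrable_const s) (centered.integrable one_le_two),
      integral_sub (hY.integrable one_le_two) (integrable_const _)]
    simp
  have variance_shifted := variance_eq_sub shifted
  rw [variance_const_add centered.aestronglyMeasurable,
    variance_sub_const hY.aestronglyMeasurable, shifted_mean] at variance_shifted
  rw [← ofReal_integral_eq_lintegral_ofReal shifted.integrable_sq
    (.of_forall fun ω ↦ sq_nonneg _), variance_shifted]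
  simp

end SecondMoment

section RandomRecursion

variable {Ω α β : Type*} {m₀ mΩ : MeasurableSpace Ω} [MeasurableSpace α] [mβ : MeasurableSpace β]
  {P : Measure Ω} {W : ℕ → Ω → α} {ξ : ℕ → Ω → β} {Ψ : α → β → α}

lemma measurable_recursion {ℱ : ℕ → MeasurableSpace Ω} (mono : Monotone ℱ)
    (hW₀ : Measurable[ℱ 0] (W 0)) (hξ : ∀ n, Measurable[ℱ (n + 1)] (ξ n))
    (hΨ : Measurable (Function.uncurry Ψ)) (hW : ∀ n ω, W (n + 1) ω = Ψ (W n ω) (ξ n ω)) (n : ℕ) :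
    Measurable[ℱ n] (W n) := by
  induction n with
  | zero => exact hW₀
  | succ n ih =>
    rw [funext (hW n)]
    exact hΨ.comp ((ih.mono (mono n.le_succ) le_rfl).prodMk (hξ n))

lemma indepFun_recursion (hm₀ : m₀ ≤ mΩ) (hξ : ∀ n, Measurable[mΩ] (ξ n))
    (indep : iIndep (fun i : Option ℕ ↦ i.elim m₀ fun n ↦ mβ.comap (ξ n)) P)
    (hW₀ : Measurable[m₀] (W 0)) (hΨ : Measurable (Function.uncurry Ψ))
    (hW : ∀ n ω, W (n + 1) ω = Ψ (W n ω) (ξ n ω)) (n : ℕ) : IndepFun (W n) (ξ n) P := by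
  set 𝒢 : Option ℕ → MeasurableSpace Ω := fun i ↦ i.elim m₀ fun n ↦ mβ.comap (ξ n)
  have h𝒢 : ∀ i, 𝒢 i ≤ mΩ := Option.forall.2 ⟨hm₀, fun k ↦ (hξ k).comap_le⟩
  set past : ℕ → Set (Option ℕ) := fun k ↦ {i | ∀ j, i = some j → j < k}
  have past_mono : Monotone past := fun k k' hk i hi j hj ↦ (hi j hj).trans_le hk
  have le_past {i : Option ℕ} {k : ℕ} (hi : i ∈ past k) : 𝒢 i ≤ ⨆ i ∈ past k, 𝒢 i :=
    le_iSup₂_of_le i hi le_rfl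
  have measurable_past := measurable_recursion (ℱ := fun k ↦ ⨆ i ∈ past k, 𝒢 i)
    (fun k k' hk ↦ biSup_mono (past_mono hk))
    (hW₀.mono (le_past (i := none) (by simp [past])) le_rfl)
    (fun k ↦ (comap_measurable (ξ k)).mono (le_past (i := some k) (by simp [past])) le_rfl) hΨ hW n
  have indep_past := indep_iSup_of_disjoint h𝒢 indep (S := past n) (T := {some n})
    (by simp [past])
  rw [iSup_singleton] at indep_past
  exact (IndepFun_iff_Indep _ _ _).2 (indep_of_indep_of_le_left indep_past measurable_past.comap_le)

lemma lintegral_comp_of_indepFun [IsFiniteMeasure P] {W : Ω → α} {ξ : Ω → β} (hW : Measurable W)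
    (hξ : Measurable ξ) (indep : IndepFun W ξ P) {g : α → β → ℝ≥0∞}
    (hg : Measurable (Function.uncurry g)) :
    ∫⁻ ω, g (W ω) (ξ ω) ∂P = ∫⁻ ω, ∫⁻ x, g (W ω) x ∂P.map ξ ∂P := by
  calc ∫⁻ ω, g (W ω) (ξ ω) ∂P
      = ∫⁻ p, Function.uncurry g p ∂P.map fun ω ↦ (W ω, ξ ω) :=
        (lintegral_map hg (hW.prodMk hξ)).symm
    _ = ∫⁻ ω, ∫⁻ x, g (W ω) x ∂P.map ξ ∂P := by
        rw [(indepFun_iff_map_prod_eq_prod_map_map hW.aemeasurable hξ.aemeasurable).1 indep,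
          lintegral_prod _ hg.aemeasurable, lintegral_map hg.lintegral_prod_right' hW]
        rfl

lemma eLpNorm_add_sq_le_of_indepFun [IsFiniteMeasure P] {W : Ω → α} {S : Ω → ℝ} {ξ : Ω → β}
    (hW : Measurable W) (hS : Measurable S) (hξ : Measurable ξ)
    (indep : IndepFun (fun ω ↦ (W ω, S ω)) ξ P) {D : α → β → ℝ} {v : α → ℝ}
    (hD : Measurable (Function.uncurry D))
    (conditional : ∀ s w, ∫⁻ x, ENNReal.ofReal ((s + D w x) ^ 2) ∂P.map ξ
      ≤ ENNReal.ofReal (s ^ 2 + v w ^ 2)) :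
    eLpNorm (fun ω ↦ S ω + D (W ω) (ξ ω)) 2 P ^ 2
      ≤ eLpNorm S 2 P ^ 2 + eLpNorm (fun ω ↦ v (W ω)) 2 P ^ 2 := by
  simp only [← lintegral_ofReal_sq]
  calc ∫⁻ ω, ENNReal.ofReal ((S ω + D (W ω) (ξ ω)) ^ 2) ∂P
      = ∫⁻ ω, ∫⁻ x, ENNReal.ofReal ((S ω + D (W ω) x) ^ 2) ∂P.map ξ ∂P :=
        lintegral_comp_of_indepFun (hW.prodMk hS) hξ indep
          (g := fun w x ↦ ENNReal.ofReal ((w.2 + D w.1 x) ^ 2)) (by fun_prop)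
    _ ≤ ∫⁻ ω, (ENNReal.ofReal (S ω ^ 2) + ENNReal.ofReal (v (W ω) ^ 2)) ∂P :=
        lintegral_mono fun ω ↦ (conditional _ _).trans ENNReal.ofReal_add_le
    _ = _ := lintegral_add_left (hS.pow_const 2).ennreal_ofReal _

lemma eLpNorm_sum_le_of_recursion [IsFiniteMeasure P] (hm₀ : m₀ ≤ mΩ)
    (hξ : ∀ n, Measurable[mΩ] (ξ n))
    (indep : iIndep (fun i : Option ℕ ↦ i.elim m₀ fun n ↦ mβ.comap (ξ n)) P)
    (hW₀ : Measurable[m₀] (W 0)) (hΨ : Measurable (Function.uncurry Ψ))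
    (hW : ∀ n ω, W (n + 1) ω = Ψ (W n ω) (ξ n ω)) {D : α → β → ℝ} {v : α → ℝ} {A : ℝ≥0∞}
    (hD : Measurable (Function.uncurry D))
    (conditional : ∀ n s w, ∫⁻ x, ENNReal.ofReal ((s + D w x) ^ 2) ∂P.map (ξ n)
      ≤ ENNReal.ofReal (s ^ 2 + v w ^ 2))
    (hA : ∀ n, eLpNorm (fun ω ↦ v (W n ω)) 2 P ≤ A) (n : ℕ) :
    eLpNorm (fun ω ↦ ∑ i ∈ Finset.range n, D (W i ω) (ξ i ω)) 2 P ≤ ENNReal.ofReal √n * A := by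
  set S : ℕ → Ω → ℝ := fun n ω ↦ ∑ i ∈ Finset.range n, D (W i ω) (ξ i ω)
  -- The pair `(W, S)` is again a recursion driven by `ξ`, so it is independent of the next noise.
  set Φ : α × ℝ → β → α × ℝ := fun w x ↦ (Ψ w.1 x, w.2 + D w.1 x)
  have hΦ : Measurable (Function.uncurry Φ) := by fun_prop
  have hWS (n : ℕ) (ω : Ω) : (W (n + 1) ω, S (n + 1) ω) = Φ (W n ω, S n ω) (ξ n ω) := by
    simp only [S, Φ, hW, Finset.sum_range_succ]
  have hWS₀ : Measurable[m₀] fun ω ↦ (W 0 ω, S 0 ω) := by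
    simpa only [S, Finset.range_zero, Finset.sum_empty] using hW₀.prodMk measurable_const
  have hWS_meas := measurable_recursion (W := fun n ω ↦ (W n ω, S n ω)) (ℱ := fun _ ↦ mΩ)
    monotone_const (hWS₀.mono hm₀ le_rfl) hξ hΦ hWS
  suffices ∀ n : ℕ, eLpNorm (S n) 2 P ^ 2 ≤ n * A ^ 2 by
    rw [← ENNReal.pow_le_pow_left_iff two_ne_zero, mul_pow, ← ENNReal.ofReal_pow (by positivity),
      Real.sq_sqrt (by positivity), ENNReal.ofReal_natCast]
    exact this n
  intro n
  induction n with
  | zero => simp [S]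
  | succ n ih =>
    have indep_n := indepFun_recursion (W := fun n ω ↦ (W n ω, S n ω)) hm₀ hξ indep hWS₀ hΦ hWS n
    calc eLpNorm (S (n + 1)) 2 P ^ 2
        = eLpNorm (fun ω ↦ S n ω + D (W n ω) (ξ n ω)) 2 P ^ 2 := by
          simp only [S, Finset.sum_range_succ]
      _ ≤ eLpNorm (S n) 2 P ^ 2 + eLpNorm (fun ω ↦ v (W n ω)) 2 P ^ 2 :=
          eLpNorm_add_sq_le_of_indepFun (hWS_meas n).fst (hWS_meas n).snd (hξ n) indep_n hD
            (conditional n)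
      _ ≤ n * A ^ 2 + A ^ 2 := by
          gcongr
          exact hA n
      _ = (n + 1 : ℕ) * A ^ 2 := by
          push_cast
          ring

end RandomRecursion

/-! ### The Euler–Maruyama chain -/

section OneStepVariance

variable {E : Type*} [NormedAddCommGroup E] [InnerProductSpace ℝ E] {F : E → E}
  {L m B C γ h : ℝ} {ψ : E × E → ℝ}

lemma abs_comp_step_sub_comp_step_zero_le (hF : DissipativeField F L m B) (hγ : 0 < γ)
    (hh : 0 < h) (hh₁ : h ≤ 1) (hC : 0 ≤ C)
    (hψ : ∀ z z', |ψ z - ψ z'| ≤ C * (1 + ‖z‖ + ‖z'‖) * ‖z - z'‖) (z : E × E) (ξ : E) :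
    |ψ (step F γ h z ξ) - ψ (step F γ h z 0)|
      ≤ C * ((2 * (2 + L + γ) + √(2 * γ)) * √(2 * γ)) * √h * (1 + ‖z‖) * (1 + ‖ξ‖) ^ 2 := by
  have hL := hF.L_pos
  obtain ⟨state, noise⟩ := le_one_add_norm_mul_one_add_norm z ξ
  set Y := (1 + ‖z‖) * (1 + ‖ξ‖)
  have size : 1 + ‖step F γ h z ξ‖ + ‖step F γ h z 0‖ ≤ (2 * (2 + L + γ) + √(2 * γ)) * Y := by
    have noisy := one_add_norm_step_le hF hγ hh hh₁ z ξ
    have noiseless := one_add_norm_step_le hF hγ hh hh₁ z 0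
    rw [norm_zero, mul_zero, add_zero] at noiseless
    have : (2 + L + γ) * (1 + ‖z‖) ≤ (2 + L + γ) * Y := by gcongr
    have : √(2 * γ) * ‖ξ‖ ≤ √(2 * γ) * Y := by gcongr
    linarith
  have increment := hψ (step F γ h z ξ) (step F γ h z 0)
  rw [norm_step_sub_step_zero, Real.sqrt_mul (by positivity)] at increment
  calc |ψ (step F γ h z ξ) - ψ (step F γ h z 0)|
      ≤ C * ((2 * (2 + L + γ) + √(2 * γ)) * Y) * (√(2 * γ) * √h * (1 + ‖ξ‖)) := by
        refine increment.trans ?_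
        gcongr
        linarith
    _ = _ := by ring

variable [FiniteDimensional ℝ E] [MeasurableSpace E] [BorelSpace E]

variable (E) in
lemma memLp_one_add_norm_sq_stdGaussian :
    MemLp (fun ξ : E ↦ (1 + ‖ξ‖) ^ 2) 2 (stdGaussian E) := by
  rw [memLp_two_iff_integrable_sq (by fun_prop)]
  have binomial : (fun ξ : E ↦ ((1 + ‖ξ‖) ^ 2) ^ 2)
      = fun ξ ↦ ∑ k ∈ Finset.range 5, (Nat.choose 4 k : ℝ) * ‖ξ‖ ^ k := by
    ext ξ
    simp only [Finset.sum_range_succ, Finset.sum_range_zero]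
    norm_num [Nat.choose]
    ring
  rw [binomial]
  exact integrable_finsetSum _ fun k _ ↦ (integrable_norm_pow_stdGaussian k).const_mul _

lemma exists_variance_comp_step_le (hF : DissipativeField F L m B) (hγ : 0 < γ) :
    ∃ K > 0, ∀ h : ℝ, 0 < h → h ≤ 1 → ∀ (ψ : E × E → ℝ) (C : ℝ), Measurable ψ → 0 ≤ C →
      (∀ z z', |ψ z - ψ z'| ≤ C * (1 + ‖z‖ + ‖z'‖) * ‖z - z'‖) → ∀ z,
      MemLp (fun ξ ↦ ψ (step F γ h z ξ)) 2 (stdGaussian E) ∧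
        Var[fun ξ ↦ ψ (step F γ h z ξ); stdGaussian E] ≤ (C * K * √h * (1 + ‖z‖)) ^ 2 := by
  have hL := hF.L_pos
  set K := (2 * (2 + L + γ) + √(2 * γ)) * √(2 * γ)
  set M := ∫ ξ : E, ((1 + ‖ξ‖) ^ 2) ^ 2 ∂stdGaussian E
  have hM : 0 ≤ M := integral_nonneg fun ξ ↦ by positivity
  refine ⟨K * (√M + 1), by positivity, fun h hh hh₁ ψ C measurable_ψ hC hψ z ↦ ?_⟩
  set a := C * K * √h * (1 + ‖z‖)
  have bound (ξ : E) : |ψ (step F γ h z ξ) - ψ (step F γ h z 0)| ≤ a * (1 + ‖ξ‖) ^ 2 :=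
    abs_comp_step_sub_comp_step_zero_le hF hγ hh hh₁ hC hψ z ξ
  have measurable_comp : Measurable fun ξ ↦ ψ (step F γ h z ξ) :=
    measurable_ψ.comp (measurable_step hF z)
  have majorant := (memLp_one_add_norm_sq_stdGaussian E).const_mul a
  have increment : MemLp (fun ξ ↦ ψ (step F γ h z ξ) - ψ (step F γ h z 0)) 2 (stdGaussian E) :=
    majorant.mono (measurable_comp.sub measurable_const).aestronglyMeasurable
      (.of_forall fun ξ ↦ (bound ξ).trans (le_abs_self _))
  refine ⟨by simpa only [Pi.add_def, sub_add_cancel] using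
    increment.add (memLp_const (ψ (step F γ h z 0))), ?_⟩
  calc Var[fun ξ ↦ ψ (step F γ h z ξ); stdGaussian E]
      ≤ ∫ ξ, (ψ (step F γ h z ξ) - ψ (step F γ h z 0)) ^ 2 ∂stdGaussian E := by
        rw [← variance_sub_const measurable_comp.aestronglyMeasurable]
        exact variance_le_expectation_sq increment.aestronglyMeasurable
    _ ≤ ∫ ξ, a ^ 2 * ((1 + ‖ξ‖) ^ 2) ^ 2 ∂stdGaussian E := by
        refine integral_mono increment.integrable_sq
          ((memLp_one_add_norm_sq_stdGaussian E).integrable_sq.const_mul _) fun ξ ↦ ?_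
        simp only [← mul_pow]
        exact sq_le_sq' (neg_le_of_abs_le (bound ξ)) (le_of_abs_le (bound ξ))
    _ = (a * √M) ^ 2 := by rw [integral_const_mul, mul_pow a, Real.sq_sqrt hM]
    _ ≤ (a * (√M + 1)) ^ 2 := by
        gcongr
        linarith
    _ = _ := by ring

end OneStepVariance

section Chain

variable {E : Type*} [NormedAddCommGroup E] [InnerProductSpace ℝ E] [FiniteDimensional ℝ E]
  [MeasurableSpace E] [BorelSpace E] {F : E → E} {L m B C γ h : ℝ} {f ψ e : E × E → ℝ}

/-- `Z` is an Euler–Maruyama chain driven by the noise `ξ`, with time step `h` and damping `γ`, for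
the underdamped Langevin dynamics with drift `-F`. The index `none` in `indep` stands for the
initial state and `some n` for the `n`-th noise. -/
structure IsEulerMaruyamaChain {Ω : Type*} [MeasurableSpace Ω] (F : E → E) (γ h : ℝ)
    (P : Measure Ω) (Z : ℕ → Ω → E × E) (ξ : ℕ → Ω → E) : Prop where
  measurable_zero : Measurable (Z 0)
  measurable_noise : ∀ n, Measurable (ξ n)
  map_noise : ∀ n, P.map (ξ n) = stdGaussian E
  indep : iIndep (fun i : Option ℕ ↦ i.elim (MeasurableSpace.comap (Z 0) inferInstance)
    fun n ↦ MeasurableSpace.comap (ξ n) inferInstance) P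
  step_eq : ∀ n ω, Z (n + 1) ω = step F γ h (Z n ω) (ξ n ω)

namespace IsEulerMaruyamaChain

variable {Ω : Type*} [MeasurableSpace Ω] {P : Measure Ω} {Z : ℕ → Ω → E × E} {ξ : ℕ → Ω → E}

lemma isProbabilityMeasure (hZ : IsEulerMaruyamaChain F γ h P Z ξ) : IsProbabilityMeasure P := by
  have : IsProbabilityMeasure (P.map (ξ 0)) := by
    rw [hZ.map_noise]
    infer_instance
  exact Measure.isProbabilityMeasure_of_map (ξ 0)

lemma measurable (hZ : IsEulerMaruyamaChain F γ h P Z ξ) (hF : DissipativeField F L m B) (n : ℕ) :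
    Measurable (Z n) :=
  measurable_recursion (Ψ := step F γ h) (ℱ := fun _ ↦ inferInstance) monotone_const
    hZ.measurable_zero hZ.measurable_noise (measurable_uncurry_step hF) hZ.step_eq n

lemma lintegral_ofReal_comp (hZ : IsEulerMaruyamaChain F γ h P Z ξ)
    (hF : DissipativeField F L m B) (hγ : 0 < γ) (hh : 0 < h) (hh₁ : h ≤ 1) (n : ℕ)
    {g : E × E → ℝ} (hg : QuadGrowth g) (hg₀ : ∀ z, 0 ≤ g z) :
    ∫⁻ ω, ENNReal.ofReal (g (Z n ω)) ∂P
      = ∫⁻ ω, ENNReal.ofReal ((transition F γ h)^[n] g (Z 0 ω)) ∂P := by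
  have := hZ.isProbabilityMeasure
  induction n generalizing g with
  | zero => rfl
  | succ n ih =>
    rw [Function.iterate_succ_apply, ← ih (quadGrowth_transition hF hγ hh hh₁ hg)
      fun z ↦ integral_nonneg fun ξ ↦ hg₀ _]
    have indep_n := indepFun_recursion (Ψ := step F γ h) hZ.measurable_zero.comap_le
      hZ.measurable_noise hZ.indep (comap_measurable (Z 0)) (measurable_uncurry_step hF)
      hZ.step_eq n
    calc ∫⁻ ω, ENNReal.ofReal (g (Z (n + 1) ω)) ∂P
        = ∫⁻ ω, ∫⁻ x, ENNReal.ofReal (g (step F γ h (Z n ω) x)) ∂P.map (ξ n) ∂P := by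
          simp only [hZ.step_eq]
          exact lintegral_comp_of_indepFun (hZ.measurable hF n) (hZ.measurable_noise n) indep_n
            (g := fun z x ↦ ENNReal.ofReal (g (step F γ h z x)))
            (hg.1.comp (measurable_uncurry_step hF)).ennreal_ofReal
      _ = ∫⁻ ω, ENNReal.ofReal (transition F γ h g (Z n ω)) ∂P := by
          refine lintegral_congr fun ω ↦ ?_
          rw [hZ.map_noise, transition, ofReal_integral_eq_lintegral_ofReal
            (hg.integrable_step hF hγ hh hh₁ _) (.of_forall fun x ↦ hg₀ _)]

lemma eLpNorm_one_add_norm_le (hZ : IsEulerMaruyamaChain F γ h P Z ξ)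
    (hF : DissipativeField F L m B) (hγ : 0 < γ) (hh : 0 < h) (hh₁ : h ≤ 1) {K : ℝ} (hK : 0 ≤ K)
    (norm_sq_le : ∀ (n : ℕ) z, (transition F γ h)^[n] (fun y ↦ ‖y‖ ^ 2) z ≤ K * (1 + ‖z‖ ^ 2))
    (n : ℕ) :
    eLpNorm (fun ω ↦ 1 + ‖Z n ω‖) 2 P
      ≤ ENNReal.ofReal (1 + √K) * eLpNorm (fun ω ↦ 1 + ‖Z 0 ω‖) 2 P := by
  have norm_le : eLpNorm (fun ω ↦ ‖Z n ω‖) 2 P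
      ≤ ENNReal.ofReal √K * eLpNorm (fun ω ↦ 1 + ‖Z 0 ω‖) 2 P := by
    rw [← lintegral_ofReal_sq_le_iff (Real.sqrt_nonneg K), Real.sq_sqrt hK,
      hZ.lintegral_ofReal_comp hF hγ hh hh₁ n quadGrowth_norm_sq fun z ↦ sq_nonneg _,
      ← lintegral_const_mul' _ _ ENNReal.ofReal_ne_top]
    refine lintegral_mono fun ω ↦ ?_
    rw [← ENNReal.ofReal_mul hK]
    gcongr
    refine (norm_sq_le n _).trans ?_
    gcongr
    nlinarith [norm_nonneg (Z 0 ω)]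
  have one_le : eLpNorm (fun _ ↦ (1 : ℝ)) 2 P ≤ eLpNorm (fun ω ↦ 1 + ‖Z 0 ω‖) 2 P :=
    eLpNorm_mono_real fun ω ↦ by simp
  exact eLpNorm_add_le_ofReal_mul one_le_two measurable_const (hZ.measurable hF n).norm
    zero_le_one (Real.sqrt_nonneg K)
    (by rwa [ENNReal.ofReal_one, one_mul]) norm_le

lemma eLpNorm_sum_increment_le (hZ : IsEulerMaruyamaChain F γ h P Z ξ)
    (hF : DissipativeField F L m B) (hψ : Measurable ψ) (hPψ : Measurable (transition F γ h ψ))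
    {σ : ℝ} (hσ : 0 ≤ σ)
    (variance_le : ∀ z, MemLp (fun ξ ↦ ψ (step F γ h z ξ)) 2 (stdGaussian E) ∧
      Var[fun ξ ↦ ψ (step F γ h z ξ); stdGaussian E] ≤ (σ * (1 + ‖z‖)) ^ 2) {A : ℝ≥0∞}
    (moment : ∀ n, eLpNorm (fun ω ↦ 1 + ‖Z n ω‖) 2 P ≤ A) (n : ℕ) :
    eLpNorm (fun ω ↦ ∑ i ∈ Finset.range n, (ψ (Z (i + 1) ω) - transition F γ h ψ (Z i ω))) 2 P
      ≤ ENNReal.ofReal (√n * σ) * A := by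
  have := hZ.isProbabilityMeasure
  have measurable_step := measurable_uncurry_step (γ := γ) (h := h) hF
  simp only [hZ.step_eq]
  rw [ENNReal.ofReal_mul (by positivity), mul_assoc]
  refine eLpNorm_sum_le_of_recursion (Ψ := step F γ h) hZ.measurable_zero.comap_le
    hZ.measurable_noise hZ.indep (comap_measurable (Z 0)) measurable_step hZ.step_eq
    (D := fun z x ↦ ψ (step F γ h z x) - transition F γ h ψ z) (v := fun z ↦ σ * (1 + ‖z‖))
    ((hψ.comp measurable_step).sub (hPψ.comp measurable_fst)) (fun n s z ↦ ?_) (fun n ↦ ?_) n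
  · rw [hZ.map_noise, transition, lintegral_ofReal_sq_add_sub_integral (variance_le z).1]
    gcongr
    exact (variance_le z).2
  · rw [eLpNorm_const_mul_of_nonneg hσ]
    gcongr
    exact moment n

end IsEulerMaruyamaChain

end Chain

/-! ### The mean-square error of time averages -/

section Average

variable {Ω S : Type*} [MeasurableSpace Ω] {P : Measure Ω} [SeminormedAddCommGroup S]

lemma eLpNorm_comp_le_of_abs_le {g : S → ℝ} {c : ℝ} (hg : ∀ z, |g z| ≤ c * (1 + ‖z‖))
    {Z : Ω → S} {A : ℝ≥0∞} (hZ : eLpNorm (fun ω ↦ 1 + ‖Z ω‖) 2 P ≤ A) :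
    eLpNorm (fun ω ↦ g (Z ω)) 2 P ≤ ENNReal.ofReal c * A := by
  refine (eLpNorm_le_mul_eLpNorm_of_ae_le_mul (.of_forall fun ω ↦ ?_) 2).trans (by gcongr)
  rw [Real.norm_of_nonneg (by positivity : 0 ≤ 1 + ‖Z ω‖)]
  exact hg (Z ω)

lemma eLpNorm_average_le [MeasurableSpace S] {g : S → ℝ} (hg_meas : Measurable g) {c : ℝ}
    (hg : ∀ z, |g z| ≤ c * (1 + ‖z‖)) {Z : ℕ → Ω → S} (hZ_meas : ∀ n, Measurable (Z n))
    {A : ℝ≥0∞} (hZ : ∀ n, eLpNorm (fun ω ↦ 1 + ‖Z n ω‖) 2 P ≤ A) {N : ℕ} (hN : N ≠ 0) :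
    eLpNorm (fun ω ↦ (N : ℝ)⁻¹ * ∑ n ∈ Finset.range N, g (Z n ω)) 2 P
      ≤ ENNReal.ofReal c * A := by
  calc eLpNorm (fun ω ↦ (N : ℝ)⁻¹ * ∑ n ∈ Finset.range N, g (Z n ω)) 2 P
      = ‖(N : ℝ)⁻¹‖ₑ * eLpNorm (∑ n ∈ Finset.range N, fun ω ↦ g (Z n ω)) 2 P := by
        rw [← eLpNorm_const_smul]
        simp only [Pi.smul_def, Finset.sum_apply, smul_eq_mul]
    _ ≤ ‖(N : ℝ)⁻¹‖ₑ * ∑ _n ∈ Finset.range N, ENNReal.ofReal c * A := by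
        gcongr
        refine (eLpNorm_sum_le (fun n _ ↦ (hg_meas.comp (hZ_meas n)).aestronglyMeasurable)
          one_le_two).trans ?_
        gcongr with n
        exact eLpNorm_comp_le_of_abs_le hg (hZ n)
    _ = ENNReal.ofReal c * A := by
        rw [Finset.sum_const, Finset.card_range, nsmul_eq_mul, ← mul_assoc,
          enorm_inv (by positivity), Real.enorm_natCast, ENNReal.inv_mul_cancel (by positivity)
          (ENNReal.natCast_ne_top N), one_mul]

lemma eLpNorm_average_sub_le_of_lipschitz [MeasurableSpace S] {f : S → ℝ} {l : ℝ}
    (hf : Measurable f) (hl : 0 ≤ l) (lipschitz : ∀ z z', |f z - f z'| ≤ l * ‖z - z'‖)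
    {Z : ℕ → Ω → S} (hZ_meas : ∀ n, Measurable (Z n)) {A : ℝ≥0∞}
    (hZ : ∀ n, eLpNorm (fun ω ↦ 1 + ‖Z n ω‖) 2 P ≤ A) {N : ℕ} (hN : N ≠ 0) (p : ℝ) :
    eLpNorm (fun ω ↦ (N : ℝ)⁻¹ * ∑ n ∈ Finset.range N, f (Z n ω) - p) 2 P
      ≤ ENNReal.ofReal (l + |f 0 - p|) * A := by
  have growth (z : S) : |f z - p| ≤ (l + |f 0 - p|) * (1 + ‖z‖) := by
    have := lipschitz z 0
    rw [sub_zero] at this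
    nlinarith [abs_sub_le (f z) (f 0) p, norm_nonneg z, abs_nonneg (f 0 - p)]
  have average_eq (ω : Ω) : (N : ℝ)⁻¹ * ∑ n ∈ Finset.range N, f (Z n ω) - p
      = (N : ℝ)⁻¹ * ∑ n ∈ Finset.range N, (f (Z n ω) - p) := by
    rw [Finset.sum_sub_distrib, Finset.sum_const, Finset.card_range, nsmul_eq_mul, mul_sub,
      inv_mul_cancel_left₀ (by positivity)]
  simp only [average_eq]
  exact eLpNorm_average_le (hf.sub_const p) growth hZ_meas hZ hN

end Average

lemma IsPoissonSolution.average_sub_eq {S : Type*} [NormedAddCommGroup S] [MeasurableSpace S]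
    {T : (S → ℝ) → S → ℝ} {f ψ e : S → ℝ} {h C : ℝ} (hψ : IsPoissonSolution T f h C ψ e)
    (hh : h ≠ 0) {N : ℕ} (hN : N ≠ 0) (z : ℕ → S) (p : ℝ) :
    (N : ℝ)⁻¹ * ∑ n ∈ Finset.range N, f (z n) - p
      = 1 / (N * h) * (ψ (z 0) - ψ (z N))
        + 1 / (N * h) * ∑ n ∈ Finset.range N, (ψ (z (n + 1)) - T ψ (z n))
        + (N : ℝ)⁻¹ * ∑ n ∈ Finset.range N, (e (z n) - e 0) + (e 0 - p) := by
  have poisson (n : ℕ) :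
      ψ (z (n + 1)) - T ψ (z n) = ψ (z (n + 1)) - ψ (z n) + h * (f (z n) - e (z n)) := by
    linarith [hψ.sub_apply (z n)]
  simp only [poisson]
  rw [Finset.sum_add_distrib, Finset.sum_range_sub fun n ↦ ψ (z n), ← Finset.mul_sum,
    Finset.sum_sub_distrib, Finset.sum_sub_distrib, Finset.sum_const, Finset.card_range,
    nsmul_eq_mul]
  field_simp
  ring

lemma IsPoissonSolution.eLpNorm_comp_sub_comp_le {S : Type*} [NormedAddCommGroup S]
    [MeasurableSpace S] {T : (S → ℝ) → S → ℝ} {f ψ e : S → ℝ} {h C : ℝ}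
    (hψ : IsPoissonSolution T f h C ψ e) (hC : 0 ≤ C) {Ω : Type*} [MeasurableSpace Ω]
    {P : Measure Ω} {Y Z : Ω → S} (hY_meas : Measurable Y)
    (hZ_meas : Measurable Z) {A : ℝ≥0∞} (hY : eLpNorm (fun ω ↦ 1 + ‖Y ω‖) 2 P ≤ A)
    (hZ : eLpNorm (fun ω ↦ 1 + ‖Z ω‖) 2 P ≤ A) :
    eLpNorm (fun ω ↦ ψ (Y ω) - ψ (Z ω)) 2 P ≤ ENNReal.ofReal (2 * C) * A := by
  have hψ_meas := hψ.quadGrowth.1.sub_const (ψ 0)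
  have abs_sub_zero_le (z : S) : |ψ z - ψ 0| ≤ C * (1 + ‖z‖) := by
    refine (hψ.abs_sub_le z 0).trans ?_
    rw [norm_zero, add_zero]
    exact mul_le_of_le_one_right (by positivity) (min_le_left _ _)
  calc eLpNorm (fun ω ↦ ψ (Y ω) - ψ (Z ω)) 2 P
      = eLpNorm ((fun ω ↦ ψ (Y ω) - ψ 0) - fun ω ↦ ψ (Z ω) - ψ 0) 2 P := by
        simp only [Pi.sub_def, sub_sub_sub_cancel_right]
    _ ≤ ENNReal.ofReal C * A + ENNReal.ofReal C * A :=
        (eLpNorm_sub_le (hψ_meas.comp hY_meas).aestronglyMeasurable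
          (hψ_meas.comp hZ_meas).aestronglyMeasurable one_le_two).trans
          (add_le_add (eLpNorm_comp_le_of_abs_le abs_sub_zero_le hY)
            (eLpNorm_comp_le_of_abs_le abs_sub_zero_le hZ))
    _ = ENNReal.ofReal (2 * C) * A := by
        rw [two_mul, ENNReal.ofReal_add hC hC, add_mul]

section Error

variable {E : Type*} [NormedAddCommGroup E] [InnerProductSpace ℝ E] [FiniteDimensional ℝ E]
  [MeasurableSpace E] [BorelSpace E] {F : E → E} {L m B γ h : ℝ} {f ψ e : E × E → ℝ}
  {Ω : Type*} [MeasurableSpace Ω] {P : Measure Ω} {Z : ℕ → Ω → E × E} {ξ : ℕ → Ω → E}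

lemma IsEulerMaruyamaChain.eLpNorm_average_sub_le_of_isPoissonSolution
    (hZ : IsEulerMaruyamaChain F γ h P Z ξ) (hF : DissipativeField F L m B) (hγ : 0 < γ)
    (hh : 0 < h) (hh₁ : h ≤ 1) {C : ℝ} (hC : 0 ≤ C)
    (hψ : IsPoissonSolution (transition F γ h) f h C ψ e) {K K' p : ℝ} (hK : 0 ≤ K) (hK' : 0 ≤ K')
    (variance_le : ∀ z, MemLp (fun ξ ↦ ψ (step F γ h z ξ)) 2 (stdGaussian E) ∧
      Var[fun ξ ↦ ψ (step F γ h z ξ); stdGaussian E] ≤ (C * K * √h * (1 + ‖z‖)) ^ 2)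
    (bias_le : |p - e 0| ≤ C * K' * √h) {A : ℝ≥0∞}
    (moment : ∀ n, eLpNorm (fun ω ↦ 1 + ‖Z n ω‖) 2 P ≤ A) {N : ℕ} (hN : N ≠ 0) :
    eLpNorm (fun ω ↦ (N : ℝ)⁻¹ * ∑ n ∈ Finset.range N, f (Z n ω) - p) 2 P
      ≤ ENNReal.ofReal (C * (2 * (1 / (N * h)) + K * √(1 / (N * h)) + h + K' * √h)) * A := by
  have hPψ := (quadGrowth_transition hF hγ hh hh₁ hψ.quadGrowth).1
  have hψ_meas := hψ.quadGrowth.1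
  have he_meas := hψ.quadGrowth_error.1
  have hZ_meas := hZ.measurable hF
  have boundary := hψ.eLpNorm_comp_sub_comp_le hC (hZ_meas 0) (hZ_meas N) (moment 0) (moment N)
  have martingale := hZ.eLpNorm_sum_increment_le hF hψ_meas hPψ
    (by positivity : 0 ≤ C * K * √h) variance_le moment N
  have oscillation := eLpNorm_average_le (P := P) (he_meas.sub_const (e 0)) (c := C * h)
    (fun z ↦ by simpa using hψ.abs_error_sub_le z 0) hZ_meas moment hN
  have bias := eLpNorm_comp_le_of_abs_le (g := fun _ ↦ e 0 - p) (c := C * K' * √h)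
    (fun z ↦ by
      rw [abs_sub_comm]
      exact bias_le.trans (le_mul_of_one_le_right (by positivity) (by simp))) (moment 0)
  have ht : 0 ≤ 1 / (N * h) := by positivity
  simp only [hψ.average_sub_eq hh.ne' hN (fun n ↦ Z n _) p]
  have sqrt_div : √N * √h / (N * h) = √(1 / (N * h)) := by
    rw [← Real.sqrt_mul (by positivity), Real.sqrt_div_self', one_div, one_div, Real.sqrt_inv]
  calc _ ≤ ENNReal.ofReal (1 / (N * h) * (2 * C) + 1 / (N * h) * (√N * (C * K * √h))
          + C * h + C * K' * √h) * A := by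
        refine eLpNorm_add_le_ofReal_mul one_le_two (by fun_prop) (by fun_prop) (by positivity)
          (by positivity) (eLpNorm_add_le_ofReal_mul one_le_two (by fun_prop) (by fun_prop)
            (by positivity) (by positivity) (eLpNorm_add_le_ofReal_mul one_le_two (by fun_prop)
              (by fun_prop) (by positivity) (by positivity) ?_ ?_) oscillation) bias
        · rw [eLpNorm_const_mul_of_nonneg ht, ENNReal.ofReal_mul ht, mul_assoc]
          gcongr
        · rw [eLpNorm_const_mul_of_nonneg ht, ENNReal.ofReal_mul ht, mul_assoc]
          gcongr
    _ = ENNReal.ofReal (C * (2 * (1 / (N * h)) + K * (√N * √h / (N * h)) + h + K' * √h)) * A := by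
        ring_nf
    _ = _ := by rw [sqrt_div]

lemma sqrt_error_le {K K' t h : ℝ} (hK : 0 ≤ K) (hK' : 0 ≤ K') (ht : 0 ≤ t) (ht₁ : t ≤ 1)
    (hh : 0 ≤ h) (hh₁ : h ≤ 1) :
    2 * t + K * √t + h + K' * √h ≤ (3 + K + K') * √(h + t) := by
  have le_sqrt {x : ℝ} (hx : 0 ≤ x) (hx₁ : x ≤ 1) : x ≤ √x :=
    Real.le_sqrt_of_sq_le (pow_le_of_le_one hx hx₁ two_ne_zero)
  have sqrt_t : √t ≤ √(h + t) := by gcongr; linarith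
  have sqrt_h : √h ≤ √(h + t) := by gcongr; linarith
  have : K * √t ≤ K * √(h + t) := by gcongr
  have : K' * √h ≤ K' * √(h + t) := by gcongr
  linarith [le_sqrt ht ht₁, le_sqrt hh hh₁]

lemma exists_eLpNorm_average_sub_le {U : E → ℝ} (hF : DissipativeField F L m B)
    (hU : ConfiningPotential U F L m B) (hγ : 0 < γ) (hLγ : 4 * L ≤ γ) (hLm : 4 * L ≤ γ * m)
    {l : ℝ} (hl : 0 < l) (lipschitz : ∀ z z', |f z - f z'| ≤ l * ‖z - z'‖) :
    ∃ D > 0, ∃ h₀ > 0, ∀ h : ℝ, 0 < h → h ≤ h₀ →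
      ∀ (Ω : Type*) (_ : MeasurableSpace Ω) (P : Measure Ω) (Z : ℕ → Ω → E × E) (ξ : ℕ → Ω → E),
      IsEulerMaruyamaChain F γ h P Z ξ → ∀ N : ℕ, N ≠ 0 →
      eLpNorm (fun ω ↦ (N : ℝ)⁻¹ * ∑ n ∈ Finset.range N, f (Z n ω) - ∫ z, f z ∂boltzmann U) 2 P
        ≤ ENNReal.ofReal (D * √(h + 1 / (N * h))) * eLpNorm (fun ω ↦ 1 + ‖Z 0 ω‖) 2 P := by
  have hf := QuadGrowth.of_lipschitz hl.le lipschitz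
  obtain ⟨C, hC, h₁, hh₁, h₁_le, poisson⟩ := exists_isPoissonSolution hF hγ hLγ hLm hl lipschitz
  obtain ⟨K₁, hK₁, variance⟩ := exists_variance_comp_step_le (E := E) hF hγ
  obtain ⟨K₂, hK₂, h₂, hh₂, bias⟩ := exists_abs_integral_boltzmann_sub_le hF hU hγ
  obtain ⟨K₃, hK₃, h₃, hh₃, -, moment⟩ := exists_iterate_transition_norm_sq_le hF hγ hLγ hLm
  set p := ∫ z, f z ∂boltzmann U
  set c := l + |f 0 - p|
  refine ⟨(C * (3 + K₁ + K₂) + c) * (1 + √K₃), by positivity, min h₁ (min h₂ h₃),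
    by positivity, fun h hh hle Ω _ P Z ξ hZ N hN ↦ ?_⟩
  obtain ⟨hle₁, hle₂, hle₃⟩ : h ≤ h₁ ∧ h ≤ h₂ ∧ h ≤ h₃ := by simpa using hle
  have h_le_one : h ≤ 1 := by linarith
  have moment_chain := hZ.eLpNorm_one_add_norm_le hF hγ hh h_le_one hK₃.le (moment h hh hle₃)
  set r := √(h + 1 / (N * h))
  rw [mul_right_comm, ENNReal.ofReal_mul (by positivity), mul_assoc]
  rcases le_total (1 / (N * h)) 1 with long | short
  · obtain ⟨ψ, e, hψ⟩ := poisson h hh hle₁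
    refine (hZ.eLpNorm_average_sub_le_of_isPoissonSolution hF hγ hh h_le_one hC.le hψ hK₁.le
      hK₂.le (variance h hh h_le_one ψ C hψ.quadGrowth.1 hC.le fun z z' ↦
        (hψ.abs_sub_le z z').trans (by gcongr; exact min_le_right _ _))
      (bias h hh hle₂ f C ψ e hf hC.le hψ) moment_chain hN).trans ?_
    gcongr ENNReal.ofReal ?_ * _
    have := mul_le_mul_of_nonneg_left
      (sqrt_error_le hK₁.le hK₂.le (by positivity) long hh.le h_le_one) hC.le
    linarith [(by positivity : 0 ≤ c * r)]
  · refine (eLpNorm_average_sub_le_of_lipschitz hf.1 hl.le lipschitz (hZ.measurable hF)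
      moment_chain hN p).trans ?_
    gcongr ENNReal.ofReal ?_ * _
    have one_le : 1 ≤ r := Real.one_le_sqrt.2 (by linarith)
    calc c = (0 + c) * 1 := by ring
      _ ≤ (C * (3 + K₁ + K₂) + c) * r := by gcongr; positivity

lemma isEulerMaruyamaChain_of_map_eq_pi {d : ℕ}
    {F : EuclideanSpace ℝ (Fin d) → EuclideanSpace ℝ (Fin d)} {γ h : ℝ} {Ω : Type*}
    [MeasurableSpace Ω] {P : Measure Ω} {X V ξ : ℕ → Ω → EuclideanSpace ℝ (Fin d)}
    (hX₀ : Measurable (X 0)) (hV₀ : Measurable (V 0)) (hξ : ∀ n, Measurable (ξ n))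
    (map_noise : ∀ n, P.map (fun ω i ↦ ξ n ω i) = Measure.pi fun _ ↦ gaussianReal 0 1)
    (indep : iIndep (fun i : Option ℕ ↦
      i.elim (MeasurableSpace.comap (fun ω ↦ (X 0 ω, V 0 ω)) inferInstance)
        fun n ↦ MeasurableSpace.comap (ξ n) inferInstance) P)
    (hX : ∀ n ω, X (n + 1) ω = X n ω + h • V n ω)
    (hV : ∀ n ω, V (n + 1) ω = V n ω - h • F (X n ω) - (γ * h) • V n ω + √(2 * γ * h) • ξ n ω) :
    IsEulerMaruyamaChain F γ h P (fun n ω ↦ (X n ω, V n ω)) ξ where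
  measurable_zero := hX₀.prodMk hV₀
  measurable_noise := hξ
  map_noise n := by
    rw [← map_pi_eq_stdGaussian, ← map_noise n, Measure.map_map (by fun_prop)
      (measurable_pi_lambda _ fun i ↦ by have := hξ n; fun_prop)]
    rfl
  indep := indep
  step_eq n ω := by rw [step, hX, hV]

lemma integral_boltzmann (U : E → ℝ) (f : E × E → ℝ) :
    ∫ z, f z ∂boltzmann U = (∫ z : E × E, f z * Real.exp (-(‖z.2‖ ^ 2 / 2 + U z.1))) /
      ∫ z : E × E, Real.exp (-(‖z.2‖ ^ 2 / 2 + U z.1)) := by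
  rw [boltzmann, integral_tilted, ← integral_div]
  simp only [hamiltonian, smul_eq_mul, mul_comm, mul_div_assoc]

end Error

end Langevin

theorem statement12_general {E : Type*} [NormedAddCommGroup E] [InnerProductSpace ℝ E]
    [FiniteDimensional ℝ E] [MeasurableSpace E] [BorelSpace E] {U : E → ℝ} {f : E × E → ℝ}
    {C₁ m R l : ℝ} (hm : 0 < m) (hU : ContDiff ℝ 2 U)
    (hessian_le : ∀ x, ‖iteratedFDeriv ℝ 2 U x‖ ≤ C₁)
    (convex : ∀ x, R ≤ ‖x‖ → ∀ y, m * ‖y‖ ^ 2 ≤ iteratedFDeriv ℝ 2 U x ![y, y])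
    (lipschitz : ∀ z z', |f z - f z'| ≤ l * ‖z - z'‖) :
    ∃ γ₀ > 0, ∀ γ ≥ γ₀, ∃ C > 0, ∃ h₀ > 0, ∀ h : ℝ, 0 < h → h ≤ h₀ →
      ∀ (Ω : Type*) (_ : MeasurableSpace Ω) (P : Measure Ω) (Z : ℕ → Ω → E × E) (ξ : ℕ → Ω → E),
      Langevin.IsEulerMaruyamaChain (gradient U) γ h P Z ξ → ∀ N : ℕ, 1 ≤ N →
      ∫⁻ ω, ENNReal.ofReal (((N : ℝ)⁻¹ * ∑ n ∈ Finset.range N, f (Z n ω)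
          - ∫ z, f z ∂Langevin.boltzmann U) ^ 2) ∂P
        ≤ ENNReal.ofReal (C * (h + 1 / (N * h)))
          * ∫⁻ ω, ENNReal.ofReal ((‖(Z 0 ω).1‖ + ‖(Z 0 ω).2‖ + 1) ^ 2) ∂P := by
  obtain ⟨L, B, hF, hU'⟩ :=
    Langevin.exists_dissipativeField_confiningPotential hU hessian_le hm convex
  have hL := hF.L_pos
  refine ⟨4 * L + 4 * L / m, by positivity, fun γ hγ ↦ ?_⟩
  have hγ_pos : 0 < γ := lt_of_lt_of_le (by positivity) hγ
  have hLγ : 4 * L ≤ γ := (le_add_of_nonneg_right (by positivity)).trans hγ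
  have hLm : 4 * L ≤ γ * m := (div_le_iff₀ hm).1 ((le_add_of_nonneg_left (by positivity)).trans hγ)
  obtain ⟨D, hD, h₀, hh₀, error⟩ := Langevin.exists_eLpNorm_average_sub_le hF hU' hγ_pos hLγ hLm
    (l := |l| + 1) (by positivity) fun z z' ↦ (lipschitz z z').trans
      (by gcongr; linarith [le_abs_self l])
  refine ⟨D ^ 2, by positivity, h₀, hh₀, fun h hh hle Ω _ P Z ξ hZ N hN ↦ ?_⟩
  rw [← Real.sq_sqrt (by positivity : 0 ≤ h + 1 / (N * h)), ← mul_pow,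
    Langevin.lintegral_ofReal_sq_le_iff (by positivity)]
  refine (error h hh hle Ω _ P Z ξ hZ N (by positivity)).trans ?_
  gcongr
  refine eLpNorm_mono_real fun ω ↦ ?_
  rw [Real.norm_of_nonneg (by positivity), add_comm]
  gcongr
  exact Prod.norm_def (Z 0 ω) ▸ max_le_add_of_nonneg (norm_nonneg _) (norm_nonneg _)

/-- statistical error of the Euler–Maruyama integrator (strong order
`p = 1, q = 1`) for the underdamped Langevin dynamics, under A1, A2, A3:
`E[e²(N,h)] ≤ C(h + 1/(Nh))·E(|X₀|+|V₀|+1)²`, where `π` is the Boltzmann measure with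
density proportional to `exp(−|v|²/2 − U(x))`. -/
theorem statement12 (d : ℕ) (hd : 1 ≤ d) (U : EuclideanSpace ℝ (Fin d) → ℝ)
    (f : EuclideanSpace ℝ (Fin d) × EuclideanSpace ℝ (Fin d) → ℝ)
    (C₁ m R C₂ : ℝ) (hC₁ : 0 < C₁) (hm : 0 < m) (hR : 0 < R) (hC₂ : 0 < C₂)
    -- A1
    (hU : ContDiff ℝ 3 U)
    (hU0 : ∀ x, |U x| ≤ C₁ * (‖x‖ + 1) ^ 2)
    (hU1 : ∀ x, ‖gradient U x‖ ≤ C₁ * (‖x‖ + 1))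
    (hU2 : ∀ x, ‖iteratedFDeriv ℝ 2 U x‖ ≤ C₁)
    (hU3 : ∀ x, ‖iteratedFDeriv ℝ 3 U x‖ ≤ C₁)
    -- A2
    (hconv : ∀ x, R ≤ ‖x‖ → ∀ y, m * ‖y‖ ^ 2 ≤ iteratedFDeriv ℝ 2 U x ![y, y])
    -- A3
    (hf : ContDiff ℝ 3 f)
    (hf1 : ∀ z, ‖iteratedFDeriv ℝ 1 f z‖ ≤ C₂)
    (hf2 : ∀ z, ‖iteratedFDeriv ℝ 2 f z‖ ≤ C₂)
    (hf3 : ∀ z, ‖iteratedFDeriv ℝ 3 f z‖ ≤ C₂)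
    -- the ensemble average π(f) of f under the Boltzmann distribution
    (πf : ℝ)
    (hπf : πf = (∫ z : EuclideanSpace ℝ (Fin d) × EuclideanSpace ℝ (Fin d),
          f z * Real.exp (-(‖z.2‖ ^ 2 / 2 + U z.1))) /
        (∫ z : EuclideanSpace ℝ (Fin d) × EuclideanSpace ℝ (Fin d),
          Real.exp (-(‖z.2‖ ^ 2 / 2 + U z.1)))) :
    ∃ γ₀ > (0 : ℝ), ∀ γ ≥ γ₀, ∃ C > (0 : ℝ), ∃ h₀ > (0 : ℝ), ∀ h : ℝ, 0 < h → h ≤ h₀ →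
      ∀ (Ω : Type) (_ : MeasurableSpace Ω) (P : Measure Ω), IsProbabilityMeasure P →
      ∀ X V ξ : ℕ → Ω → EuclideanSpace ℝ (Fin d),
        Measurable (X 0) → Measurable (V 0) →
        (∀ n, Measurable (ξ n)) →
        -- each ξ_n is a standard Gaussian random vector in ℝ^d
        (∀ n, Measure.map (fun ω i => ξ n ω i) P =
          Measure.pi fun _ : Fin d => gaussianReal 0 1) →
        -- (X₀,V₀), ξ₀, ξ₁, … are mutually independent
        iIndep (fun i : Option ℕ =>
          Option.elim i (MeasurableSpace.comap (fun ω => (X 0 ω, V 0 ω)) inferInstance)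
            fun n => MeasurableSpace.comap (ξ n) inferInstance) P →
        -- Euler–Maruyama recursion
        (∀ n ω, X (n + 1) ω = X n ω + h • V n ω) →
        (∀ n ω, V (n + 1) ω = V n ω - h • gradient U (X n ω) - (γ * h) • V n ω
            + Real.sqrt (2 * γ * h) • ξ n ω) →
        -- finite initial second moment
        (∫⁻ ω, ENNReal.ofReal ((‖X 0 ω‖ + ‖V 0 ω‖ + 1) ^ 2) ∂P) < ∞ →
        ∀ N : ℕ, 1 ≤ N →
          (∫⁻ ω, ENNReal.ofReal
              ((((N : ℝ))⁻¹ * (∑ n ∈ Finset.range N, f (X n ω, V n ω)) - πf) ^ 2) ∂P) ≤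
            ENNReal.ofReal (C * (h + 1 / (N * h))) *
              ∫⁻ ω, ENNReal.ofReal ((‖X 0 ω‖ + ‖V 0 ω‖ + 1) ^ 2) ∂P := by
  have lipschitz : ∀ z z', |f z - f z'| ≤ C₂ * ‖z - z'‖ := fun z z' ↦
    convex_univ.norm_image_sub_le_of_norm_fderiv_le
      (fun w _ ↦ hf.differentiable three_ne_zero w)
      (fun w _ ↦ (norm_iteratedFDeriv_one f).symm.trans_le (hf1 w)) trivial trivial
  obtain ⟨γ₀, hγ₀, H⟩ := statement12_general hm (hU.of_le (by norm_num)) hU2 hconv lipschitz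
  refine ⟨γ₀, hγ₀, fun γ hγ ↦ ?_⟩
  obtain ⟨C, hC, h₀, hh₀, error⟩ := H γ hγ
  rw [hπf, ← Langevin.integral_boltzmann]
  exact ⟨C, hC, h₀, hh₀, fun h hh hle Ω _ P _ X V ξ hX₀ hV₀ hξ map_ξ indep hX hV _ ↦
    error h hh hle Ω _ P _ ξ
      (Langevin.isEulerMaruyamaChain_of_map_eq_pi hX₀ hV₀ hξ map_ξ indep hX hV)⟩
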